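/- For any permutation w, the Schubert polynomial satisfies 𝔖_w = Σ_{ρ ∈ YR(w)} κ_{des(ρ)}, where YR(w) is the set of Yamanouchi reduced words for w. -/

import Mathlib

open List

namespace EG

/-! ## Words, permutations, and reduced words.

A word is a list of positive natural numbers `(ρ_ℓ, …, ρ_1)`, read left to right,
representing the product of simple transpositions `s_{ρ_ℓ} ⋯ s_{ρ_1}`. -/

/-- The permutation of `ℕ` represented by a word. -/
def toPerm (ρ : List ℕ) : Equiv.Perm ℕ :=
  (ρ.map fun i => Equiv.swap i (i + 1)).prod

/-- `ρ` is a reduced word: its letters are positive, and no shorter word represents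
the same permutation. -/
def IsReducedWord (ρ : List ℕ) : Prop :=
  (∀ i ∈ ρ, 1 ≤ i) ∧
    ∀ σ : List ℕ, (∀ i ∈ σ, 1 ≤ i) → toPerm σ = toPerm ρ → ρ.length ≤ σ.length

/-- `ρ` is a reduced word for the permutation `w`. -/
def ReducedWordFor (ρ : List ℕ) (w : Equiv.Perm ℕ) : Prop :=
  IsReducedWord ρ ∧ toPerm ρ = w

/-! ## Elementary Coxeter–Knuth relations. -/

/-- The elementary Coxeter–Knuth move on a consecutive triple
`(a, b, c) = (ρ_{i+1}, ρ_i, ρ_{i−1})`. -/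
def ckTriple (a b c : ℕ) : ℕ × ℕ × ℕ :=
  if a = c then (b, a, b)
  else if (c > a ∧ a > b) ∨ (c < a ∧ a < b) then (a, c, b)
  else if (a > c ∧ c > b) ∨ (a < c ∧ c < b) then (b, a, c)
  else (a, b, c)

/-- The elementary Coxeter–Knuth relation `𝔡_i`, acting on the letters
`ρ_{i+1} ρ_i ρ_{i−1}` of a word `ρ = (ρ_ℓ, …, ρ_1)` (indexed from the right). -/
def ckMove (i : ℕ) (ρ : List ℕ) : List ℕ :=
  if 2 ≤ i ∧ i + 1 ≤ ρ.length then
    let p := ρ.length - i - 1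
    let t := ckTriple (ρ.getD p 0) (ρ.getD (p + 1) 0) (ρ.getD (p + 2) 0)
    ((ρ.set p t.1).set (p + 1) t.2.1).set (p + 2) t.2.2
  else ρ

/-- Two words are Coxeter–Knuth equivalent if one is obtained from the other by a
finite sequence of elementary Coxeter–Knuth relations. -/
def CKEquiv (ρ σ : List ℕ) : Prop :=
  ∃ ms : List ℕ, σ = ms.foldl (fun w i => ckMove i w) ρ

/-! ## Run decompositions and descent tableaux. -/

/-- Split a list into maximal blocks, breaking between consecutive letters `a`, `b`
whenever `brk a b` holds. -/
def splitWhen (brk : ℕ → ℕ → Bool) : List ℕ → List (List ℕ)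
  | [] => []
  | [a] => [[a]]
  | a :: b :: rest =>
    match splitWhen brk (b :: rest) with
    | r :: rs => if brk a b then [a] :: r :: rs else (a :: r) :: rs
    | [] => [[a]]

/-- The run decomposition of a word into maximal strictly increasing runs, listed
left to right (so the list is `[ρ⁽ᵏ⁾, …, ρ⁽¹⁾]`, with `ρ⁽¹⁾` the final run). -/
def runs (ρ : List ℕ) : List (List ℕ) := splitWhen (fun a b => decide (b ≤ a)) ρ

/-- The rows of the descent tableau `𝔻(ρ)`, listed bottom to top:
`[ρ⁽¹⁾, …, ρ⁽ᵏ⁾]`. -/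
def rowsOf (ρ : List ℕ) : List (List ℕ) := (runs ρ).reverse

/-- The row reading word of a tableau whose rows are listed bottom to top:
read rows left to right, starting with the top row. -/
def wordOf (R : List (List ℕ)) : List ℕ := R.reverse.flatten

/-- The descent composition `Des(ρ) = (|ρ⁽¹⁾|, …, |ρ⁽ᵏ⁾|)`. -/
def DesComp (ρ : List ℕ) : List ℕ := (rowsOf ρ).map List.length

/-- A list of rows (bottom to top) is an increasing Young tableau of partition shape:
rows strictly increase left to right, shape is a partition, and columns strictly
increase bottom to top. -/
def IsIncreasingYoungRows (R : List (List ℕ)) : Prop :=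
  (∀ r ∈ R, r.Chain' (· < ·)) ∧
    R.Chain' (fun lo hi => hi.length ≤ lo.length ∧
      ∀ j < hi.length, lo.getD j 0 < hi.getD j 0)

/-! ## The drop map on a pair of increasing rows. -/

/-- Increment the first `n` letters of a list by `1`. -/
def incFirst : ℕ → List ℕ → List ℕ
  | 0, l => l
  | _ + 1, [] => []
  | n + 1, a :: l => (a + 1) :: incFirst n l

/-- Decrement the first `n` letters of a list by `1`. -/
def decFirst : ℕ → List ℕ → List ℕ
  | 0, l => l
  | _ + 1, [] => []
  | n + 1, a :: l => (a - 1) :: decFirst n l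

/-- `bCount t1 i [s_i, s_{i+1}, …]` is the largest `b` with `t1 = s_j + j` for all
`i ≤ j < i + b`. -/
def bCount (t1 : ℕ) : ℕ → List ℕ → ℕ
  | _, [] => 0
  | i, s :: rest => if t1 = s + i then bCount t1 (i + 1) rest + 1 else 0

/-- Index of the first failure `τ_j ≤ σ_j` in the drop alignment of `σ` below `τ`. -/
def failIdx (τ σ : List ℕ) : Option ℕ :=
  (τ.zip σ).findIdx? (fun p => decide (p.1 ≤ p.2))

/-- Fueled computation of the drop of the row `σ` below the row `τ`, returning the
new pair (top row, bottom row). -/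
def dropPairAux : ℕ → List ℕ → List ℕ → List ℕ × List ℕ
  | 0, τ, σ => (τ, σ)
  | fuel + 1, τ, σ =>
    match failIdx τ σ with
    | none =>
      if σ.length < τ.length then (τ.take σ.length, σ ++ τ.drop σ.length)
      else (τ, σ)
    | some j =>
      let x := τ.getD j 0
      let τr := τ.drop (j + 1)
      let σr := σ.drop j
      let res := dropPairAux fuel τr σr
      let l1 := (failIdx τr σr).getD τr.length
      let b := if l1 = 0 then 0
               else if x + 1 = τr.headD 0 then bCount (τr.headD 0) 1 (σr.take l1) else 0
      (τ.take j ++ res.1, σ.take j ++ x :: incFirst b res.2)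

/-- The drop of the row `σ` below the row `τ`: the pair (new top row, new bottom row). -/
def dropPair (τ σ : List ℕ) : List ℕ × List ℕ := dropPairAux (τ.length + 1) τ σ

/-- The word `drop(τσ)`. -/
def dropW (τ σ : List ℕ) : List ℕ := (dropPair τ σ).1 ++ (dropPair τ σ).2

/-- Apply `drop` to rows `i` and `i+1` (1-indexed from the bottom) of a list of rows. -/
def dropAt : ℕ → List (List ℕ) → List (List ℕ)
  | 1, σr :: τr :: rest => (dropPair τr σr).2 :: (dropPair τr σr).1 :: rest
  | n + 2, r :: R => r :: dropAt (n + 1) R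
  | _, R => R

/-- The map `drop_i` on words: replace the runs `ρ⁽ⁱ⁺¹⁾ ρ⁽ⁱ⁾` of the run
decomposition by `drop(ρ⁽ⁱ⁺¹⁾ ρ⁽ⁱ⁾)`. -/
def dropWordAt (i : ℕ) (ρ : List ℕ) : List ℕ := wordOf (dropAt i (rowsOf ρ))

/-- One sweep of all the maps `drop_i`. -/
def sweepDrop (ρ : List ℕ) : List ℕ :=
  (List.range (runs ρ).length).foldl (fun w i => dropWordAt (i + 1) w) ρ

/-- The drop `drop(ρ)` of a word: repeatedly apply the maps `drop_i` until reaching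
the fixed point (an increasing Young tableau). -/
def dropFull (ρ : List ℕ) : List ℕ := sweepDrop^[ρ.length * ρ.length + 1] ρ

/-! ## The lift map on a pair of increasing rows. -/

/-- `bCount2 x i τblk σblk` is the largest `b` with `τ_j = σ_j = x + j` for all
`i ≤ j < i + b`. -/
def bCount2 (x : ℕ) : ℕ → List ℕ → List ℕ → ℕ
  | i, t :: ts, s :: ss =>
      if t = x + i ∧ s = x + i then bCount2 x (i + 1) ts ss + 1 else 0
  | _, _, _ => 0

/-- Index of the first failure (from the right) in the lift alignment of `τ` above
`σ`: here both rows are given reversed. -/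
def liftFailIdx (τR σR : List ℕ) : Option ℕ :=
  (τR.zip σR).findIdx? (fun p => decide (p.1 < p.2))

/-- Fueled computation of the lift of the row `τ` above the row `σ`, on reversed
rows; returns the new (top row, bottom row), reversed. -/
def liftPairAuxR : ℕ → List ℕ → List ℕ → List ℕ × List ℕ
  | 0, τR, σR => (τR, σR)
  | fuel + 1, τR, σR =>
    match liftFailIdx τR σR with
    | none => (τR, σR)
    | some j =>
      let x := σR.getD j 0
      let τr := τR.drop j
      let σr := σR.drop (j + 1)
      let res := liftPairAuxR fuel τr σr
      let τblk := (τR.take j).reverse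
      let σblk := (σR.take j).reverse
      let b := if σblk.headD 0 = x + 1 then bCount2 x 1 τblk σblk else 0
      (τR.take j ++ x :: res.1, (decFirst b σblk).reverse ++ res.2)

/-- Check that the lift alignment leaves no unmatched letters of `σ` (no letter of
`σ` other than the `x_j`'s lacks a letter of `τ` above it); when some letter is
left over, the lift acts trivially. -/
def liftOkAux : ℕ → List ℕ → List ℕ → Bool
  | 0, _, _ => true
  | fuel + 1, τR, σR =>
    match liftFailIdx τR σR with
    | none => σR.length ≤ τR.length
    | some j => liftOkAux fuel (τR.drop j) (σR.drop (j + 1))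

/-- The lift of the row `τ` above the row `σ`: the pair (new top row, new bottom row). -/
def liftPair (τ σ : List ℕ) : List ℕ × List ℕ :=
  if liftOkAux (σ.length + 1) τ.reverse σ.reverse then
    let r := liftPairAuxR (σ.length + 1) τ.reverse σ.reverse
    (r.1.reverse, r.2.reverse)
  else (τ, σ)

/-- The word `lift(τσ)`. -/
def liftW (τ σ : List ℕ) : List ℕ := (liftPair τ σ).1 ++ (liftPair τ σ).2

/-- Apply `lift` to rows `i` and `i+1` (1-indexed from the bottom) of a list of rows. -/
def liftAt : ℕ → List (List ℕ) → List (List ℕ)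
  | 1, σr :: τr :: rest => (liftPair τr σr).2 :: (liftPair τr σr).1 :: rest
  | n + 2, r :: R => r :: liftAt (n + 1) R
  | _, R => R

/-- The lifting sequence `lift_{[i,j]} = lift_j ∘ ⋯ ∘ lift_i`. -/
def liftSeq (i j : ℕ) (T : List (List ℕ)) : List (List ℕ) :=
  (List.range' i (j + 1 - i)).foldl (fun t k => liftAt k t) T

/-- Fueled check that `lift_i, lift_{i+1}, …` all act faithfully, for `n` steps. -/
def faithfulAux : ℕ → ℕ → List (List ℕ) → Bool
  | 0, _, _ => false
  | n + 1, i, T =>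
    let T' := liftAt i T
    if T' = T then false
    else if n = 0 then true
    else faithfulAux n (i + 1) T'

/-- The lifting sequence `lift_{[i,j]}` acts faithfully on `T`. -/
def faithfulSeq (i j : ℕ) (T : List (List ℕ)) : Bool :=
  if i ≤ j then faithfulAux (j + 1 - i) i T else false

/-- Find the canonical move: the maximal `j` admitting some `i ≤ j` with
`lift_{[i,j]}` faithful, together with the minimal such `i`. -/
def findMove (T : List (List ℕ)) : Option (ℕ × ℕ) :=
  (List.range (T.length + 1)).reverse.findSome? (fun j =>
    ((List.range' 1 j).find? (fun i => faithfulSeq i j T)).map (fun i => (i, j)))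

/-- Fueled canonical lifting loop. -/
def liftCanonAux : ℕ → List (List ℕ) → List (List ℕ)
  | 0, T => T
  | fuel + 1, T =>
    match findMove T with
    | none => T
    | some ij => liftCanonAux fuel (liftSeq ij.1 ij.2 T)

/-- The canonical lifting algorithm applied to a tableau (rows bottom to top). -/
def liftCanon (T : List (List ℕ)) : List (List ℕ) :=
  liftCanonAux (T.flatten.length * T.length + 1) T

/-- The word `lift(ρ)`: the row reading word of the canonical lift of `𝔻(ρ)`. -/
def liftWord (ρ : List ℕ) : List ℕ := wordOf (liftCanon (rowsOf ρ))

/-! ## Weak descent compositions. -/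

/-- From the list of minima `[r_k, …, r_1]` of the runs (topmost first), compute
`[r̂_k, …, r̂_1]` where `r̂_k = r_k` and `r̂_i = min (r_i, r̂_{i+1} − 1)`. -/
def hatMins (L : List ℤ) : List ℤ :=
  (L.foldl (fun (acc : List ℤ × Option ℤ) r =>
    let v := match acc.2 with
      | none => r
      | some p => min r (p - 1)
    (acc.1 ++ [v], some v)) ([], none)).1

/-- Build the weak composition with value `lens_i` in position `hs_i` and `0`
elsewhere. -/
def buildWeakComp (hs : List ℤ) (lens : List ℕ) : List ℕ :=
  (List.range (hs.headD 0).toNat).map (fun p =>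
    match (hs.zip lens).find? (fun q => decide (q.1 = (p : ℤ) + 1)) with
    | some q => q.2
    | none => 0)

/-- The weak descent composition determined by the minima and lengths of the runs
(topmost run first); `none` means virtual. -/
def desFromBlocks (mins : List ℤ) (lens : List ℕ) : Option (List ℕ) :=
  let hs := hatMins mins
  if hs = [] then some []
  else if hs.getLastD 0 ≤ 0 then none
  else some (buildWeakComp hs lens)

/-- The weak descent composition `des(ρ)` of a word; `none` means `ρ` is virtual. -/
def desWord (ρ : List ℕ) : Option (List ℕ) :=
  desFromBlocks ((runs ρ).map (fun r => ((r.headD 0 : ℕ) : ℤ)))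
    ((runs ρ).map List.length)

/-- Prefix-sum dominance of weak compositions: `domLe a b` means
`a_1 + ⋯ + a_k ≤ b_1 + ⋯ + b_k` for all `k` (i.e. `b ≥ a`). -/
def domLe (a b : List ℕ) : Prop := ∀ k, ((a.take k).sum ≤ (b.take k).sum)

/-- A reduced word is Yamanouchi if it is non-virtual and its weak descent
composition is dominated by that of every non-virtual Coxeter–Knuth equivalent word. -/
def IsYam (ρ : List ℕ) : Prop :=
  IsReducedWord ρ ∧ ∃ d, desWord ρ = some d ∧
    ∀ σ e, CKEquiv ρ σ → desWord σ = some e → domLe d e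

/-! ## Quasisymmetric functions, slide polynomials, and generating functions.

We model formal power series in variables `x_1, x_2, …` (indexed by `ℕ`, with
variable `i` standing for `x_{i+1}`) as functions `(ℕ →₀ ℕ) → ℤ` recording
coefficients of monomials. -/

/-- `β` refines `α`: `β` splits into consecutive blocks with sums the parts of `α`. -/
def Refines (β α : List ℕ) : Prop :=
  ∃ blocks : List (List ℕ), blocks.flatten = β ∧
    List.Forall₂ (fun blk a => blk.sum = a) blocks α

/-- The flattening of a weak composition given as a finitely supported exponent
vector: the list of its nonzero values, in order. -/
def flatOf (b : ℕ →₀ ℕ) : List ℕ :=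
  ((List.range (b.support.sup id + 1)).map b).filter (fun x => decide (x ≠ 0))

open Classical in
/-- The fundamental quasisymmetric function `F_α`. -/
noncomputable def Fqs (α : List ℕ) : (ℕ →₀ ℕ) → ℤ :=
  fun b => if Refines (flatOf b) α then 1 else 0

open Classical in
/-- The fundamental slide polynomial `𝔉_a` of a weak composition `a`. -/
noncomputable def FSlide (a : List ℕ) : (ℕ →₀ ℕ) → ℤ :=
  fun b =>
    if (∀ i, a.length ≤ i → b i = 0) ∧
       (∀ k, (a.take k).sum ≤ ∑ i ∈ Finset.range k, b i) ∧
       Refines (flatOf b) (a.filter (fun x => decide (x ≠ 0))) then 1 else 0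

/-- `𝔉` extended to virtual indices by `𝔉_∅ = 0`. -/
noncomputable def FSlideO : Option (List ℕ) → (ℕ →₀ ℕ) → ℤ
  | none => 0
  | some a => FSlide a

/-- The Stanley symmetric function `S_w`. -/
noncomputable def StanleySym (w : Equiv.Perm ℕ) : (ℕ →₀ ℕ) → ℤ :=
  ∑ᶠ ρ ∈ {ρ : List ℕ | ReducedWordFor ρ w}, Fqs (DesComp ρ)

/-- The Schubert polynomial `𝔖_w`. -/
noncomputable def Schubert (w : Equiv.Perm ℕ) : (ℕ →₀ ℕ) → ℤ :=
  ∑ᶠ ρ ∈ {ρ : List ℕ | ReducedWordFor ρ w}, FSlideO (desWord ρ)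

/-! ## Standard Young tableaux and Schur functions. -/

/-- The (bottom-to-top) row index of the row of `T` containing the entry `e`. -/
def rowOf (T : List (List ℕ)) (e : ℕ) : ℕ := T.findIdx (fun r => r.contains e)

/-- The column index of the entry `e` in `T`. -/
def colOf (T : List (List ℕ)) (e : ℕ) : ℕ :=
  (T.getD (rowOf T e) []).findIdx (fun z => z == e)

/-- `T` (rows listed bottom to top) is a standard Young tableau. -/
def IsSYT (T : List (List ℕ)) : Prop :=
  (∀ r ∈ T, r.Chain' (· < ·)) ∧
    T.Chain' (fun lo hi => hi.length ≤ lo.length ∧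
      ∀ j < hi.length, lo.getD j 0 < hi.getD j 0) ∧
    [] ∉ T ∧
    T.flatten.Perm (List.range' 1 T.flatten.length)

/-- The descent composition of a standard Young tableau: `i` is a descent when
`i+1` lies weakly left of `i`. -/
def sytDes (T : List (List ℕ)) : List ℕ :=
  (splitWhen (fun a _ => decide (colOf T (a + 1) ≤ colOf T a))
    (List.range' 1 T.flatten.length)).map List.length

/-- The Schur function `s_λ`, for a partition `λ` given as the list of row lengths
bottom to top. -/
noncomputable def Schur (lam : List ℕ) : (ℕ →₀ ℕ) → ℤ :=
  ∑ᶠ T ∈ {T : List (List ℕ) | IsSYT T ∧ T.map List.length = lam}, Fqs (sytDes T)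

/-! ## Standard key tableaux and Demazure characters. -/

/-- `T` is a standard key tableau of shape the weak composition `a`: rows (listed
bottom to top, with row `i` of length `a_i`, possibly `0`) strictly decrease left to
right, the entries are `1, …, |a|`, and whenever an entry `i` lies above an entry
`k` in the same column with `i < k`, some entry `j` right of `k` satisfies `i < j`. -/
def IsSKT (a : List ℕ) (T : List (List ℕ)) : Prop :=
  T.map List.length = a ∧
    (∀ r ∈ T, r.Chain' (· > ·)) ∧
    T.flatten.Perm (List.range' 1 a.sum) ∧
    ∀ lo hi, lo < hi → hi < T.length →
      ∀ c, c < (T.getD hi []).length → c < (T.getD lo []).length →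
        (T.getD hi []).getD c 0 < (T.getD lo []).getD c 0 →
        ∃ c', c < c' ∧ c' < (T.getD lo []).length ∧
          (T.getD hi []).getD c 0 < (T.getD lo []).getD c' 0

/-- The runs of the word `n ⋯ 2 1` determined by the descents of a standard key
tableau `T` (where `i` is a descent when `i+1` lies weakly right of `i`). -/
def sktRuns (T : List (List ℕ)) : List (List ℕ) :=
  splitWhen (fun _ b => decide (colOf T b ≤ colOf T (b + 1)))
    ((List.range' 1 T.flatten.length).reverse)

/-- The minimal row (1-indexed from the bottom) among the cells of the entries of
`r` in `T`. -/
def minRow (T : List (List ℕ)) (r : List ℕ) : ℕ :=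
  ((r.map (fun e => rowOf T e + 1)).min?).getD 0

/-- The weak descent composition `des(T)` of a standard key tableau; `none` means
`T` is virtual. -/
def desSKT (T : List (List ℕ)) : Option (List ℕ) :=
  (desFromBlocks ((sktRuns T).map (fun r => ((minRow T r : ℕ) : ℤ)))
    ((sktRuns T).map List.length)).map
      (fun d => d ++ List.replicate (T.length - d.length) 0)

/-- The Demazure character (key polynomial) `κ_a`. -/
noncomputable def KeyPoly (a : List ℕ) : (ℕ →₀ ℕ) → ℤ :=
  ∑ᶠ T ∈ {T : List (List ℕ) | IsSKT a T}, FSlideO (desSKT T)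

/-- `κ` extended to virtual indices by `κ_∅ = 0`. -/
noncomputable def KeyPolyO : Option (List ℕ) → (ℕ →₀ ℕ) → ℤ
  | none => 0
  | some a => KeyPoly a

/-! ## Edelman–Greene insertion and weak insertion. -/

/-- Edelman–Greene insertion of `x` into a single row: either append `x`, or bump
the smallest entry exceeding `x` (suppressing the replacement when that entry is
`x+1` and `x` already occurs in the row). -/
def eginsRow (x : ℕ) (row : List ℕ) : List ℕ × Option ℕ :=
  match row.findIdx? (fun z => decide (x < z)) with
  | none => (row ++ [x], none)
  | some j =>
    let y := row.getD j 0
    (if y = x + 1 ∧ row.contains x then row else row.set j x, some y)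

/-- Edelman–Greene insertion of `x` into a tableau (rows bottom to top). -/
def egins : ℕ → List (List ℕ) → List (List ℕ)
  | x, [] => [[x]]
  | x, row :: rest =>
    match eginsRow x row with
    | (r, none) => r :: rest
    | (r, some y) => r :: egins y rest

/-- The Edelman–Greene insertion tableau `P(ρ)` of a word. -/
def PEG (ρ : List ℕ) : List (List ℕ) := ρ.foldl (fun P x => egins x P) []

/-- One sweep of all the maps `drop_i` on a tableau (rows bottom to top). -/
def sweepDropT (T : List (List ℕ)) : List (List ℕ) :=
  (List.range T.length).foldl (fun t i => dropAt (i + 1) t) T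

/-- The drop of a tableau: repeatedly drop until reaching the increasing Young
tableau of the class. -/
def dropCanon (T : List (List ℕ)) : List (List ℕ) :=
  sweepDropT^[T.flatten.length * T.length + 1] T

/-- Weak insertion of the letter `x` into a Yamanouchi key tableau `P`:
`lift (drop P ← x)`. -/
def winsert (x : ℕ) (P : List (List ℕ)) : List (List ℕ) :=
  liftCanon (egins x (dropCanon P))

/-- The weak insertion tableau `P̃(ρ)` (rows bottom to top). -/
def Pweak (ρ : List ℕ) : List (List ℕ) := ρ.foldl (fun P x => winsert x P) []

/-- The Yamanouchi word of the Coxeter–Knuth class of `ρ`: the row reading word of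
`P̃(ρ)`. -/
def yamWord (ρ : List ℕ) : List ℕ := wordOf (Pweak ρ)

/-- The shape (weak composition) of the weak insertion tableau of the first `m`
letters of `ρ`. -/
def shapeAt (ρ : List ℕ) (m : ℕ) : List ℕ :=
  (desWord (wordOf (Pweak (ρ.take m)))).getD []

/-- Append the entry `e` at the end of row `j` (0-indexed from the bottom),
extending with empty rows as needed. -/
def placeEntry (Q : List (List ℕ)) (j e : ℕ) : List (List ℕ) :=
  let Q' := Q ++ List.replicate (j + 1 - Q.length) []
  Q'.set j (Q'.getD j [] ++ [e])

/-- The (0-indexed) row in which the shape grows from `aold` to `anew`. -/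
def growRow (aold anew : List ℕ) : ℕ :=
  ((List.range anew.length).find?
    (fun j => decide (aold.getD j 0 ≠ anew.getD j 0))).getD 0

/-- The weak recording tableau `Q̃(ρ)`: entry `i` is placed in the cell where the
shape grows at the step inserting `ρ_i` (entries are placed in decreasing order). -/
def Qweak (ρ : List ℕ) : List (List ℕ) :=
  (List.range ρ.length).foldl (fun Q m =>
    placeEntry Q (growRow (shapeAt ρ m) (shapeAt ρ (m + 1))) (ρ.length - m)) []

/-! ## Elementary weak dual equivalence involutions. -/

/-- Column reading order on entries: by column, and bottom to top within a column. -/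
def colKeyLe (T : List (List ℕ)) (x y : ℕ) : Bool :=
  decide (colOf T x < colOf T y ∨ (colOf T x = colOf T y ∧ rowOf T x ≤ rowOf T y))

/-- Sort three values by a boolean order. -/
def sort3 (le : ℕ → ℕ → Bool) (a b c : ℕ) : ℕ × ℕ × ℕ :=
  if le a b then
    if le b c then (a, b, c) else if le a c then (a, c, b) else (c, a, b)
  else
    if le a c then (b, a, c) else if le b c then (b, c, a) else (c, b, a)

/-- Relabel the entries `x, y, z` of `T` as `x', y', z'` respectively. -/
def relabel3 (T : List (List ℕ)) (x y z x' y' z' : ℕ) : List (List ℕ) :=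
  T.map (List.map (fun t =>
    if t = x then x' else if t = y then y' else if t = z then z' else t))

/-- The elementary weak dual equivalence involution `d̃_i` on standard key tableaux:
with `u, v, w` the cells of `i−1, i, i+1` in column reading order, if `u` and `w`
share a row and `v` does not, cycle the three entries so that `i` shares a row with
`i ± 1`; else if `v` holds `i+1` swap `i−1, i`; else if `v` holds `i−1` swap
`i, i+1`; otherwise fix `T`. -/
def wde (i : ℕ) (T : List (List ℕ)) : List (List ℕ) :=
  let s := sort3 (colKeyLe T) (i - 1) i (i + 1)
  let u := s.1
  let v := s.2.1
  let w := s.2.2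
  if rowOf T u = rowOf T w ∧ rowOf T v ≠ rowOf T u then
    let T1 := relabel3 T u v w w u v
    let T2 := relabel3 T u v w v w u
    if rowOf T1 i = rowOf T1 (i - 1) ∨ rowOf T1 i = rowOf T1 (i + 1) then T1 else T2
  else if v = i + 1 then relabel3 T (i - 1) i (i + 1) i (i - 1) (i + 1)
  else if v = i - 1 then relabel3 T (i - 1) i (i + 1) (i - 1) (i + 1) i
  else T

/-- Remove trailing zero parts of a weak composition (two weak compositions are
identified when they differ only in trailing zeros). -/
def trimZeros (a : List ℕ) : List ℕ :=
  (a.reverse.dropWhile (fun x => x == 0)).reverse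

/-- The transposition `s_i` acting on compositions by interchanging the parts in
positions `i` and `i+1` (1-indexed). -/
def swapParts (i : ℕ) (c : List ℕ) : List ℕ :=
  if 1 ≤ i ∧ i < c.length then
    (c.set (i - 1) (c.getD i 0)).set i (c.getD (i - 1) 0)
  else c

end EG

namespace EG

/-! ## Coxeter–Knuth relation on integer words -/

inductive CKt : List ℤ → List ℤ → Prop
  | k1 (x y z : ℤ) (h1 : x < y) (h2 : y < z) : CKt [y, x, z] [y, z, x]
  | k2 (x y z : ℤ) (h1 : x < y) (h2 : y < z) : CKt [z, x, y] [x, z, y]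
  | br (a b : ℤ) (h : b = a + 1) : CKt [a, b, a] [b, a, b]

def CKs (ρ σ : List ℤ) : Prop :=
  ∃ p q l m, CKt l m ∧ ρ = p ++ l ++ q ∧ σ = p ++ m ++ q

def CK : List ℤ → List ℤ → Prop := Relation.EqvGen CKs

theorem CK.refl (ρ : List ℤ) : CK ρ ρ := Relation.EqvGen.refl ρ
theorem CK.symm {ρ σ : List ℤ} (h : CK ρ σ) : CK σ ρ := Relation.EqvGen.symm _ _ h
theorem CK.trans {ρ σ τ : List ℤ} (h : CK ρ σ) (h' : CK σ τ) : CK ρ τ :=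
  Relation.EqvGen.trans _ _ _ h h'

theorem CKt.ck {l m : List ℤ} (h : CKt l m) : CK l m :=
  Relation.EqvGen.rel _ _ ⟨[], [], l, m, h, by simp, by simp⟩

theorem CK.map {f : List ℤ → List ℤ} (hf : ∀ ρ σ, CKs ρ σ → CK (f ρ) (f σ)) {ρ σ : List ℤ}
    (h : CK ρ σ) : CK (f ρ) (f σ) := by
  induction h with
  | rel x y h => exact hf _ _ h
  | refl x => exact CK.refl _
  | symm x y _ ih => exact ih.symm
  | trans x y z _ _ ih1 ih2 => exact ih1.trans ih2

theorem CK.app (p q : List ℤ) {ρ σ : List ℤ} (h : CK ρ σ) : CK (p ++ ρ ++ q) (p ++ σ ++ q) := by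
  refine CK.map (f := fun ρ => p ++ ρ ++ q) ?_ h
  rintro _ _ ⟨p', q', l, m, h, rfl, rfl⟩
  exact Relation.EqvGen.rel _ _ ⟨p ++ p', q' ++ q, l, m, h, by simp, by simp⟩

theorem CK.appl (p : List ℤ) {ρ σ : List ℤ} (h : CK ρ σ) : CK (p ++ ρ) (p ++ σ) := by
  simpa using h.app p []
theorem CK.appr (q : List ℤ) {ρ σ : List ℤ} (h : CK ρ σ) : CK (ρ ++ q) (σ ++ q) := by
  simpa using h.app [] q
theorem CK.cons (a : ℤ) {ρ σ : List ℤ} (h : CK ρ σ) : CK (a :: ρ) (a :: σ) := h.appl [a]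

theorem CKt.length {l m : List ℤ} (h : CKt l m) : l.length = m.length := by
  cases h <;> rfl

theorem CK.length {ρ σ : List ℤ} (h : CK ρ σ) : ρ.length = σ.length := by
  induction h with
  | rel x y h => obtain ⟨p', q', l, m, h, rfl, rfl⟩ := h; simp [h.length]
  | refl x => rfl
  | symm x y _ ih => exact ih.symm
  | trans x y z _ _ ih1 ih2 => exact ih1.trans ih2

def mir (ρ : List ℤ) : List ℤ := (ρ.map (fun x => -x)).reverse

theorem mir_app (ρ σ : List ℤ) : mir (ρ ++ σ) = mir σ ++ mir ρ := by simp [mir]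
theorem mir_mir (ρ : List ℤ) : mir (mir ρ) = ρ := by simp [mir]
theorem mem_mir (ρ : List ℤ) (x : ℤ) : x ∈ mir ρ ↔ -x ∈ ρ := by
  simp only [mir, mem_reverse, mem_map]
  constructor
  · rintro ⟨a, h, rfl⟩; simpa using h
  · intro h; exact ⟨_, h, by simp⟩

theorem CKt.mir {l m : List ℤ} (h : CKt l m) : CKt (mir m) (mir l) := by
  cases h with
  | k1 x y z h1 h2 => exact CKt.k2 (-z) (-y) (-x) (by omega) (by omega)
  | k2 x y z h1 h2 => exact CKt.k1 (-z) (-y) (-x) (by omega) (by omega)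
  | br a b h => exact CKt.br (-b) (-a) (by omega)

theorem CK.mir {ρ σ : List ℤ} (h : CK ρ σ) : CK (mir ρ) (mir σ) := by
  refine CK.map (f := EG.mir) ?_ h
  rintro _ _ ⟨p', q', l, m, h, rfl, rfl⟩
  simp only [mir_app, ← List.append_assoc]
  exact (h.mir.ck.app _ _).symm

def Bad (σ : List ℤ) : Prop :=
  (∃ p q a, σ = p ++ [a, a] ++ q) ∨ (∃ p q a b, (b + 1 < a ∨ a + 1 < b) ∧ σ = p ++ [a, b, a] ++ q)

def Good (ρ : List ℤ) : Prop := ∀ σ, CK ρ σ → ¬ Bad σ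

theorem Bad.app {σ : List ℤ} (p q : List ℤ) (h : Bad σ) : Bad (p ++ σ ++ q) := by
  rcases h with ⟨p', q', a, rfl⟩ | ⟨p', q', a, b, h, rfl⟩
  · exact Or.inl ⟨p ++ p', q' ++ q, a, by simp⟩
  · exact Or.inr ⟨p ++ p', q' ++ q, a, b, h, by simp⟩

theorem Bad.mir {σ : List ℤ} (h : Bad σ) : Bad (mir σ) := by
  rcases h with ⟨p', q', a, rfl⟩ | ⟨p', q', a, b, h, rfl⟩
  · exact Or.inl ⟨EG.mir q', EG.mir p', -a, by simp [EG.mir]⟩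
  · exact Or.inr ⟨EG.mir q', EG.mir p', -a, -b, by omega, by simp [EG.mir]⟩

theorem Good.ck {ρ σ : List ℤ} (h : Good ρ) (h' : CK ρ σ) : Good σ :=
  fun _ hτ => h _ (h'.trans hτ)
theorem Good.fac {p ρ q : List ℤ} (h : Good (p ++ ρ ++ q)) : Good ρ :=
  fun _ hτ hb => h _ (hτ.app p q) (hb.app p q)
theorem Good.left {ρ q : List ℤ} (h : Good (ρ ++ q)) : Good ρ := Good.fac (p := []) (q := q) h
theorem Good.right {ρ q : List ℤ} (h : Good (ρ ++ q)) : Good q :=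
  Good.fac (p := ρ) (q := []) (by simpa using h)
theorem Good.mir {ρ : List ℤ} (h : Good ρ) : Good (mir ρ) :=
  fun _ hτ hb => h _ (by simpa [mir_mir] using hτ.mir) hb.mir

/-! ## Passing a letter through a decreasing word -/

theorem passA (L : List ℤ) : ∀ u v : ℤ, (u :: L).Pairwise (· > ·) → u < v →
    CK (u :: (L ++ [v])) (u :: v :: L) := by
  induction L with
  | nil => intro u v _ _; exact CK.refl _
  | cons l L ih =>
    intro u v h huv
    have h2 := (List.pairwise_cons.1 h).2
    have hl : l < u := (List.pairwise_cons.1 h).1 l (by simp)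
    have := (ih l v h2 (by omega)).cons u
    refine CK.trans (by simpa using this) ?_
    exact (CKt.k1 l u v hl huv).ck.appr L

theorem passB (L : List ℤ) : ∀ u v : ℤ, (L ++ [v]).Pairwise (· > ·) → u < v →
    CK (L ++ [u, v]) (u :: (L ++ [v])) := by
  induction L with
  | nil => intro u v _ _; exact CK.refl _
  | cons l L ih =>
    intro u v h huv
    simp only [cons_append, List.pairwise_cons] at h
    have := (ih u v h.2 huv).cons l
    refine CK.trans (by simpa using this) ?_
    cases L with
    | nil =>
      have hl : v < l := h.1 v (by simp)
      exact (CKt.k2 u v l huv hl).ck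
    | cons l2 L =>
      have hl : l2 < l := h.1 l2 (by simp)
      have hv : v < l2 := (List.pairwise_cons.1 h.2).1 v (by simp)
      exact (CKt.k2 u l2 l (by omega) hl).ck.appr (L ++ [v])

/-! ## The column insertion step -/

def dout (A : Finset ℤ) (v : ℤ) : Option ℤ :=
  if v ∈ A then some (v - 1)
  else if h : (A.filter (fun u => u < v)).Nonempty then some ((A.filter (fun u => u < v)).max' h)
  else none

def dset (A : Finset ℤ) (v : ℤ) : Finset ℤ :=
  if v ∈ A then A
  else match dout A v with
    | some u => insert v (A.erase u)
    | none => insert v A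

theorem d_mem {A : Finset ℤ} {v : ℤ} (h : v ∈ A) : dout A v = some (v - 1) ∧ dset A v = A := by
  simp [dout, dset, h]

theorem d_join {A : Finset ℤ} {v : ℤ} (h : ∀ u ∈ A, v < u) :
    dout A v = none ∧ dset A v = insert v A := by
  have hv : v ∉ A := fun hv => absurd (h v hv) (by omega)
  have : dout A v = none := by
    rw [dout, if_neg hv, dif_neg]
    rintro ⟨u, hu⟩
    rw [Finset.mem_filter] at hu
    have := h u hu.1
    omega
  refine ⟨this, ?_⟩
  rw [dset, if_neg hv, this]

theorem d_pass {A : Finset ℤ} {v u : ℤ} (hu : u ∈ A) (huv : u < v)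
    (h : ∀ w ∈ A, w ≤ u ∨ v < w) :
    dout A v = some u ∧ dset A v = insert v (A.erase u) := by
  have hv : v ∉ A := fun hv => by have := h v hv; omega
  have hne : (A.filter (fun u => u < v)).Nonempty := ⟨u, by simp [hu, huv]⟩
  have : dout A v = some u := by
    rw [dout, if_neg hv, dif_pos hne]
    congr 1
    apply le_antisymm
    · apply Finset.max'_le
      intro w hw
      rw [Finset.mem_filter] at hw
      have := h w hw.1
      omega
    · apply Finset.le_max'
      simp [hu, huv]
  refine ⟨this, ?_⟩
  rw [dset, if_neg hv, this]

theorem d_cases (A : Finset ℤ) (v : ℤ) :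
    (v ∈ A ∧ dout A v = some (v - 1) ∧ dset A v = A) ∨
    ((∀ u ∈ A, v < u) ∧ dout A v = none ∧ dset A v = insert v A) ∨
    (∃ u, u ∈ A ∧ u < v ∧ (∀ w ∈ A, w ≤ u ∨ v < w) ∧
      dout A v = some u ∧ dset A v = insert v (A.erase u)) := by
  by_cases hv : v ∈ A
  · exact Or.inl ⟨hv, d_mem hv⟩
  by_cases hne : (A.filter (fun u => u < v)).Nonempty
  · right; right
    have hm := Finset.max'_mem _ hne
    have hle := fun w hw => Finset.le_max' (A.filter (fun u => u < v)) w hw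
    set u := (A.filter (fun u => u < v)).max' hne
    rw [Finset.mem_filter] at hm
    have key : ∀ w ∈ A, w ≤ u ∨ v < w := by
      intro w hw
      rcases lt_trichotomy w v with h | h | h
      · exact Or.inl (hle w (by simp [hw, h]))
      · exact absurd (h ▸ hw) hv
      · exact Or.inr h
    exact ⟨u, hm.1, hm.2, key, d_pass hm.1 hm.2 key⟩
  · right; left
    have key : ∀ u ∈ A, v < u := by
      intro w hw
      rcases lt_trichotomy w v with h | h | h
      · exact absurd ⟨w, by simp [hw, h]⟩ hne
      · exact absurd (h ▸ hw) hv
      · exact h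
    exact ⟨key, d_join key⟩

def fin : Finset ℤ → List ℤ → Finset ℤ
  | A, [] => A
  | A, v :: ρ => fin (dset A v) ρ

def out : Finset ℤ → List ℤ → List ℤ
  | _, [] => []
  | A, v :: ρ => (dout A v).toList ++ out (dset A v) ρ

theorem fin_app (ρ σ : List ℤ) : ∀ A, fin A (ρ ++ σ) = fin (fin A ρ) σ := by
  induction ρ with
  | nil => intro A; rfl
  | cons v ρ ih => intro A; simp [fin, ih]

theorem out_app (ρ σ : List ℤ) : ∀ A, out A (ρ ++ σ) = out A ρ ++ out (fin A ρ) σ := by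
  induction ρ with
  | nil => intro A; rfl
  | cons v ρ ih => intro A; simp [fin, out, ih]

def D1 (ρ : List ℤ) : Finset ℤ := fin ∅ ρ
def em (ρ : List ℤ) : List ℤ := out ∅ ρ

theorem D1_snoc (ρ : List ℤ) (x : ℤ) : D1 (ρ ++ [x]) = dset (D1 ρ) x := by
  simp [D1, fin_app, fin]
theorem em_snoc (ρ : List ℤ) (x : ℤ) : em (ρ ++ [x]) = em ρ ++ (dout (D1 ρ) x).toList := by
  simp [D1, em, out_app, out]

def desc (A : Finset ℤ) : List ℤ := A.sort (· ≥ ·)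

theorem desc_pw (A : Finset ℤ) : (desc A).Pairwise (· > ·) :=
  (Finset.sortedGT_sort A).pairwise
theorem mem_desc (A : Finset ℤ) (x : ℤ) : x ∈ desc A ↔ x ∈ A := by simp [desc]

theorem desc_uniq {L : List ℤ} {A : Finset ℤ} (h : L.Pairwise (· > ·)) (hm : ∀ x, x ∈ L ↔ x ∈ A) :
    desc A = L := by
  apply List.Perm.eq_of_pairwise (le := (· > ·))
  · intro a b _ _ h1 h2; omega
  · exact desc_pw A
  · exact h
  · rw [List.perm_ext_iff_of_nodup]
    · intro a; rw [mem_desc, hm]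
    · exact (desc_pw A).imp (fun h => by omega)
    · exact h.imp (fun h => by omega)

theorem desc_split {A : Finset ℤ} {u : ℤ} (h : u ∈ A) : ∃ L1 L2, desc A = L1 ++ u :: L2 ∧
    (L1 ++ u :: L2).Pairwise (· > ·) := by
  obtain ⟨L1, L2, h'⟩ := List.append_of_mem ((mem_desc A u).2 h)
  exact ⟨L1, L2, h', h' ▸ desc_pw A⟩

theorem good_pred {A : Finset ℤ} {v : ℤ} (h : Good (desc A ++ [v])) (hv : v ∈ A) : v - 1 ∈ A := by
  by_contra hv1
  obtain ⟨L1, L2, he, hp⟩ := desc_split hv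
  have hm : ∀ x ∈ L2, x < v ∧ x ≠ v - 1 := by
    intro x hx
    constructor
    · have := (List.pairwise_cons.1 (List.pairwise_append.1 hp).2.1).1 x hx
      omega
    · rintro rfl
      apply hv1
      rw [← mem_desc, he]; simp [hx]
  rw [he] at h
  have hp2 := (List.pairwise_append.1 hp).2.1
  cases L2 with
  | nil => exact h _ (CK.refl _) (Or.inl ⟨L1, [], v, by simp⟩)
  | cons l L3 =>
    have hl := hm l (by simp)
    have h1 := ((passA L3 l v (List.pairwise_cons.1 hp2).2 hl.1).cons v).appl L1
    refine h _ (by simpa using h1) (Or.inr ⟨L1, L3, v, l, by omega, by simp⟩)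

theorem pass {A : Finset ℤ} {v : ℤ} (hg : v ∈ A → v - 1 ∈ A) :
    CK (desc A ++ [v]) ((dout A v).toList ++ desc (dset A v)) := by
  rcases d_cases A v with ⟨hv, e1, e2⟩ | ⟨hv, e1, e2⟩ | ⟨u, hu, huv, hw, e1, e2⟩
  · rw [e1, e2]
    obtain ⟨L1, L2, he, hp⟩ := desc_split hv
    have hp2 := List.pairwise_append.1 hp
    have hp3 := List.pairwise_cons.1 hp2.2.1
    have hm := (mem_desc A (v - 1)).2 (hg hv)
    have hL : v - 1 ∈ L2 := by
      rw [he] at hm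
      simp only [mem_append, mem_cons] at hm
      rcases hm with h | h | h
      · have := hp2.2.2 (v - 1) h v (by simp); omega
      · omega
      · exact h
    obtain ⟨L3, rfl⟩ : ∃ L3, L2 = (v - 1) :: L3 := by
      cases L2 with
      | nil => simp at hL
      | cons l L3 =>
        have h1 := hp3.1 l (by simp)
        rcases List.mem_cons.1 hL with h | h
        · exact ⟨L3, by rw [h]⟩
        · have := (List.pairwise_cons.1 hp3.2).1 _ h; omega
    rw [he]
    have s1 := ((passA L3 (v - 1) v hp3.2 (by omega)).cons v).appl L1
    have s2 := (CKt.br (v - 1) v (by omega)).ck.symm.app L1 L3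
    have s3 := (passB L1 (v - 1) v (by
      rw [List.pairwise_append]
      refine ⟨hp2.1, by simp, ?_⟩
      intro a ha b hb
      simp only [mem_singleton] at hb
      subst hb
      exact hp2.2.2 a ha b (by simp)) (by omega)).appr ((v - 1) :: L3)
    simp only [append_assoc, cons_append, nil_append, Option.toList_some] at s1 s2 s3 ⊢
    exact s1.trans (s2.trans s3)
  · rw [e1, e2]
    have : desc (insert v A) = desc A ++ [v] := by
      apply desc_uniq
      · rw [List.pairwise_append]
        refine ⟨desc_pw A, by simp, ?_⟩
        intro a ha b hb
        simp only [mem_singleton] at hb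
        subst hb
        exact hv a ((mem_desc A a).1 ha)
      · intro x; simp [mem_desc, or_comm]
    rw [this]
    exact CK.refl _
  · rw [e1, e2]
    obtain ⟨L1, L2, he, hp⟩ := desc_split hu
    have hp2 := List.pairwise_append.1 hp
    have hp3 := List.pairwise_cons.1 hp2.2.1
    have hL1 : ∀ a ∈ L1, v < a := by
      intro a ha
      have h1 := hw a ((mem_desc A a).1 (by rw [he]; simp [ha]))
      have h2 := hp2.2.2 a ha u (by simp)
      omega
    have hL1v : (L1 ++ [v]).Pairwise (· > ·) := by
      rw [List.pairwise_append]
      refine ⟨hp2.1, by simp, ?_⟩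
      intro a ha b hb
      simp only [mem_singleton] at hb
      subst hb
      exact hL1 a ha
    have : desc (insert v (A.erase u)) = L1 ++ v :: L2 := by
      apply desc_uniq
      · rw [List.pairwise_append, List.pairwise_cons]
        refine ⟨hp2.1, ⟨fun a ha => by have := hp3.1 a ha; omega, hp3.2⟩, ?_⟩
        intro a ha b hb
        rcases List.mem_cons.1 hb with rfl | hb
        · exact hL1 a ha
        · exact hp2.2.2 a ha b (by simp [hb])
      · intro x
        have hx : x ∈ A ↔ x ∈ L1 ∨ x = u ∨ x ∈ L2 := by
          rw [← mem_desc, he]; simp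
        have h1 : u ∉ L1 := fun h => by have := hp2.2.2 u h u (by simp); omega
        have h2 : u ∉ L2 := fun h => by have := hp3.1 u h; omega
        simp only [mem_append, mem_cons, Finset.mem_insert, Finset.mem_erase, hx]
        constructor
        · rintro (h | h | h)
          · exact Or.inr ⟨fun e => h1 (e ▸ h), Or.inl h⟩
          · exact Or.inl h
          · exact Or.inr ⟨fun e => h2 (e ▸ h), Or.inr (Or.inr h)⟩
        · tauto
    rw [this, he]
    have s1 := (passA L2 u v hp2.2.1 huv).appl L1
    have s2 := (passB L1 u v hL1v huv).appr L2
    simp only [append_assoc, cons_append, nil_append, Option.toList_some] at s1 s2 ⊢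
    exact s1.trans s2

theorem ck_em (ρ : List ℤ) : Good ρ → CK ρ (em ρ ++ desc (D1 ρ)) := by
  induction ρ using List.reverseRecOn with
  | nil => intro _; simpa [em, out, D1, fin, desc] using CK.refl []
  | append_singleton ρ v ih =>
    intro h
    have h1 := ih h.left
    have h2 := h1.appr [v]
    have h3 : Good (em ρ ++ desc (D1 ρ) ++ [v]) := h.ck h2
    rw [append_assoc] at h3 h2
    have h4 := (pass (A := D1 ρ) (v := v) (good_pred h3.right)).appl (em ρ)
    rw [D1_snoc, em_snoc, append_assoc]
    exact h2.trans h4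

theorem good_pred' {ρ : List ℤ} {v : ℤ} (h : Good (ρ ++ [v])) (hv : v ∈ D1 ρ) : v - 1 ∈ D1 ρ := by
  have h3 : Good (em ρ ++ desc (D1 ρ) ++ [v]) := h.ck ((ck_em ρ h.left).appr [v])
  rw [append_assoc] at h3
  exact good_pred h3.right hv

end EG

namespace EG

def Ok : Finset ℤ → List ℤ → Prop
  | _, [] => True
  | A, v :: ρ => (v ∈ A → v - 1 ∈ A) ∧ Ok (dset A v) ρ

theorem Ok_app (ρ σ : List ℤ) : ∀ A, Ok A (ρ ++ σ) ↔ Ok A ρ ∧ Ok (fin A ρ) σ := by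
  induction ρ with
  | nil => intro A; simp [Ok, fin]
  | cons v ρ ih => intro A; simp [Ok, fin, ih, and_assoc]

theorem Good.ok (ρ : List ℤ) : Good ρ → Ok ∅ ρ := by
  induction ρ using List.reverseRecOn with
  | nil => intro _; trivial
  | append_singleton ρ v ih =>
    intro h
    rw [Ok_app]
    exact ⟨ih h.left, good_pred' h, trivial⟩

def Same (A : Finset ℤ) (l m : List ℤ) : Prop := fin A l = fin A m ∧ CK (out A l) (out A m)

/-- outcome relation of one step -/
def Stp (A : Finset ℤ) (v : ℤ) (o : Option ℤ) (B : Finset ℤ) : Prop := dout A v = o ∧ dset A v = B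

theorem same3 {A B C E B' C' E' : Finset ℤ} {u v w u' v' w' : ℤ} {o1 o2 o3 o1' o2' o3' : Option ℤ}
    (h1 : Stp A u o1 B) (h2 : Stp B v o2 C) (h3 : Stp C w o3 E)
    (h1' : Stp A u' o1' B') (h2' : Stp B' v' o2' C') (h3' : Stp C' w' o3' E')
    (hE : E = E') (ho : CK (o1.toList ++ (o2.toList ++ o3.toList))
      (o1'.toList ++ (o2'.toList ++ o3'.toList))) : Same A [u, v, w] [u', v', w'] := by
  obtain ⟨rfl, rfl⟩ := h1
  obtain ⟨rfl, rfl⟩ := h2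
  obtain ⟨rfl, rfl⟩ := h3
  obtain ⟨rfl, rfl⟩ := h1'
  obtain ⟨rfl, rfl⟩ := h2'
  obtain ⟨rfl, rfl⟩ := h3'
  refine ⟨hE, ?_⟩
  simpa [out] using ho

theorem dset_mem_self (A : Finset ℤ) (v : ℤ) : v ∈ dset A v := by
  rcases d_cases A v with ⟨hv, e1, e2⟩ | ⟨hv, e1, e2⟩ | ⟨u, hu, huv, hw, e1, e2⟩
  · rw [e2]; exact hv
  · rw [e2]; simp
  · rw [e2]; simp

/-- independence of two insertions separated by an element of the set -/
theorem same2 {A : Finset ℤ} {x y z : ℤ} (hy : y ∈ A) (hxy : x < y) (hyz : y < z)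
    (hx : x ∈ A → x - 1 ∈ A) (hz : z ∈ A → z - 1 ∈ A) :
    ∃ z' : ℤ, y ≤ z' ∧ dout A z = some z' ∧ dout (dset A x) z = some z' ∧
      dout (dset A z) x = dout A x ∧ (∀ x', dout A x = some x' → x' < x) ∧
      dset (dset A x) z = dset (dset A z) x := by
  rcases d_cases A x with ⟨hv, e1, e2⟩ | ⟨hv, e1, e2⟩ | ⟨u, hu, huv, hw, e1, e2⟩ <;>
  rcases d_cases A z with ⟨kv, f1, f2⟩ | ⟨kv, f1, f2⟩ | ⟨t, ht, htz, kw, f1, f2⟩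
  · refine ⟨z - 1, by omega, f1, ?_, ?_, ?_, ?_⟩
    · rw [e2, f1]
    · rw [f2]
    · rw [e1]; rintro x' ⟨⟩; omega
    · rw [e2, f2, e2]
  · have := kv y hy; omega
  · have hyt : y ≤ t := by have := kw y hy; omega
    have hm : x ∈ insert z (A.erase t) := by simp [hv]; omega
    refine ⟨t, hyt, f1, ?_, ?_, ?_, ?_⟩
    · rw [e2, f1]
    · rw [f2, e1, (d_mem hm).1]
    · rw [e1]; rintro x' ⟨⟩; omega
    · rw [e2, f2, (d_mem hm).2]
  · refine ⟨z - 1, by omega, f1, ?_, ?_, ?_, ?_⟩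
    · rw [e2, (d_mem (by simp [kv])).1]
    · rw [f2]
    · rw [e1]; rintro x' ⟨⟩
    · rw [e2, f2, (d_mem (by simp [kv])).2, e2]
  · have := kv y hy; omega
  · have hyt : y ≤ t := by have := kw y hy; omega
    have g1 := d_pass (A := insert x A) (v := z) (u := t) (by simp [ht]) htz (by
      intro w hw; rcases Finset.mem_insert.1 hw with rfl | h
      · omega
      · exact kw w h)
    have g2 := d_join (A := insert z (A.erase t)) (v := x) (by
      intro w hw; rcases Finset.mem_insert.1 hw with rfl | h
      · omega
      · exact hv w (Finset.mem_of_mem_erase h))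
    refine ⟨t, hyt, f1, ?_, ?_, ?_, ?_⟩
    · rw [e2, g1.1]
    · rw [f2, e1, g2.1]
    · rw [e1]; rintro x' ⟨⟩
    · rw [e2, f2, g1.2, g2.2]
      ext a; simp only [Finset.mem_insert, Finset.mem_erase]
      have : t ≠ x := by omega
      grind
  · have hm : z ∈ insert x (A.erase u) := by simp [kv]; omega
    refine ⟨z - 1, by omega, f1, ?_, ?_, ?_, ?_⟩
    · rw [e2, (d_mem hm).1]
    · rw [f2]
    · rw [e1]; rintro x' ⟨⟩; omega
    · rw [e2, f2, (d_mem hm).2, e2]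
  · have := kv y hy; omega
  · have hyt : y ≤ t := by have := kw y hy; omega
    have g1 := d_pass (A := insert x (A.erase u)) (v := z) (u := t) (by simp [ht]; omega) htz (by
      intro w hw; rcases Finset.mem_insert.1 hw with rfl | h
      · omega
      · exact kw w (Finset.mem_of_mem_erase h))
    have g2 := d_pass (A := insert z (A.erase t)) (v := x) (u := u) (by simp [hu]; omega) huv (by
      intro w hw'; rcases Finset.mem_insert.1 hw' with rfl | h
      · omega
      · exact hw w (Finset.mem_of_mem_erase h))
    refine ⟨t, hyt, f1, ?_, ?_, ?_, ?_⟩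
    · rw [e2, g1.1]
    · rw [f2, e1, g2.1]
    · rw [e1]; rintro x' ⟨⟩; omega
    · rw [e2, f2, g1.2, g2.2]
      ext a; simp only [Finset.mem_insert, Finset.mem_erase]
      grind

theorem dout_lt {A : Finset ℤ} {v u : ℤ} (h : dout A v = some u) : u < v := by
  rcases d_cases A v with ⟨hv, e1, e2⟩ | ⟨hv, e1, e2⟩ | ⟨t, hu, huv, hw, e1, e2⟩ <;>
    rw [e1] at h
  · cases h; omega
  · cases h
  · cases h; exact huv

theorem row_k1 {A : Finset ℤ} {x y z : ℤ} (hxy : x < y) (hyz : y < z)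
    (h1 : Ok A [y, x, z]) (h2 : Ok A [y, z, x]) : Same A [y, x, z] [y, z, x] := by
  simp only [Ok, and_true] at h1 h2
  obtain ⟨z', hz', f1, f2, f3, f4, f5⟩ :=
    same2 (dset_mem_self A y) hxy hyz h1.2.1 h2.2.1
  refine same3 ⟨rfl, rfl⟩ ⟨rfl, rfl⟩ ⟨f2, rfl⟩ ⟨rfl, rfl⟩ ⟨f1, rfl⟩ ⟨f3, rfl⟩ f5 ?_
  rcases hx : dout (dset A y) x with _ | x'
  · exact CK.refl _
  rcases hy : dout A y with _ | y'
  · -- y joined, so everything is at least y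
    exfalso
    rcases d_cases A y with ⟨hv, e1, e2⟩ | ⟨hv, e1, e2⟩ | ⟨t, hu, huv, hw, e1, e2⟩
    · rw [e1] at hy; cases hy
    · have := (d_join (A := dset A y) (v := x) (by
        rw [e2]; intro u hu
        rcases Finset.mem_insert.1 hu with rfl | h
        · exact hxy
        · have := hv u h; omega)).1
      rw [this] at hx; cases hx
    · rw [e1] at hy; cases hy
  · have a1 : y' < y := dout_lt hy
    have a2 : x' < y' := by
      rcases d_cases A y with ⟨hv, e1, e2⟩ | ⟨hv, e1, e2⟩ | ⟨t, hu, huv, hw, e1, e2⟩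
      · rw [e1] at hy; cases hy
        have := f4 x' hx; omega
      · rw [e1] at hy; cases hy
      · rw [e1] at hy; cases hy
        rcases d_cases (dset A y) x with ⟨hv, g1, g2⟩ | ⟨hv, g1, g2⟩ | ⟨s, hs, hsx, hsw, g1, g2⟩
        · rw [g1] at hx; cases hx
          rw [e2] at hv
          simp only [Finset.mem_insert, Finset.mem_erase] at hv
          rcases hv with h | h
          · omega
          · have := hw x h.2; omega
        · rw [g1] at hx; cases hx
        · rw [g1] at hx; cases hx
          rw [e2] at hs
          simp only [Finset.mem_insert, Finset.mem_erase] at hs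
          rcases hs with h | h
          · omega
          · have := hw _ h.2; omega
    exact (CKt.k1 x' y' z' a2 (by omega)).ck

end EG

namespace EG

theorem row_k2 {A : Finset ℤ} {x y z : ℤ} (hxy : x < y) (hyz : y < z)
    (h1 : Ok A [z, x, y]) (h2 : Ok A [x, z, y]) : Same A [z, x, y] [x, z, y] := by
  simp only [Ok, and_true] at h1 h2
  by_cases hc : ∃ w ∈ A, x < w ∧ w < z
  · obtain ⟨w, hw, hxw, hwz⟩ := hc
    obtain ⟨z', hz', f1, f2, f3, f4, f5⟩ := same2 hw hxw hwz h2.1 h1.1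
    refine same3 ⟨f1, rfl⟩ ⟨f3, rfl⟩ ⟨rfl, rfl⟩ ⟨rfl, rfl⟩ ⟨f2, rfl⟩ ⟨by rw [f5], by rw [f5]⟩ rfl ?_
    rcases hx : dout A x with _ | x'
    · exact CK.refl _
    have hx' := dout_lt hx
    have hxB : x ∈ dset (dset A z) x := dset_mem_self _ _
    rcases hy : dout (dset (dset A z) x) y with _ | y'
    · exfalso
      rcases d_cases (dset (dset A z) x) y with ⟨hv, e1, e2⟩ | ⟨hv, e1, e2⟩ | ⟨t, hu, huv, hw, e1, e2⟩
      · rw [e1] at hy; cases hy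
      · have := hv x hxB; omega
      · rw [e1] at hy; cases hy
    have hy' := dout_lt hy
    have a1 : x ≤ y' := by
      rcases d_cases (dset (dset A z) x) y with ⟨hv, e1, e2⟩ | ⟨hv, e1, e2⟩ | ⟨t, hu, huv, hw, e1, e2⟩
      · rw [e1] at hy; cases hy; omega
      · rw [e1] at hy; cases hy
      · rw [e1] at hy; cases hy; have := hw x hxB; omega
    have a2 : y' < z' := by
      rcases d_cases A z with ⟨hv, e1, e2⟩ | ⟨hv, e1, e2⟩ | ⟨t, ht, htz, htw, e1, e2⟩
      · rw [e1] at f1; cases f1; omega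
      · rw [e1] at f1; cases f1
      · rw [e1] at f1; cases f1
        by_contra hcon
        have hyA : y ∉ A := fun h => by have := htw y h; omega
        have hsub : ∀ s ∈ dset (dset A z) x, s = x ∨ s ∈ dset A z := by
          intro s hs
          rcases d_cases (dset A z) x with ⟨hv, g1, g2⟩ | ⟨hv, g1, g2⟩ | ⟨r, hr, hrx, hrw, g1, g2⟩ <;>
          · rw [g2] at hs
            try simp only [Finset.mem_insert, Finset.mem_erase] at hs
            tauto
        replace hsub : ∀ s ∈ dset (dset A z) x, s = x ∨ s ∈ insert z (A.erase z') := by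
          intro s hs; rw [← e2]; exact hsub s hs
        rcases d_cases (dset (dset A z) x) y with ⟨hv, g1, g2⟩ | ⟨hv, g1, g2⟩ | ⟨r, hr, hrx, hrw, g1, g2⟩
        · have := hsub y hv
          simp only [Finset.mem_insert, Finset.mem_erase] at this
          rcases this with h | h | h
          · omega
          · omega
          · exact hyA h.2
        · rw [g1] at hy; cases hy
        · rw [g1] at hy; cases hy
          have := hsub y' hr
          simp only [Finset.mem_insert, Finset.mem_erase] at this
          rcases this with h | h | h
          · omega
          · omega
          · have := htw y' h.2; omega
    exact (CKt.k2 x' y' z' (by omega) a2).ck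
  · have hno : ∀ w ∈ A, w ≤ x ∨ z ≤ w := by
      intro w hw; by_contra hcon; exact hc ⟨w, hw, by omega, by omega⟩
    have hzA : z ∉ A := fun h => by have := hno _ (h1.1 h); omega
    have hno' : ∀ w ∈ A, w ≤ x ∨ z < w := by
      intro w hw
      rcases hno w hw with h | h
      · exact Or.inl h
      · right; rcases h.lt_or_eq with h | h
        · exact h
        · exact absurd (h ▸ hw) hzA
    by_cases hx : x ∈ A
    · have hx1 := h2.1 hx
      refine same3 (d_pass hx (by omega) hno') (d_pass (u := x - 1) ?_ (by omega) ?_)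
        (d_pass (u := x) ?_ (by omega) ?_) (d_mem hx) (d_pass hx (by omega) hno')
        (d_pass (u := x - 1) ?_ (by omega) ?_) ?_ (CKt.br (x - 1) x (by omega)).ck.symm
      · simp only [Finset.mem_insert, Finset.mem_erase]; right; exact ⟨by omega, hx1⟩
      · intro w; simp only [Finset.mem_insert, Finset.mem_erase]
        rintro (h | h)
        · omega
        · have := hno' w h.2; omega
      · simp
      · intro w; simp only [Finset.mem_insert, Finset.mem_erase]
        rintro (h | ⟨_, h | h⟩)
        · omega
        · omega
        · have := hno' w h.2; omega
      · simp only [Finset.mem_insert, Finset.mem_erase]; right; exact ⟨by omega, hx1⟩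
      · intro w; simp only [Finset.mem_insert, Finset.mem_erase]
        rintro (h | h)
        · omega
        · have := hno' w h.2; omega
      · ext w; simp only [Finset.mem_insert, Finset.mem_erase]
        grind
    · rcases d_cases A x with ⟨hv, e1, e2⟩ | ⟨hv, e1, e2⟩ | ⟨p, hp, hpx, hpw, e1, e2⟩
      · exact absurd hv hx
      · refine same3 (d_join (fun u hu => ?_)) (d_join ?_)
          (d_pass (u := x) ?_ (by omega) ?_) ⟨e1, e2⟩ (d_pass (u := x) ?_ (by omega) ?_)
          (d_join ?_) ?_ (CK.refl _)
        · have := hno' u hu; have := hv u hu; omega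
        · intro w; simp only [Finset.mem_insert]
          rintro (h | h)
          · omega
          · exact hv w h
        · simp
        · intro w; simp only [Finset.mem_insert]
          rintro (h | h | h)
          · omega
          · omega
          · have := hno' w h; omega
        · simp
        · intro w; simp only [Finset.mem_insert]
          rintro (h | h)
          · omega
          · have := hno' w h; omega
        · intro w; simp only [Finset.mem_insert, Finset.mem_erase]
          rintro (h | ⟨h, h' | h'⟩)
          · omega
          · omega
          · have := hno' w h'; have := hv w h'; omega
        · ext w; simp only [Finset.mem_insert, Finset.mem_erase]
          grind
      · have hno2 : ∀ w ∈ A, w ≤ p ∨ z < w := by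
          intro w hw; have := hno' w hw; have := hpw w hw; omega
        have hz1 := d_pass hp (by omega) hno2
        rcases d_cases (insert z (A.erase p)) x with ⟨hv, g1, g2⟩ | ⟨hv, g1, g2⟩ | ⟨q, hq, hqx, hqw, g1, g2⟩
        · simp only [Finset.mem_insert, Finset.mem_erase] at hv
          rcases hv with h | h
          · omega
          · exact absurd h.2 hx
        · refine same3 hz1 ⟨g1, g2⟩
            (d_pass (u := x) ?_ (by omega) ?_) ⟨e1, e2⟩ (d_pass (u := x) ?_ (by omega) ?_)
            (d_join ?_) ?_ (CK.refl _)
          · simp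
          · intro w; simp only [Finset.mem_insert, Finset.mem_erase]
            rintro (h | h | h)
            · omega
            · omega
            · have := hno' w h.2; omega
          · simp
          · intro w; simp only [Finset.mem_insert, Finset.mem_erase]
            rintro (h | h)
            · omega
            · have := hno' w h.2; omega
          · intro w; simp only [Finset.mem_insert, Finset.mem_erase]
            rintro (h | ⟨h, h' | h'⟩)
            · omega
            · omega
            · have := hno' w h'.2
              have := hv w (by simp [h'])
              omega
          · ext w; simp only [Finset.mem_insert, Finset.mem_erase]
            grind
        · have hq' : q ∈ A ∧ q ≠ p := by
            simp only [Finset.mem_insert, Finset.mem_erase] at hq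
            rcases hq with h | h
            · omega
            · exact ⟨h.2, h.1⟩
          have hqp : q < p := by have := hno2 q hq'.1; have := hq'.2; omega
          have hqw' : ∀ w ∈ A, w ≠ p → w ≤ q ∨ z < w := by
            intro w hw hwp
            have := hqw w (by simp [hw, hwp])
            have := hno' w hw; omega
          refine same3 hz1 ⟨g1, g2⟩
            (d_pass (u := x) ?_ (by omega) ?_) ⟨e1, e2⟩ (d_pass (u := x) ?_ (by omega) ?_)
            (d_pass (u := q) ?_ (by omega) ?_) ?_ (CKt.k1 q p x hqp hpx).ck
          · simp
          · intro w; simp only [Finset.mem_insert, Finset.mem_erase]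
            rintro (h | ⟨_, h | h⟩)
            · omega
            · omega
            · have := hno' w h.2; omega
          · simp
          · intro w; simp only [Finset.mem_insert, Finset.mem_erase]
            rintro (h | h)
            · omega
            · have := hno' w h.2; omega
          · simp [hq']; omega
          · intro w; simp only [Finset.mem_insert, Finset.mem_erase]
            rintro (h | ⟨h, h' | h'⟩)
            · omega
            · omega
            · have := hqw' w h'.2 h'.1
              omega
          · ext w; simp only [Finset.mem_insert, Finset.mem_erase]
            grind

theorem row_br {A : Finset ℤ} {a b : ℤ} (hb : b = a + 1)
    (h1 : Ok A [a, b, a]) (h2 : Ok A [b, a, b]) : Same A [a, b, a] [b, a, b] := by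
  simp only [Ok, and_true] at h1 h2
  by_cases hbA : b ∈ A
  · have haA : a ∈ A := by have := h2.1 hbA; rwa [show b - 1 = a by omega] at this
    refine same3 (d_mem haA) (d_mem hbA) (d_mem haA) (d_mem hbA) (d_mem haA) (d_mem hbA) rfl ?_
    exact (CKt.br (a - 1) (b - 1) (by omega)).ck
  · by_cases haA : a ∈ A
    · have ha1 := h1.1 haA
      have hno : ∀ w ∈ A, w ≤ a ∨ b < w := by
        intro w hw
        have : w ≠ b := fun h => hbA (h ▸ hw)
        omega
      refine same3 (d_mem haA) (d_pass haA (by omega) hno) (d_pass (u := a - 1) ?_ (by omega) ?_)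
        (d_pass haA (by omega) hno) (d_pass (u := a - 1) ?_ (by omega) ?_) (d_mem ?_) ?_
        (?_ : CK [a - 1, a, a - 1] [a, a - 1, b - 1])
      · simp only [Finset.mem_insert, Finset.mem_erase]; right; exact ⟨by omega, ha1⟩
      · intro w; simp only [Finset.mem_insert, Finset.mem_erase]
        rintro (h | h)
        · omega
        · have := hno w h.2; omega
      · simp only [Finset.mem_insert, Finset.mem_erase]; right; exact ⟨by omega, ha1⟩
      · intro w; simp only [Finset.mem_insert, Finset.mem_erase]
        rintro (h | h)
        · omega
        · have := hno w h.2; omega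
      · simp only [Finset.mem_insert, Finset.mem_erase]; right; exact ⟨by omega, by simp⟩
      · rfl
      · have : b - 1 = a := by omega
        rw [this]
        exact (CKt.br (a - 1) a (by omega)).ck
    · have hno : ∀ w ∈ A, w < a ∨ b < w := by
        intro w hw
        have : w ≠ b := fun h => hbA (h ▸ hw)
        have : w ≠ a := fun h => haA (h ▸ hw)
        omega
      have hba : b - 1 = a := by omega
      rcases d_cases A a with ⟨hv, e1, e2⟩ | ⟨hv, e1, e2⟩ | ⟨p, hp, hpx, hpw, e1, e2⟩
      · exact absurd hv haA
      · refine same3 ⟨e1, e2⟩ (d_pass (u := a) ?_ (by omega) ?_) (d_join ?_)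
          (d_join ?_) (d_join ?_) (d_mem ?_) ?_ ?_
        · simp
        · intro w; simp only [Finset.mem_insert]
          rintro (h | h)
          · omega
          · have := hno w h; omega
        · intro w; simp only [Finset.mem_insert, Finset.mem_erase]
          rintro (h | ⟨h, h' | h'⟩)
          · omega
          · omega
          · exact hv w h'
        · intro w h; have := hv w h; have := hno w h; omega
        · intro w; simp only [Finset.mem_insert]
          rintro (h | h)
          · omega
          · exact hv w h
        · simp
        · ext w; simp only [Finset.mem_insert, Finset.mem_erase]
          grind
        · simp [hba]; exact CK.refl _
      · have hno2 : ∀ w ∈ A, w ≤ p ∨ b < w := by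
          intro w hw; have := hno w hw; have := hpw w hw; omega
        have hz1 := d_pass hp (by omega) hno2
        rcases d_cases (insert b (A.erase p)) a with ⟨hv, g1, g2⟩ | ⟨hv, g1, g2⟩ | ⟨q, hq, hqx, hqw, g1, g2⟩
        · simp only [Finset.mem_insert, Finset.mem_erase] at hv
          rcases hv with h | h
          · omega
          · exact absurd h.2 haA
        · refine same3 ⟨e1, e2⟩ (d_pass (u := a) ?_ (by omega) ?_) (d_join ?_)
            hz1 ⟨g1, g2⟩ (d_mem ?_) ?_ ?_
          · simp
          · intro w; simp only [Finset.mem_insert, Finset.mem_erase]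
            rintro (h | h)
            · omega
            · have := hno w h.2; omega
          · intro w; simp only [Finset.mem_insert, Finset.mem_erase]
            rintro (h | ⟨h, h' | h'⟩)
            · omega
            · omega
            · exact hv w (by simp [h'])
          · simp
          · ext w; simp only [Finset.mem_insert, Finset.mem_erase]
            grind
          · simp [hba]; exact CK.refl _
        · have hq' : q ∈ A ∧ q ≠ p := by
            simp only [Finset.mem_insert, Finset.mem_erase] at hq
            rcases hq with h | h
            · omega
            · exact ⟨h.2, h.1⟩
          have hqp : q < p := by have := hno2 q hq'.1; have := hq'.2; omega
          refine same3 ⟨e1, e2⟩ (d_pass (u := a) ?_ (by omega) ?_) (d_pass (u := q) ?_ (by omega) ?_)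
            hz1 ⟨g1, g2⟩ (d_mem ?_) ?_ ?_
          · simp
          · intro w; simp only [Finset.mem_insert, Finset.mem_erase]
            rintro (h | h)
            · omega
            · have := hno w h.2; omega
          · simp [hq']; omega
          · intro w; simp only [Finset.mem_insert, Finset.mem_erase]
            rintro (h | ⟨h, h' | h'⟩)
            · omega
            · omega
            · exact hqw w (by simp [h'])
          · simp only [Finset.mem_insert, Finset.mem_erase]; right; exact ⟨by omega, by simp⟩
          · ext w; simp only [Finset.mem_insert, Finset.mem_erase]
            grind
          · simp only [hba]; exact (CKt.k1 q p a hqp hpx).ck.symm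

theorem row_t {A : Finset ℤ} {l m : List ℤ} (h : CKt l m) (h1 : Ok A l) (h2 : Ok A m) :
    Same A l m := by
  cases h with
  | k1 x y z hx hy => exact row_k1 hx hy h1 h2
  | k2 x y z hx hy => exact row_k2 hx hy h1 h2
  | br a b hb => exact row_br hb h1 h2

theorem row_s {ρ σ : List ℤ} (h : CKs ρ σ) (hg : Good ρ) : D1 ρ = D1 σ ∧ CK (em ρ) (em σ) := by
  have hg' : Good σ := hg.ck (Relation.EqvGen.rel _ _ h)
  obtain ⟨p, q, l, m, h, rfl, rfl⟩ := h
  have o1 := ((Ok_app _ _ _).1 ((Ok_app _ _ _).1 hg.ok).1).2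
  have o2 := ((Ok_app _ _ _).1 ((Ok_app _ _ _).1 hg'.ok).1).2
  obtain ⟨f1, f2⟩ := row_t h o1 o2
  refine ⟨?_, ?_⟩
  · simp only [D1, fin_app, f1]
  · simp only [em, out_app, fin_app, f1]
    exact f2.app _ _

theorem row {ρ σ : List ℤ} (h : CK ρ σ) : Good ρ → D1 ρ = D1 σ ∧ CK (em ρ) (em σ) := by
  induction h with
  | rel x y h => exact row_s h
  | refl x => intro _; exact ⟨rfl, CK.refl _⟩
  | symm x y h ih =>
    intro hg
    have := ih (hg.ck (CK.symm h))
    exact ⟨this.1.symm, this.2.symm⟩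
  | trans x y z h1 h2 ih1 ih2 =>
    intro hg
    have a := ih1 hg
    have b := ih2 (hg.ck h1)
    exact ⟨a.1.trans b.1, a.2.trans b.2⟩

end EG

namespace EG

/-! ## Cardinalities -/

theorem card_dset (A : Finset ℤ) (v : ℤ) :
    (dset A v).card = A.card + (if dout A v = none then 1 else 0) := by
  rcases d_cases A v with ⟨hv, e1, e2⟩ | ⟨hv, e1, e2⟩ | ⟨u, hu, huv, hw, e1, e2⟩
  · rw [e1, e2]; simp
  · rw [e1, e2, Finset.card_insert_of_notMem]
    · simp
    · intro h; have := hv v h; omega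
  · rw [e1, e2, Finset.card_insert_of_notMem, Finset.card_erase_of_mem hu]
    · have : 0 < A.card := Finset.card_pos.2 ⟨u, hu⟩
      simp; omega
    · intro h; have := hw v (Finset.mem_of_mem_erase h); omega

theorem card_fin (ρ : List ℤ) : ∀ A, A.card + ρ.length = (fin A ρ).card + (out A ρ).length := by
  induction ρ with
  | nil => intro A; simp [fin, out]
  | cons v ρ ih =>
    intro A
    have h1 := ih (dset A v)
    have h2 := card_dset A v
    simp only [fin, out, length_append, length_cons]
    rcases h : dout A v with _ | u
    · simp [h] at h2 ⊢; omega
    · simp [h] at h2 ⊢; omega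

theorem card_fin_mono (ρ : List ℤ) : ∀ A, A.card ≤ (fin A ρ).card := by
  induction ρ with
  | nil => intro A; exact le_refl _
  | cons v ρ ih =>
    intro A
    have := card_dset A v
    exact le_trans (by omega) (ih (dset A v))

theorem em_len (ρ : List ℤ) (h : ρ ≠ []) : (em ρ).length < ρ.length := by
  have h1 := card_fin ρ ∅
  have h2 : 0 < (fin ∅ ρ).card := by
    cases ρ with
    | nil => exact absurd rfl h
    | cons v ρ =>
      have h3 := card_fin_mono ρ (dset ∅ v)
      have h4 : 0 < (dset ∅ v).card := Finset.card_pos.2 ⟨v, dset_mem_self _ _⟩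
      exact lt_of_lt_of_le h4 h3
  simp only [Finset.card_empty] at h1
  show (out ∅ ρ).length < _
  omega

theorem em_nil : em [] = [] := rfl
theorem D1_nil : D1 [] = ∅ := rfl

theorem fin_dec (L : List ℤ) : ∀ A : Finset ℤ, L.Pairwise (· > ·) → (∀ l ∈ L, ∀ a ∈ A, l < a) →
    fin A L = A ∪ L.toFinset := by
  induction L with
  | nil => intro A _ _; simp [fin]
  | cons l L ih =>
    intro A hp hA
    rw [List.pairwise_cons] at hp
    have hj := d_join (A := A) (v := l) (fun u hu => hA l (by simp) u hu)
    rw [fin, hj.2, ih _ hp.2]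
    · ext a; simp
    · intro l' hl' a ha
      rcases Finset.mem_insert.1 ha with rfl | h
      · exact hp.1 l' hl'
      · exact hA l' (by simp [hl']) a h

theorem D1_dec {L : List ℤ} (h : L.Pairwise (· > ·)) : D1 L = L.toFinset := by
  rw [D1, fin_dec L ∅ h (by simp)]; simp

theorem mir_dec {L : List ℤ} (h : L.Pairwise (· > ·)) : (mir L).Pairwise (· > ·) := by
  rw [mir, List.pairwise_reverse, List.pairwise_map]
  exact h.imp (fun h => by omega)

def G (ρ : List ℤ) : Finset ℤ := D1 (mir ρ)

theorem G_ck {ρ σ : List ℤ} (h : CK ρ σ) (hg : Good ρ) : G ρ = G σ := (row h.mir hg.mir).1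

theorem card_dec {p L : List ℤ} (h : L.Pairwise (· > ·)) : L.length ≤ (G (p ++ L)).card := by
  rw [G, mir_app, D1, fin_app]
  refine le_trans ?_ (card_fin_mono _ _)
  rw [show fin ∅ (mir L) = D1 (mir L) from rfl, D1_dec (mir_dec h)]
  rw [List.toFinset_card_of_nodup ((mir_dec h).imp (fun h => by omega))]
  simp [mir]

theorem desc_len (A : Finset ℤ) : (desc A).length = A.card := by simp [desc]

theorem card_le_G {ρ : List ℤ} (h : Good ρ) : (D1 ρ).card ≤ (G ρ).card := by
  rw [G_ck (ck_em ρ h) h, ← desc_len]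
  exact card_dec (desc_pw _)

theorem card_G {ρ : List ℤ} (h : Good ρ) : (G ρ).card = (D1 ρ).card := by
  apply le_antisymm _ (card_le_G h)
  have := card_le_G h.mir
  rwa [G, mir_mir] at this

theorem card_dec' {p L : List ℤ} (hg : Good (p ++ L)) (h : L.Pairwise (· > ·)) :
    L.length ≤ (D1 (p ++ L)).card := by
  rw [← card_G hg]; exact card_dec h

/-! ## The nesting relation -/

def Rel3 (A0 A A' : Finset ℤ) : Prop :=
  A0 ⊆ A ∧ (A' = A ∨ ∃ r, r ∉ A ∧ A' = insert r A ∧ ∀ s ∈ A, s ∉ A0 → s < r)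

theorem dset_sub {A0 A : Finset ℤ} (h : A0 ⊆ A) (v : ℤ) : dset A0 v ⊆ dset A v := by
  intro s hs
  rcases d_cases A v with ⟨hv, e1, e2⟩ | ⟨hv, e1, e2⟩ | ⟨u, hu, huv, hw, e1, e2⟩ <;>
  rcases d_cases A0 v with ⟨hv', f1, f2⟩ | ⟨hv', f1, f2⟩ | ⟨u', hu', huv', hw', f1, f2⟩ <;>
  rw [f2] at hs <;> rw [e2] <;> (try simp only [Finset.mem_insert, Finset.mem_erase] at hs ⊢)
  · exact h hs
  · rcases hs with rfl | hs
    · exact hv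
    · exact h hs
  · rcases hs with rfl | hs
    · exact hv
    · exact h hs.2
  · exact Or.inr (h hs)
  · rcases hs with rfl | hs
    · exact Or.inl rfl
    · exact Or.inr (h hs)
  · rcases hs with rfl | hs
    · exact Or.inl rfl
    · exact Or.inr (h hs.2)
  · have := hw v (h hv'); omega
  · rcases hs with rfl | hs
    · exact Or.inl rfl
    · refine Or.inr ⟨?_, h hs⟩
      have := hv' s hs; omega
  · rcases hs with rfl | hs
    · exact Or.inl rfl
    · refine Or.inr ⟨?_, h hs.2⟩
      rintro rfl
      have := hw' s hs.2
      have := hw u' (h hu')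
      have := hs.1
      omega

theorem rel_step {A0 A A' : Finset ℤ} {v : ℤ} (h : Rel3 A0 A A') (hg : v ∈ A' → v - 1 ∈ A') :
    Rel3 (dset A0 v) (dset A v) (dset A' v) := by
  obtain ⟨hs, h⟩ := h
  refine ⟨dset_sub hs v, ?_⟩
  rcases h with rfl | ⟨r, hr, rfl, hlt⟩
  · exact Or.inl rfl
  -- elements of A missing from the new A0 are old missing ones, or the predecessor
  have miss : ∀ s ∈ A, s ∉ dset A0 v → s < r ∨ (s ∈ A0 ∧ s < v ∧ ∀ w ∈ A0, w ≤ s ∨ v < w) := by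
    intro s hsA hn
    by_cases h0 : s ∈ A0
    · right
      rcases d_cases A0 v with ⟨hv', f1, f2⟩ | ⟨hv', f1, f2⟩ | ⟨u', hu', huv', hw', f1, f2⟩ <;>
        rw [f2] at hn
      · exact absurd h0 hn
      · exact absurd (by simp [h0]) hn
      · have : s = u' := by
          by_contra hc; exact hn (by simp [h0, hc])
        subst this
        exact ⟨h0, huv', hw'⟩
    · exact Or.inl (hlt s hsA h0)
  by_cases hvA : v ∈ A
  · right
    rw [(d_mem hvA).2, (d_mem (A := insert r A) (by simp [hvA])).2]
    refine ⟨r, hr, rfl, ?_⟩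
    intro s hsA hn
    rcases miss s hsA hn with h | ⟨h1, h2, h3⟩
    · exact h
    · have hv0 : v ∉ A0 := by
        intro hv0
        rw [(d_mem hv0).2] at hn
        exact hn h1
      have := hlt v hvA hv0
      omega
  by_cases hvr : v = r
  · subst hvr
    have hp := hg (by simp)
    have hp' : v - 1 ∈ A := by
      rcases Finset.mem_insert.1 hp with h | h
      · omega
      · exact h
    right
    have e := d_pass (A := A) (v := v) (u := v - 1) hp' (by omega) (fun w hw => by
      have : w ≠ v := fun h => hr (h ▸ hw)
      omega)
    rw [(d_mem (A := insert v A) (by simp)).2, e.2]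
    refine ⟨v - 1, ?_, ?_, ?_⟩
    · simp
    · ext a; simp only [Finset.mem_insert, Finset.mem_erase]; grind
    · intro s hs1 hn
      have hsv : s ≠ v := fun h => hn (h ▸ dset_mem_self _ _)
      simp only [Finset.mem_insert, Finset.mem_erase] at hs1
      rcases hs1 with h | h
      · exact absurd h hsv
      · have h1 := h.1
        rcases miss s h.2 hn with h | ⟨_, h, _⟩ <;> omega
  · rcases d_cases A v with ⟨hv, e1, e2⟩ | ⟨hv, e1, e2⟩ | ⟨u, hu, huv, hw, e1, e2⟩
    · exact absurd hv hvA
    · -- A joins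
      by_cases hrv : r < v
      · left
        rw [e2, (d_pass (A := insert r A) (u := r) (by simp) hrv (by
          intro w hw
          rcases Finset.mem_insert.1 hw with h | h
          · omega
          · exact Or.inr (hv w h))).2]
        ext a; simp only [Finset.mem_insert, Finset.mem_erase]; grind
      · right
        rw [e2, (d_join (A := insert r A) (v := v) (by
          intro w hw
          rcases Finset.mem_insert.1 hw with h | h
          · omega
          · exact hv w h)).2]
        refine ⟨r, ?_, ?_, ?_⟩
        · simp [hr]; omega
        · ext a; simp only [Finset.mem_insert]; grind
        · intro s hs1 hn
          have hsv : s ≠ v := fun h => hn (h ▸ dset_mem_self _ _)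
          simp only [Finset.mem_insert] at hs1
          rcases hs1 with h | h
          · exact absurd h hsv
          · rcases miss s h hn with h1 | ⟨_, h1, _⟩
            · exact h1
            · have := hv s h; omega
    · right
      by_cases hrv : u < r ∧ r < v
      · have e' := d_pass (A := insert r A) (v := v) (u := r) (by simp) hrv.2 (by
          intro w hw'
          rcases Finset.mem_insert.1 hw' with h | h
          · omega
          · have := hw w h; omega)
        rw [e2, e'.2]
        refine ⟨u, ?_, ?_, ?_⟩
        · simp; omega
        · ext a; simp only [Finset.mem_insert, Finset.mem_erase]; grind
        · intro s hs1 hn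
          have hsv : s ≠ v := fun h => hn (h ▸ dset_mem_self _ _)
          simp only [Finset.mem_insert, Finset.mem_erase] at hs1
          rcases hs1 with h | h
          · exact absurd h hsv
          · have := hw s h.2
            have := h.1
            rcases miss s h.2 hn with h1 | ⟨_, h1, _⟩ <;> omega
      · have hru : r ≠ u := fun h => hr (h ▸ hu)
        have e' := d_pass (A := insert r A) (v := v) (u := u) (by simp [hu]) huv (by
          intro w hw'
          rcases Finset.mem_insert.1 hw' with h | h
          · omega
          · exact hw w h)
        rw [e2, e'.2]
        refine ⟨r, ?_, ?_, ?_⟩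
        · simp [hr]; omega
        · ext a; simp only [Finset.mem_insert, Finset.mem_erase]; grind
        · intro s hs1 hn
          have hsv : s ≠ v := fun h => hn (h ▸ dset_mem_self _ _)
          simp only [Finset.mem_insert, Finset.mem_erase] at hs1
          rcases hs1 with h | h
          · exact absurd h hsv
          · rcases miss s h.2 hn with h1 | ⟨h0, h1, h2⟩
            · exact h1
            · have := hw s h.2
              have hu0 : u ∉ A0 := fun h' => by have := h2 u h'; have := h.1; omega
              have := hlt u hu hu0
              omega

theorem rel_fin (t : List ℤ) : ∀ {A0 A A' : Finset ℤ}, Rel3 A0 A A' → Ok A' t →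
    Rel3 (fin A0 t) (fin A t) (fin A' t) := by
  induction t with
  | nil => intro _ _ _ h _; exact h
  | cons v t ih => intro A0 A A' h hok; exact ih (rel_step h hok.1) hok.2

theorem rel_init (y : ℤ) (L : List ℤ) (h : L.Pairwise (· > ·)) : Rel3 ∅ (fin ∅ L) (fin {y} L) := by
  refine ⟨by simp, ?_⟩
  cases L with
  | nil => right; exact ⟨y, by simp [fin], by simp [fin], by simp [fin]⟩
  | cons l L =>
    have hp := List.pairwise_cons.1 h
    by_cases hy : y ≤ l
    · left
      have h1 : dset {y} l = {l} := by
        rcases hy.lt_or_eq with h | rfl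
        · rw [(d_pass (A := {y}) (u := y) (by simp) h (by simp)).2]; simp
        · rw [(d_mem (by simp)).2]
      have h2 : dset ∅ l = {l} := by rw [(d_join (by simp)).2]; simp
      rw [fin, fin, h1, h2]
    · right
      rw [fin_dec _ _ h (by simp), fin_dec _ _ h (by
        intro l' hl' a ha
        rw [Finset.mem_singleton] at ha
        rcases List.mem_cons.1 hl' with rfl | h'
        · omega
        · have := hp.1 l' h'; omega)]
      have key : ∀ s ∈ l :: L, s < y := by
        intro l' hl'
        rcases List.mem_cons.1 hl' with rfl | h'
        · omega
        · have := hp.1 l' h'; omega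
      refine ⟨y, ?_, ?_, ?_⟩
      · intro hy; have := key y (by simpa using hy); omega
      · ext a; simp; tauto
      · intro s hs _; exact key s (by simpa using hs)

theorem em_good {ρ : List ℤ} (h : Good ρ) : Good (em ρ) := (h.ck (ck_em ρ h)).left

theorem G_step {ρ : List ℤ} {x : ℤ} (h : Good (ρ ++ [x])) :
    G (em ρ) ⊆ G ρ ∧ ((dout (D1 ρ) x ≠ none ∧ G (ρ ++ [x]) = G ρ) ∨
      (dout (D1 ρ) x = none ∧ ∃ r, r ∉ G ρ ∧ G (ρ ++ [x]) = insert r (G ρ) ∧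
        ∀ s ∈ G ρ, s ∉ G (em ρ) → s < r)) := by
  have hc := ck_em ρ h.left
  have hcx := hc.appr [x]
  have hg2 : Good (em ρ ++ desc (D1 ρ) ++ [x]) := h.ck hcx
  have e1 : G ρ = fin (fin ∅ (mir (desc (D1 ρ)))) (mir (em ρ)) := by
    rw [G_ck hc h.left, G, mir_app, D1, fin_app]
  have e2 : G (ρ ++ [x]) = fin (fin {-x} (mir (desc (D1 ρ)))) (mir (em ρ)) := by
    rw [G_ck hcx h, G, mir_app, mir_app, D1, fin_app, fin_app]
    have : fin ∅ (mir [x]) = {-x} := by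
      show dset ∅ (-x) = _
      rw [(d_join (by simp)).2]; simp
    rw [this]
  have hok : Ok (fin {-x} (mir (desc (D1 ρ)))) (mir (em ρ)) := by
    have := hg2.mir.ok
    rw [mir_app, mir_app, Ok_app, Ok_app] at this
    have h3 : fin ∅ (mir [x]) = {-x} := by
      show dset ∅ (-x) = _
      rw [(d_join (by simp)).2]; simp
    rw [h3] at this
    exact this.2.2
  have := rel_fin _ (rel_init (-x) _ (mir_dec (desc_pw (D1 ρ)))) hok
  rw [← e1, ← e2] at this
  have c1 := card_G h
  have c2 := card_G h.left
  have c3 := card_dset (D1 ρ) x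
  rw [D1_snoc] at c1
  refine ⟨this.1, ?_⟩
  rcases this.2 with h1 | ⟨r, hr, h1, h2⟩
  · left
    refine ⟨?_, h1⟩
    intro h0
    rw [if_pos h0] at c3
    rw [h1] at c1
    omega
  · right
    refine ⟨?_, r, hr, h1, h2⟩
    by_contra h0
    rw [if_neg h0] at c3
    rw [h1, Finset.card_insert_of_notMem hr] at c1
    omega

theorem G_sub {ρ : List ℤ} (h : Good ρ) : G (em ρ) ⊆ G ρ := by
  have hc := ck_em ρ h
  rw [G_ck hc h, G, G, mir_app, D1, D1, fin_app]
  have : ∀ (t : List ℤ) (A0 A : Finset ℤ), A0 ⊆ A → fin A0 t ⊆ fin A t := by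
    intro t
    induction t with
    | nil => intro _ _ h; exact h
    | cons v t ih => intro A0 A h; exact ih _ _ (dset_sub h v)
  exact this _ _ _ (by simp)

end EG

namespace EG

def aw (ρ : List ℤ) (r : ℤ) : ℕ :=
  if h : ρ = [] then 0 else (if -r ∈ G ρ then 1 else 0) + aw (em ρ) r
termination_by ρ.length
decreasing_by exact em_len ρ h

theorem aw_nil (r : ℤ) : aw [] r = 0 := by rw [aw]; simp

theorem G_nil : G [] = ∅ := rfl

theorem aw_eq (ρ : List ℤ) (r : ℤ) : aw ρ r = (if -r ∈ G ρ then 1 else 0) + aw (em ρ) r := by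
  by_cases h : ρ = []
  · subst h; simp [em_nil, aw_nil, G_nil]
  · rw [aw, dif_neg h]

def lev (ρ : List ℤ) (x : ℤ) : ℕ :=
  if h : ρ = [] then 0 else
    match dout (D1 ρ) x with
    | none => 0
    | some y => lev (em ρ) y + 1
termination_by ρ.length
decreasing_by exact em_len ρ h

theorem lev_none {ρ : List ℤ} {x : ℤ} (h : dout (D1 ρ) x = none) : lev ρ x = 0 := by
  rw [lev]; split
  · rfl
  · rw [h]

theorem lev_some {ρ : List ℤ} {x y : ℤ} (h : dout (D1 ρ) x = some y) :
    lev ρ x = lev (em ρ) y + 1 := by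
  rw [lev]; split
  · rename_i h0; subst h0
    rw [D1_nil, (d_join (by simp)).1] at h; cases h
  · rw [h]

theorem len_ind {P : List ℤ → Prop} (h : ∀ ρ, (ρ ≠ [] → P (em ρ)) → P ρ) (ρ : List ℤ) : P ρ := by
  have : ∀ n (ρ : List ℤ), ρ.length ≤ n → P ρ := by
    intro n
    induction n with
    | zero =>
      intro ρ hl
      exact h ρ (fun h0 => absurd (List.length_eq_zero_iff.1 (by omega)) h0)
    | succ n ih =>
      intro ρ hl
      exact h ρ (fun h0 => ih _ (by have := em_len ρ h0; omega))
  exact this _ ρ le_rfl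

theorem aw_pos (ρ : List ℤ) : ∀ (r : ℤ), Good ρ → (0 < aw ρ r ↔ -r ∈ G ρ) := by
  induction ρ using len_ind with
  | h ρ ih =>
    intro r hg
    by_cases h0 : ρ = []
    · subst h0; simp [aw_nil, G_nil]
    rw [aw_eq]
    constructor
    · intro h
      by_contra hc
      rw [if_neg hc, Nat.zero_add, ih h0 r (em_good hg)] at h
      exact hc (G_sub hg h)
    · intro h; rw [if_pos h]; omega

theorem aw_ck (ρ : List ℤ) : ∀ σ, CK ρ σ → Good ρ → aw ρ = aw σ := by
  induction ρ using len_ind with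
  | h ρ ih =>
    intro σ h hg
    by_cases h0 : ρ = []
    · subst h0
      have := h.length
      rw [List.length_eq_zero_iff.1 this.symm]
    have hr := row h hg
    have := ih h0 _ hr.2 (em_good hg)
    funext r
    rw [aw_eq, aw_eq σ, this, G_ck h hg]

theorem lev_ck (ρ : List ℤ) : ∀ σ x, CK ρ σ → Good ρ → lev ρ x = lev σ x := by
  induction ρ using len_ind with
  | h ρ ih =>
    intro σ x h hg
    by_cases h0 : ρ = []
    · subst h0
      have := h.length
      rw [List.length_eq_zero_iff.1 this.symm]
    have hr := row h hg
    rcases hd : dout (D1 ρ) x with _ | y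
    · rw [lev_none hd, lev_none (hr.1 ▸ hd)]
    · have hd2 : dout (D1 σ) x = some y := hr.1 ▸ hd
      rw [lev_some hd, lev_some hd2, ih h0 _ _ hr.2 (em_good hg)]

theorem em_snoc_good {ρ : List ℤ} {x y : ℤ} (h : Good (ρ ++ [x])) (hd : dout (D1 ρ) x = some y) :
    Good (em ρ ++ [y]) := by
  have := em_good h
  rwa [em_snoc, hd] at this

/-- Rule (A). -/
theorem ruleA (ρ : List ℤ) : ∀ x, Good (ρ ++ [x]) → ∃ r : ℤ,
    (∀ r', aw (ρ ++ [x]) r' = aw ρ r' + if r' = r then 1 else 0) ∧ aw ρ r = lev ρ x ∧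
    ∀ r' < r, aw (ρ ++ [x]) r' ≠ lev ρ x + 1 := by
  induction ρ using len_ind with
  | h ρ ih =>
    intro x hg
    obtain ⟨hsub, ⟨hd, hG⟩ | ⟨hd, s, hs, hG, hlt⟩⟩ := G_step hg
    · obtain ⟨y, hy⟩ := Option.ne_none_iff_exists'.1 hd
      have h0 : ρ ≠ [] := by
        rintro rfl
        rw [D1_nil, (d_join (by simp)).1] at hy; cases hy
      have hg' := em_snoc_good hg hy
      have he : em (ρ ++ [x]) = em ρ ++ [y] := by rw [em_snoc, hy]; rfl
      obtain ⟨r, h1, h2, h3⟩ := ih h0 y hg'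
      have hr : -r ∈ G ρ := by
        rw [← hG]
        apply G_sub hg
        rw [← aw_pos _ _ (em_good hg), he, h1]
        simp
      refine ⟨r, ?_, ?_, ?_⟩
      · intro r'
        rw [aw_eq, aw_eq ρ, he, h1, hG]; omega
      · rw [aw_eq, if_pos hr, h2, lev_some hy]; omega
      · intro r' hr'
        have := h3 r' hr'
        rw [aw_eq, he, hG, lev_some hy]
        by_cases h : -r' ∈ G ρ
        · rw [if_pos h]; omega
        · have h4 : ¬ 0 < aw (em (ρ ++ [x])) r' := by
            rw [aw_pos _ _ (em_good hg)]
            intro h5; exact h (hG ▸ G_sub hg h5)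
          rw [he] at h4
          rw [if_neg h]; omega
    · have he : em (ρ ++ [x]) = em ρ := by rw [em_snoc, hd]; simp
      have h1 : ∀ r', aw (ρ ++ [x]) r' = aw ρ r' + if r' = -s then 1 else 0 := by
        intro r'
        rw [aw_eq, aw_eq ρ, he, hG]
        by_cases h : r' = -s
        · subst h; simp [hs]; omega
        · have : -r' ≠ s := by omega
          simp [h, this]
      have h2 : aw ρ (-s) = 0 := by
        have := aw_pos ρ (-s) hg.left
        rw [neg_neg] at this
        by_contra hc
        exact hs (this.1 (by omega))
      refine ⟨-s, h1, by rw [h2, lev_none hd], ?_⟩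
      intro r' hr' hc
      rw [lev_none hd, h1, if_neg (by omega)] at hc
      have a1 : -r' ∈ G ρ := (aw_pos ρ r' hg.left).1 (by omega)
      rw [aw_eq, if_pos a1] at hc
      have a2 : -r' ∉ G (em ρ) := by
        rw [← aw_pos _ _ (em_good hg.left)]; omega
      have := hlt _ a1 a2
      omega

theorem bump_gt {A : Finset ℤ} {v u : ℤ} (h : v < u) :
    ∃ y, dout (dset A v) u = some y ∧ v ≤ y := by
  have hm := dset_mem_self A v
  rcases d_cases (dset A v) u with ⟨hv, e1, e2⟩ | ⟨hv, e1, e2⟩ | ⟨t, hu, huv, hw, e1, e2⟩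
  · exact ⟨_, e1, by omega⟩
  · have := hv v hm; omega
  · exact ⟨_, e1, by have := hw v hm; omega⟩

theorem bump_lt {A : Finset ℤ} {v u y : ℤ} (h : u < v) (hy : dout (dset A v) u = some y) :
    ∃ v', dout A v = some v' ∧ y < v' := by
  have hyu := dout_lt hy
  rcases d_cases A v with ⟨hv, e1, e2⟩ | ⟨hv, e1, e2⟩ | ⟨t, ht, htv, hw, e1, e2⟩
  · exact ⟨_, e1, by omega⟩
  · exfalso
    rw [(d_join (A := dset A v) (v := u) (by
      rw [e2]; intro w hw
      rcases Finset.mem_insert.1 hw with rfl | h'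
      · exact h
      · have := hv w h'; omega)).1] at hy
    cases hy
  · refine ⟨t, e1, ?_⟩
    rcases d_cases (dset A v) u with ⟨hv, g1, g2⟩ | ⟨hv, g1, g2⟩ | ⟨s, hs, hsx, hsw, g1, g2⟩
    · rw [g1] at hy; cases hy
      rw [e2] at hv
      simp only [Finset.mem_insert, Finset.mem_erase] at hv
      rcases hv with h | h
      · omega
      · have := hw u h.2; omega
    · rw [g1] at hy; cases hy
    · rw [g1] at hy; cases hy
      rw [e2] at hs
      simp only [Finset.mem_insert, Finset.mem_erase] at hs
      rcases hs with h | h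
      · omega
      · have := hw _ h.2; omega

theorem lev_lt (ρ : List ℤ) : ∀ v u, v < u → lev ρ v < lev (ρ ++ [v]) u := by
  induction ρ using len_ind with
  | h ρ ih =>
    intro v u h
    obtain ⟨y, hy, hvy⟩ := bump_gt (A := D1 ρ) h
    rw [← D1_snoc] at hy
    rw [lev_some hy]
    rcases hv : dout (D1 ρ) v with _ | v'
    · rw [lev_none hv]; omega
    · have h0 : ρ ≠ [] := by
        rintro rfl
        rw [D1_nil, (d_join (by simp)).1] at hv; cases hv
      have := ih h0 v' y (by have := dout_lt hv; omega)
      rw [lev_some hv, em_snoc, hv]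
      simpa using this

theorem lev_ge (ρ : List ℤ) : ∀ v u, u < v → lev (ρ ++ [v]) u ≤ lev ρ v := by
  induction ρ using len_ind with
  | h ρ ih =>
    intro v u h
    rcases hu : dout (D1 (ρ ++ [v])) u with _ | y
    · rw [lev_none hu]; omega
    · rw [D1_snoc] at hu
      obtain ⟨v', hv, hyv⟩ := bump_lt h hu
      have h0 : ρ ≠ [] := by
        rintro rfl
        rw [D1_nil, (d_join (by simp)).1] at hv; cases hv
      have := ih h0 v' y hyv
      rw [← D1_snoc] at hu
      rw [lev_some hu, lev_some hv, em_snoc, hv]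
      simpa using this

/-! ## Injectivity -/

theorem step_inj {D E : Finset ℤ} {x y x' : ℤ} (gx : x ∈ D → x - 1 ∈ D) (gy : y ∈ E → y - 1 ∈ E)
    (h : dset D x = dset E y) (hx : dout D x = some x') (hy : dout E y = some x') :
    x = y ∧ D = E := by
  rcases d_cases D x with ⟨hv, e1, e2⟩ | ⟨hv, e1, e2⟩ | ⟨t, ht, htv, hw, e1, e2⟩ <;>
    rw [e1] at hx <;>
  rcases d_cases E y with ⟨kv, f1, f2⟩ | ⟨kv, f1, f2⟩ | ⟨s, hs, hsv, hsw, f1, f2⟩ <;>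
    rw [f1] at hy <;> rw [e2, f2] at h <;> simp only [Option.some.injEq, reduceCtorEq] at hx hy
  · exact ⟨by omega, h⟩
  · exfalso
    subst hx; subst hy
    have : x - 1 ∈ insert y (E.erase (x - 1)) := h ▸ gx hv
    simp at this; omega
  · exfalso
    subst hy; subst hx
    have : y - 1 ∈ insert x (D.erase (y - 1)) := h.symm ▸ gy kv
    simp at this; omega
  · subst t; subst s
    have a1 : x ∈ insert y (E.erase x') := by rw [← h]; simp
    have a2 : y ∈ insert x (D.erase x') := by rw [h]; simp
    simp only [Finset.mem_insert, Finset.mem_erase] at a1 a2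
    have hxy : x = y := by
      rcases a1 with h1 | h1
      · exact h1
      · rcases a2 with h2 | h2
        · exact h2.symm
        · have := hw y h2.2; have := hsw x h1.2; omega
    refine ⟨hxy, ?_⟩
    subst hxy
    ext a
    have := Finset.ext_iff.1 h a
    simp only [Finset.mem_insert, Finset.mem_erase] at this
    have n1 : x ∉ D := fun h => by have := hw x h; omega
    have n2 : x ∉ E := fun h => by have := hsw x h; omega
    grind

theorem join_inj {D E : Finset ℤ} {x y : ℤ} (hD : ∀ u ∈ D, x < u) (hE : ∀ u ∈ E, y < u)
    (h : insert x D = insert y E) : x = y ∧ D = E := by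
  have a1 : x ∈ insert y E := by rw [← h]; simp
  have a2 : y ∈ insert x D := by rw [h]; simp
  simp only [Finset.mem_insert] at a1 a2
  have hxy : x = y := by
    rcases a1 with h1 | h1
    · exact h1
    · rcases a2 with h2 | h2
      · exact h2.symm
      · have := hD y h2; have := hE x h1; omega
  refine ⟨hxy, ?_⟩
  subst hxy
  ext a
  have := Finset.ext_iff.1 h a
  simp only [Finset.mem_insert] at this
  have n1 : x ∉ D := fun h => by have := hD x h; omega
  have n2 : x ∉ E := fun h => by have := hE x h; omega
  grind

theorem ck_of_parts {ρ σ : List ℤ} (hρ : Good ρ) (hσ : Good σ) (h : CK (em ρ) (em σ))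
    (hD : D1 ρ = D1 σ) : CK ρ σ := by
  refine (ck_em ρ hρ).trans (CK.trans ?_ (ck_em σ hσ).symm)
  rw [hD]; exact h.appr _

theorem d_none {A : Finset ℤ} {v : ℤ} (h : dout A v = none) :
    (∀ u ∈ A, v < u) ∧ dset A v = insert v A := by
  rcases d_cases A v with ⟨hv, e1, e2⟩ | ⟨hv, e1, e2⟩ | ⟨t, ht, htv, hw, e1, e2⟩
  · rw [e1] at h; cases h
  · exact ⟨hv, e2⟩
  · rw [e1] at h; cases h

theorem snoc_inj (ρ : List ℤ) : ∀ σ x y, CK (ρ ++ [x]) (σ ++ [y]) → Good (ρ ++ [x]) →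
    lev ρ x = lev σ y → x = y ∧ CK ρ σ := by
  induction ρ using len_ind with
  | h ρ ih =>
    intro σ x y h hg hl
    have hg' := hg.ck h
    have hr := row h hg
    rw [D1_snoc, D1_snoc, em_snoc, em_snoc] at hr
    rcases hx : dout (D1 ρ) x with _ | x' <;> rcases hy : dout (D1 σ) y with _ | y'
    · rw [hx, hy] at hr
      have a := d_none hx
      have b := d_none hy
      rw [a.2, b.2] at hr
      obtain ⟨h1, h2⟩ := join_inj a.1 b.1 hr.1
      exact ⟨h1, ck_of_parts hg.left hg'.left (by simpa using hr.2) h2⟩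
    · rw [lev_none hx, lev_some hy] at hl; omega
    · rw [lev_some hx, lev_none hy] at hl; omega
    · rw [hx, hy] at hr
      have h0 : ρ ≠ [] := by
        rintro rfl
        rw [D1_nil, (d_join (by simp)).1] at hx; cases hx
      rw [lev_some hx, lev_some hy] at hl
      obtain ⟨rfl, h2⟩ := ih h0 (em σ) x' y' hr.2 (em_snoc_good hg hx) (by omega)
      obtain ⟨h3, h4⟩ := step_inj (good_pred' hg) (good_pred' hg') hr.1 hx hy
      exact ⟨h3, ck_of_parts hg.left hg'.left h2 h4⟩

/-! ## Surjectivity -/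

theorem last_join (B : Finset ℤ) (L : List ℤ) : ∀ x, (L ++ [x]).Pairwise (· > ·) →
    B.card < (fin B (L ++ [x])).card → dout (fin B L) x = none := by
  induction L using List.reverseRecOn with
  | nil =>
    intro x _ hc
    by_contra hn
    have := card_dset B x
    change ¬ dout B x = none at hn
    rw [if_neg hn] at this
    simp only [nil_append, fin] at hc
    omega
  | append_singleton L y ih =>
    intro x hp hc
    have hyx : x < y := (List.pairwise_append.1 hp).2.2 y (by simp) x (by simp)
    by_contra hn
    have h1 : (fin B (L ++ [y] ++ [x])).card = (fin B (L ++ [y])).card := by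
      rw [fin_app _ [x]]
      have := card_dset (fin B (L ++ [y])) x
      rw [if_neg hn] at this
      simpa [fin] using this
    have h2 := d_none (ih y (List.pairwise_append.1 hp).1 (by omega))
    apply hn
    have : fin B (L ++ [y]) = insert y (fin B L) := by rw [fin_app, ← h2.2]; rfl
    rw [this]
    refine (d_join ?_).1
    intro w hw
    rcases Finset.mem_insert.1 hw with h | h
    · omega
    · have := h2.1 w h; omega

/-- elements above everything inserted survive -/
theorem survive (L : List ℤ) : ∀ (X : Finset ℤ) (s : ℤ), s ∈ X → (∀ l ∈ L, l ≤ s) → s ∈ fin X L := by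
  induction L with
  | nil => intro X s h _; exact h
  | cons v L ih =>
    intro X s h hl
    refine ih _ s ?_ (fun l h' => hl l (by simp [h']))
    have hv := hl v (by simp)
    rcases d_cases X v with ⟨hv, e1, e2⟩ | ⟨hv, e1, e2⟩ | ⟨t, ht, htv, hw, e1, e2⟩ <;> rw [e2]
    · exact h
    · simp [h]
    · simp [h]; omega

theorem dec_mem_fin (L : List ℤ) : ∀ (X : Finset ℤ), L.Pairwise (· > ·) → ∀ s ∈ L, s ∈ fin X L := by
  induction L with
  | nil => intro X _ s h; simp at h
  | cons v L ih =>
    intro X hp s hs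
    rw [List.pairwise_cons] at hp
    rcases List.mem_cons.1 hs with rfl | h
    · exact survive L _ _ (dset_mem_self _ _) (fun l hl => le_of_lt (hp.1 l hl))
    · exact ih _ hp.2 s h

theorem no_desc (L : List ℤ) : ∀ (X : Finset ℤ) (b : ℤ), L.Pairwise (· > ·) → (∀ l ∈ L, l < b) →
    Ok X L → b - 1 ∈ X → (∀ s ∈ fin X L, s < b → s ∈ L) → False := by
  induction L with
  | nil => intro X b _ _ _ h1 h2; have := h2 (b - 1) h1 (by omega); simp at this
  | cons d L ih =>
    intro X b hp hb hok h1 h2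
    have hd := hb d (by simp)
    have hp' := List.pairwise_cons.1 hp
    by_cases hdb : d = b - 1
    · subst hdb
      refine ih X (b - 1) hp'.2 hp'.1 ?_ (hok.1 h1) ?_
      · have := hok.2; rwa [(d_mem h1).2] at this
      · intro s hs hlt
        have := h2 s (by rw [fin, (d_mem h1).2]; exact hs) (by omega)
        rcases List.mem_cons.1 this with h | h
        · omega
        · exact h
    · have := h2 (b - 1) (survive _ _ _ h1 (by
        intro l hl
        have := hb l hl
        omega)) (by omega)
      rcases List.mem_cons.1 this with h | h
      · omega
      · have := hp'.1 _ h; omega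

theorem out_dec (L : List ℤ) : ∀ (X : Finset ℤ) (b : ℤ), L.Pairwise (· > ·) → (∀ l ∈ L, l < b) →
    Ok X L → (∀ s ∈ fin X L, s < b → s ∈ L) → out X L = desc (X.filter (fun s => s < b)) := by
  induction L with
  | nil =>
    intro X b _ _ _ h
    have : X.filter (fun s => s < b) = ∅ := by
      rw [Finset.filter_eq_empty_iff]
      intro s hs hb; have := h s hs hb; simp at this
    rw [this]; simp [out, desc]
  | cons d L ih =>
    intro X b hp hb hok h
    have hd := hb d (by simp)
    have hp' := List.pairwise_cons.1 hp
    have hXd : ∀ s ∈ X, s < b → s ≤ d := by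
      intro s hs hsb
      by_contra hc
      have := h s (survive _ _ _ hs (by
        intro l hl
        rcases List.mem_cons.1 hl with h | h
        · omega
        · have := hp'.1 l h; omega)) hsb
      rcases List.mem_cons.1 this with h | h
      · omega
      · have := hp'.1 s h; omega
    have hd' : ∀ s ∈ fin (dset X d) L, s < d → s ∈ L := by
      intro s hs hlt
      rcases List.mem_cons.1 (h s hs (by omega)) with h | h
      · omega
      · exact h
    have hI := ih (dset X d) d hp'.2 hp'.1 hok.2 hd'
    rw [out, hI]
    rcases d_cases X d with ⟨hv, e1, e2⟩ | ⟨hv, e1, e2⟩ | ⟨t, ht, htv, hw, e1, e2⟩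
    · exfalso
      refine no_desc L X d hp'.2 hp'.1 ?_ (hok.1 hv) ?_
      · have := hok.2; rwa [e2] at this
      · rwa [e2] at hd'
    · rw [e1, e2]
      simp only [Option.toList_none, nil_append]
      congr 1
      ext a
      simp only [Finset.mem_filter, Finset.mem_insert]
      constructor
      · rintro ⟨h1 | h1, h2⟩
        · omega
        · have := hv a h1; omega
      · rintro ⟨h1, h2⟩
        have := hv a h1; have := hXd a h1 h2; omega
    · rw [e1, e2]
      symm
      apply desc_uniq
      · simp only [Option.toList_some, cons_append, nil_append, List.pairwise_cons]
        refine ⟨?_, desc_pw _⟩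
        intro a ha
        rw [mem_desc] at ha
        simp only [Finset.mem_filter, Finset.mem_insert, Finset.mem_erase] at ha
        rcases ha.1 with h | h
        · omega
        · have := hw a h.2; omega
      · intro a
        simp only [Option.toList_some, cons_append, nil_append, mem_cons, mem_desc,
          Finset.mem_filter, Finset.mem_insert, Finset.mem_erase]
        constructor
        · rintro (rfl | ⟨h1 | h1, h2⟩)
          · exact ⟨ht, by omega⟩
          · omega
          · exact ⟨h1.2, by omega⟩
        · rintro ⟨h1, h2⟩
          by_cases hat : a = t
          · exact Or.inl hat
          · right
            have := hw a h1; have := hXd a h1 h2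
            exact ⟨Or.inr ⟨hat, h1⟩, by omega⟩

theorem em_of_top {ρ : List ℤ} {D : Finset ℤ} (hg : Good (ρ ++ desc D))
    (h : D1 (ρ ++ desc D) = D) : CK (em (ρ ++ desc D)) ρ := by
  have h1 : em (ρ ++ desc D) = em ρ ++ out (D1 ρ) (desc D) := by rw [em, out_app]; rfl
  have h2 : fin (D1 ρ) (desc D) = D := by rw [D1, ← fin_app]; exact h
  have hok : Ok (D1 ρ) (desc D) := ((Ok_app _ _ _).1 hg.ok).2
  obtain ⟨b, hb⟩ : ∃ b : ℤ, ∀ s ∈ D ∪ D1 ρ, s < b := by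
    obtain ⟨b, hb⟩ := (D ∪ D1 ρ).exists_le
    exact ⟨b + 1, fun s hs => by have := hb s hs; omega⟩
  have h3 := out_dec (desc D) (D1 ρ) b (desc_pw D)
    (fun l hl => hb l (by rw [mem_desc] at hl; simp [hl])) hok
    (fun s hs _ => by rw [mem_desc]; rwa [h2] at hs)
  have h4 : (D1 ρ).filter (fun s => s < b) = D1 ρ := by
    rw [Finset.filter_eq_self]; intro s hs; exact hb s (by simp [hs])
  rw [h1, h3, h4]
  exact (ck_em ρ hg.left).symm

theorem good_succ {A : Finset ℤ} {v : ℤ} (h : Good (v :: desc A)) (hv : v ∈ A) : v + 1 ∈ A := by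
  have h1 := h.mir
  have h2 : mir (v :: desc A) = desc (A.image (fun x => -x)) ++ [-v] := by
    rw [show v :: desc A = [v] ++ desc A from rfl, mir_app]
    congr 1
    symm
    apply desc_uniq (mir_dec (desc_pw A))
    intro x
    rw [mem_mir, mem_desc, Finset.mem_image]
    constructor
    · intro h; exact ⟨-x, h, by simp⟩
    · rintro ⟨y, h, rfl⟩; simpa using h
  rw [h2] at h1
  have := good_pred h1 (Finset.mem_image.2 ⟨v, hv, rfl⟩)
  obtain ⟨y, hy, he⟩ := Finset.mem_image.1 this
  rwa [show v + 1 = y by omega]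

theorem exists_corner (c : ℕ) : ∀ τ, Good τ →
    (D1 (em^[c + 1] τ)).card < (D1 (em^[c] τ)).card →
    ∃ ρ x, CK τ (ρ ++ [x]) ∧ lev ρ x = c := by
  induction c with
  | zero =>
    intro τ hg hc
    simp only [zero_add, Function.iterate_one, Function.iterate_zero, id_eq] at hc
    have hck := ck_em τ hg
    rcases List.eq_nil_or_concat (desc (D1 τ)) with h0 | ⟨L, x, hL⟩
    · have := desc_len (D1 τ); rw [h0] at this; simp at this
      omega
    · simp only [concat_eq_append] at hL
      refine ⟨em τ ++ L, x, ?_, ?_⟩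
      · rw [append_assoc, ← hL]; exact hck
      · apply lev_none
        rw [D1, fin_app]
        apply last_join
        · rw [← hL]; exact desc_pw _
        · have := (row hck hg).1
          rw [hL] at this
          have h2 : D1 τ = fin (fin ∅ (em τ)) (L ++ [x]) := by rw [this, D1, fin_app]
          rw [← h2]; exact hc
  | succ c ih =>
    intro τ hg hc
    have hge := em_good hg
    obtain ⟨ρ', x', hck', hl'⟩ := ih (em τ) hge (by simpa [Function.iterate_succ] using hc)
    have hck := ck_em τ hg
    set D' := D1 τ with hD'
    have hck2 : CK τ (ρ' ++ (x' :: desc D')) := by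
      refine hck.trans ?_
      have := hck'.appr (desc D')
      simpa using this
    have hg2 := hg.ck hck2
    -- build x and D
    obtain ⟨D, x, hpx, hDx, hsetD, hcard⟩ : ∃ (D : Finset ℤ) (x : ℤ), (x ∈ D → x - 1 ∈ D) ∧
        dout D x = some x' ∧ dset D x = D' ∧ D.card = D'.card := by
      by_cases hx' : x' ∈ D'
      · have h1 := good_succ hg2.right hx'
        refine ⟨D', x' + 1, fun _ => by simpa using hx', ?_, (d_mem h1).2, rfl⟩
        rw [(d_mem h1).1]; simp
      · have hne : (D'.filter (fun s => x' < s)).Nonempty := by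
          by_contra hne
          rw [Finset.not_nonempty_iff_eq_empty, Finset.filter_eq_empty_iff] at hne
          have hp : (x' :: desc D').Pairwise (· > ·) := by
            rw [List.pairwise_cons]
            refine ⟨?_, desc_pw _⟩
            intro a ha
            rw [mem_desc] at ha
            have := hne ha
            have : a ≠ x' := fun h => hx' (h ▸ ha)
            omega
          have := card_dec' hg2 hp
          rw [← (row hck2 hg).1, length_cons, desc_len, ← hD'] at this
          omega
        have hm := Finset.min'_mem _ hne
        have hle := fun w hw => Finset.min'_le (D'.filter (fun s => x' < s)) w hw
        set x := (D'.filter (fun s => x' < s)).min' hne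
        rw [Finset.mem_filter] at hm
        have e := d_pass (A := insert x' (D'.erase x)) (v := x) (u := x') (by simp) hm.2 (by
          intro w hw
          simp only [Finset.mem_insert, Finset.mem_erase] at hw
          rcases hw with h | h
          · omega
          · have := hle w
            simp only [Finset.mem_filter] at this
            by_cases hxw : x' < w
            · have := this ⟨h.2, hxw⟩
              have := h.1
              omega
            · omega)
        refine ⟨insert x' (D'.erase x), x, ?_, e.1, ?_, ?_⟩
        · intro h
          simp only [Finset.mem_insert, Finset.mem_erase] at h
          rcases h with h | h
          · omega
          · exact absurd rfl h.1
        · rw [e.2]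
          ext a
          simp only [Finset.mem_insert, Finset.mem_erase]
          grind
        · rw [Finset.card_insert_of_notMem (by simp [hx']), Finset.card_erase_of_mem hm.1]
          have : 0 < D'.card := Finset.card_pos.2 ⟨x, hm.1⟩
          omega
    have hck3 : CK τ (ρ' ++ desc D ++ [x]) := by
      refine hck2.trans ?_
      have := (pass hpx).appl ρ'
      rw [hDx, hsetD] at this
      rw [append_assoc]
      exact this.symm
    have hg3 := hg.ck hck3
    have hD1 : D1 (ρ' ++ desc D) = D := by
      symm
      apply Finset.eq_of_subset_of_card_le
      · intro s hs
        rw [D1, fin_app]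
        exact dec_mem_fin _ _ (desc_pw D) s ((mem_desc D s).2 hs)
      · rw [hcard, hD', (row hck3 hg).1, D1_snoc]
        have := card_dset (D1 (ρ' ++ desc D)) x
        omega
    refine ⟨ρ' ++ desc D, x, hck3, ?_⟩
    have h5 := em_of_top hg3.left hD1
    rw [lev_some (y := x') (by rw [hD1]; exact hDx), lev_ck _ _ _ h5 (em_good hg3.left), hl']

theorem iter_good {τ : List ℤ} (h : Good τ) (c : ℕ) : Good (em^[c] τ) := by
  induction c generalizing τ with
  | zero => exact h
  | succ c ih => exact ih (em_good h)

theorem aw_iter (c : ℕ) : ∀ (τ : List ℤ), Good τ → ∀ r, c < aw τ r ↔ -r ∈ G (em^[c] τ) := by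
  induction c with
  | zero => intro τ h r; exact aw_pos τ r h
  | succ c ih =>
    intro τ h r
    rw [Function.iterate_succ_apply, ← ih _ (em_good h), aw_eq τ]
    by_cases h1 : -r ∈ G τ
    · rw [if_pos h1]; omega
    · have : ¬ 0 < aw (em τ) r := by
        rw [aw_pos _ _ (em_good h)]; exact fun h2 => h1 (G_sub h h2)
      rw [if_neg h1]; omega

theorem exists_row {τ : List ℤ} (hg : Good τ) {r : ℤ} {c : ℕ} (hr : aw τ r = c + 1)
    (hmin : ∀ r' < r, aw τ r' ≠ c + 1) :
    ∃ ρ x, CK τ (ρ ++ [x]) ∧ lev ρ x = c ∧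
      (∀ r', aw τ r' = aw ρ r' + if r' = r then 1 else 0) := by
  have h1 : -r ∈ G (em^[c] τ) := (aw_iter c τ hg r).1 (by omega)
  have h2 : -r ∉ G (em^[c + 1] τ) := fun h => by
    have := (aw_iter (c + 1) τ hg r).2 h; omega
  have hlt : (D1 (em^[c + 1] τ)).card < (D1 (em^[c] τ)).card := by
    rw [← card_G (iter_good hg _), ← card_G (iter_good hg _)]
    apply Finset.card_lt_card
    refine ⟨?_, fun h => h2 (h h1)⟩
    rw [Function.iterate_succ_apply']
    exact G_sub (iter_good hg _)
  obtain ⟨ρ, x, hck, hl⟩ := exists_corner c τ hg hlt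
  obtain ⟨s, a1, a2, a3⟩ := ruleA ρ x (hg.ck hck)
  have hs : s = r := by
    have e := aw_ck _ _ hck hg
    rw [hl, ← e] at a3
    have a4 := a1 s
    rw [if_pos rfl, ← e, a2, hl] at a4
    rcases lt_trichotomy s r with h | h | h
    · exact absurd a4 (hmin s h)
    · exact h
    · exact absurd hr (a3 r h)
  subst hs
  refine ⟨ρ, x, hck, hl, ?_⟩
  rw [aw_ck _ _ hck hg]; exact a1

/-! ## Support -/

theorem fin_mem (t : List ℤ) : ∀ A s, s ∈ fin A t → s ∈ A ∨ s ∈ t := by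
  induction t with
  | nil => intro A s h; exact Or.inl h
  | cons v t ih =>
    intro A s h
    rcases ih _ _ h with h | h
    · rcases d_cases A v with ⟨hv, e1, e2⟩ | ⟨hv, e1, e2⟩ | ⟨u, ht, htv, hw, e1, e2⟩ <;>
        rw [e2] at h
      · exact Or.inl h
      · simp only [Finset.mem_insert] at h; simp; tauto
      · simp only [Finset.mem_insert, Finset.mem_erase] at h; simp; tauto
    · simp [h]

theorem fin_max (t : List ℤ) : ∀ A s, (s ∈ A ∨ s ∈ t) → ∃ s' ∈ fin A t, s ≤ s' := by
  induction t with
  | nil => rintro A s (h | h)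
           · exact ⟨s, h, le_rfl⟩
           · simp at h
  | cons v t ih =>
    intro A s h
    by_cases hst : s ∈ t
    · exact ih _ s (Or.inr hst)
    have : ∃ s' ∈ dset A v, s ≤ s' := by
      have hvm := dset_mem_self A v
      rcases h with h | h
      · rcases d_cases A v with ⟨hv, e1, e2⟩ | ⟨hv, e1, e2⟩ | ⟨u, ht, htv, hw, e1, e2⟩
        · exact ⟨s, by rw [e2]; exact h, le_rfl⟩
        · exact ⟨s, by rw [e2]; simp [h], le_rfl⟩
        · by_cases hsu : s = u
          · exact ⟨v, hvm, by omega⟩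
          · exact ⟨s, by rw [e2]; simp [h, hsu], le_rfl⟩
      · rcases List.mem_cons.1 h with rfl | h
        · exact ⟨_, hvm, le_rfl⟩
        · exact absurd h hst
    obtain ⟨s', h1, h2⟩ := this
    obtain ⟨s'', h3, h4⟩ := ih (dset A v) s' (Or.inl h1)
    exact ⟨s'', h3, by omega⟩

theorem aw_supp {ρ : List ℤ} (hg : Good ρ) {r : ℤ} (h : 0 < aw ρ r) : r ∈ ρ := by
  rw [aw_pos _ _ hg] at h
  rcases fin_mem _ _ _ h with h | h
  · simp at h
  · rw [mem_mir] at h; simpa using h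

theorem aw_min {ρ : List ℤ} (hg : Good ρ) {x : ℤ} (h : x ∈ ρ) : ∃ r, r ≤ x ∧ 0 < aw ρ r := by
  obtain ⟨s, h1, h2⟩ := fin_max (mir ρ) ∅ (-x) (Or.inr (by rw [mem_mir]; simpa using h))
  refine ⟨-s, by omega, ?_⟩
  rw [aw_pos _ _ hg, neg_neg]; exact h1

theorem good_ne {ρ : List ℤ} {v u : ℤ} (hg : Good (ρ ++ [v] ++ [u])) : v ≠ u := by
  rintro rfl
  exact hg _ (CK.refl _) (Or.inl ⟨ρ, [], v, by simp⟩)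

end EG

namespace EG

/-! ## Transport between natural and integer words -/

def up (ρ : List ℕ) : List ℤ := ρ.map (fun n : ℕ => (n : ℤ))
def dn (ρ : List ℤ) : List ℕ := ρ.map Int.toNat
def Pos (ρ : List ℤ) : Prop := ∀ x ∈ ρ, 1 ≤ x
def tp (ρ : List ℤ) : Equiv.Perm ℕ := toPerm (dn ρ)

theorem dn_up (ρ : List ℕ) : dn (up ρ) = ρ := by
  simp only [dn, up, map_map]
  conv_rhs => rw [← List.map_id ρ]
  apply List.map_congr_left; intro a _; simp

theorem up_dn {ρ : List ℤ} (h : Pos ρ) : up (dn ρ) = ρ := by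
  simp only [dn, up, map_map]
  conv_rhs => rw [← List.map_id ρ]
  apply List.map_congr_left; intro a ha; have := h a ha; simp; omega

theorem up_app (ρ σ : List ℕ) : up (ρ ++ σ) = up ρ ++ up σ := by simp [up]
theorem dn_app (ρ σ : List ℤ) : dn (ρ ++ σ) = dn ρ ++ dn σ := by simp [dn]
theorem up_inj {ρ σ : List ℕ} (h : up ρ = up σ) : ρ = σ := by rw [← dn_up ρ, h, dn_up]

theorem toPerm_app (ρ σ : List ℕ) : toPerm (ρ ++ σ) = toPerm ρ * toPerm σ := by simp [toPerm]

theorem tp_app (ρ σ : List ℤ) : tp (ρ ++ σ) = tp ρ * tp σ := by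
  rw [tp, dn_app, toPerm_app]; rfl

theorem swap_comm' {a b : ℕ} (h : a + 2 ≤ b) :
    Equiv.swap a (a + 1) * Equiv.swap b (b + 1) = Equiv.swap b (b + 1) * Equiv.swap a (a + 1) := by
  ext x
  simp only [Equiv.Perm.coe_mul, Function.comp, Equiv.swap_apply_def]
  grind

theorem swap_braid (a : ℕ) :
    Equiv.swap a (a + 1) * Equiv.swap (a + 1) (a + 1 + 1) * Equiv.swap a (a + 1) =
    Equiv.swap (a + 1) (a + 1 + 1) * Equiv.swap a (a + 1) * Equiv.swap (a + 1) (a + 1 + 1) := by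
  ext x
  simp only [Equiv.Perm.coe_mul, Function.comp, Equiv.swap_apply_def]
  grind

theorem tp_t {l m : List ℤ} (h : CKt l m) (hp : Pos l) : tp l = tp m := by
  cases h with
  | k1 x y z h1 h2 =>
    have := hp x (by simp)
    have e := swap_comm' (a := x.toNat) (b := z.toNat) (by omega)
    simp [tp, dn, toPerm, e]
  | k2 x y z h1 h2 =>
    have := hp x (by simp)
    have e := swap_comm' (a := x.toNat) (b := z.toNat) (by omega)
    simp only [tp, dn, toPerm, map_cons, map_nil, prod_cons, prod_nil, ← mul_assoc, e]
  | br a b h =>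
    have := hp a (by simp)
    have e := swap_braid a.toNat
    have h2 : b.toNat = a.toNat + 1 := by omega
    simp only [tp, dn, toPerm, map_cons, map_nil, prod_cons, prod_nil, ← mul_assoc, h2, e, mul_one]

theorem mem_t {l m : List ℤ} (h : CKt l m) (x : ℤ) : x ∈ l ↔ x ∈ m := by
  cases h <;> simp <;> tauto

theorem CK.mem {ρ σ : List ℤ} (h : CK ρ σ) (x : ℤ) : x ∈ ρ ↔ x ∈ σ := by
  induction h with
  | rel a b h => obtain ⟨p', q', l, m, h, rfl, rfl⟩ := h; simp [mem_t h]
  | refl x => rfl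
  | symm x y _ ih => exact ih.symm
  | trans x y z _ _ ih1 ih2 => exact ih1.trans ih2

theorem CK.pos {ρ σ : List ℤ} (h : CK ρ σ) (hp : Pos ρ) : Pos σ := fun x hx => hp x ((h.mem x).2 hx)

theorem CK.tp {ρ σ : List ℤ} (h : CK ρ σ) : Pos ρ → EG.tp ρ = EG.tp σ := by
  induction h with
  | rel a b h =>
    obtain ⟨p', q', l, m, h, rfl, rfl⟩ := h
    intro hp
    rw [tp_app, tp_app, tp_app, tp_app, tp_t h (fun x hx => hp x (by simp [hx]))]
  | refl x => intro _; rfl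
  | symm x y h ih => intro hp; exact (ih (CK.pos (CK.symm h) hp)).symm
  | trans x y z h1 h2 ih1 ih2 => intro hp; rw [ih1 hp, ih2 (CK.pos h1 hp)]

theorem pos_up {ρ : List ℕ} (h : ∀ i ∈ ρ, 1 ≤ i) : Pos (up ρ) := by
  intro x hx
  simp only [up, mem_map] at hx
  obtain ⟨a, ha, rfl⟩ := hx
  have := h a ha; omega

theorem pos_dn {ρ : List ℤ} (h : Pos ρ) : ∀ i ∈ dn ρ, 1 ≤ i := by
  intro x hx
  simp only [dn, mem_map] at hx
  obtain ⟨a, ha, rfl⟩ := hx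
  have := h a ha; omega

theorem red_ck {ρ : List ℕ} {w : Equiv.Perm ℕ} {σ' : List ℤ} (h : ReducedWordFor ρ w)
    (hc : CK (up ρ) σ') : up (dn σ') = σ' ∧ ReducedWordFor (dn σ') w := by
  have hp := pos_up h.1.1
  have hp' := hc.pos hp
  have ht := hc.tp hp
  have hl := hc.length
  rw [tp, dn_up, tp] at ht
  refine ⟨up_dn hp', ⟨⟨pos_dn hp', ?_⟩, by rw [← ht]; exact h.2⟩⟩
  intro τ h1 h2
  have := h.1.2 τ h1 (by rw [h2, ht])
  simp only [up, dn, length_map] at hl ⊢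
  omega

theorem red_short {σ τ : List ℤ} (hp : Pos σ) (hr : IsReducedWord (dn σ)) (hs : ∀ x ∈ τ, x ∈ σ)
    (ht : tp τ = tp σ) : σ.length ≤ τ.length := by
  have := hr.2 (dn τ) (pos_dn (fun x hx => hp x (hs x hx))) ht
  simpa [dn] using this

theorem red_good {ρ : List ℕ} (h : IsReducedWord ρ) : Good (up ρ) := by
  intro σ hc hb
  have hp := hc.pos (pos_up h.1)
  obtain ⟨-, hr, -⟩ := red_ck ⟨h, rfl⟩ hc
  rcases hb with ⟨p, q, a, rfl⟩ | ⟨p, q, a, b, hab, rfl⟩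
  · have := red_short (τ := p ++ q) hp hr (by simp; tauto) (by
      simp only [tp_app]
      simp [tp, dn, toPerm])
    simp at this
  · have ha := hp a (by simp)
    have hb := hp b (by simp)
    have := red_short (τ := p ++ [b] ++ q) hp hr (by simp; tauto) (by
      simp only [tp_app]
      have e : Equiv.swap a.toNat (a.toNat + 1) * Equiv.swap b.toNat (b.toNat + 1) =
        Equiv.swap b.toNat (b.toNat + 1) * Equiv.swap a.toNat (a.toNat + 1) := by
        rcases hab with h | h
        · exact (swap_comm' (by omega)).symm
        · exact swap_comm' (by omega)
      congr 2
      simp only [tp, dn, toPerm, map_cons, map_nil, prod_cons, prod_nil, ← mul_assoc, e, mul_one]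
      simp [mul_assoc])
    simp at this

theorem ckMove_app (p q : List ℕ) (a b c : ℕ) (i : ℕ) (hi : i = q.length + 2) :
    ckMove i (p ++ [a, b, c] ++ q) =
      p ++ [(ckTriple a b c).1, (ckTriple a b c).2.1, (ckTriple a b c).2.2] ++ q := by
  subst hi
  have hl : (p ++ [a, b, c] ++ q).length - (q.length + 2) - 1 = p.length := by simp; omega
  have hc : 2 ≤ q.length + 2 ∧ q.length + 2 + 1 ≤ (p ++ [a, b, c] ++ q).length := by simp
  rw [ckMove, if_pos hc]
  simp only [hl]
  simp [List.getD_eq_getElem?_getD, List.set_append, List.getElem?_append]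

theorem CKEquiv.refl (ρ : List ℕ) : CKEquiv ρ ρ := ⟨[], rfl⟩
theorem CKEquiv.trans {ρ σ τ : List ℕ} (h : CKEquiv ρ σ) (h' : CKEquiv σ τ) : CKEquiv ρ τ := by
  obtain ⟨m, rfl⟩ := h; obtain ⟨m', rfl⟩ := h'
  exact ⟨m ++ m', by rw [foldl_append]⟩

theorem ckEquiv_of_triple (p q : List ℕ) {a b c a' b' c' : ℕ} (h : ckTriple a b c = (a', b', c')) :
    CKEquiv (p ++ [a, b, c] ++ q) (p ++ [a', b', c'] ++ q) :=
  ⟨[q.length + 2], by simp only [foldl_cons, foldl_nil]; rw [ckMove_app p q a b c _ rfl, h]⟩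

theorem ckEquiv_of_ck {ρ σ : List ℤ} (h : CK ρ σ) : Pos ρ →
    CKEquiv (dn ρ) (dn σ) ∧ CKEquiv (dn σ) (dn ρ) := by
  induction h with
  | rel x y h =>
    obtain ⟨p', q', l, m, h, rfl, rfl⟩ := h
    intro hp
    have hl : Pos l := fun x hx => hp x (by simp [hx])
    simp only [dn_app]
    cases h with
    | k1 x y z h1 h2 =>
      have := hl x (by simp)
      constructor <;> apply ckEquiv_of_triple <;> unfold ckTriple <;> split_ifs <;> first | rfl | omega
    | k2 x y z h1 h2 =>
      have := hl x (by simp)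
      constructor <;> apply ckEquiv_of_triple <;> unfold ckTriple <;> split_ifs <;> first | rfl | omega
    | br a b h =>
      constructor <;> apply ckEquiv_of_triple <;> simp [ckTriple]
  | refl x => intro _; exact ⟨CKEquiv.refl _, CKEquiv.refl _⟩
  | symm x y h ih => intro hp; exact (ih (CK.pos (CK.symm h) hp)).symm
  | trans x y z h1 h2 ih1 ih2 =>
    intro hp
    have a := ih1 hp
    have b := ih2 (CK.pos h1 hp)
    exact ⟨a.1.trans b.1, b.2.trans a.2⟩

theorem ck_move {ρ : List ℕ} (h : IsReducedWord ρ) (i : ℕ) : CK (up ρ) (up (ckMove i ρ)) := by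
  by_cases hi : 2 ≤ i ∧ i + 1 ≤ ρ.length
  · obtain ⟨p, a, b, c, q, rfl, hq⟩ : ∃ p a b c q, ρ = p ++ [a, b, c] ++ q ∧ q.length + 2 = i := by
      have h3 : (ρ.drop (ρ.length - i - 1)).length = i + 1 := by simp; omega
      rcases h4 : ρ.drop (ρ.length - i - 1) with _ | ⟨a, _ | ⟨b, _ | ⟨c, q⟩⟩⟩ <;> rw [h4] at h3 <;>
        simp at h3
      · omega
      · omega
      · refine ⟨ρ.take (ρ.length - i - 1), a, b, c, q, ?_, by omega⟩
        conv_lhs => rw [← List.take_append_drop (ρ.length - i - 1) ρ, h4]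
        simp
    rw [ckMove_app _ _ _ _ _ _ hq.symm]
    simp only [up_app]
    apply CK.app
    have hg := (red_good h)
    simp only [up_app] at hg
    have hg := hg.left.right
    unfold ckTriple
    split_ifs with h1 h2 h3
    · subst h1
      have hab : b = a + 1 ∨ a = b + 1 := by
        by_contra hne
        by_cases hab : a = b
        · subst hab
          exact hg _ (CK.refl _) (Or.inl ⟨[], [(a : ℤ)], a, by simp [up]⟩)
        · exact hg _ (CK.refl _) (Or.inr ⟨[], [], a, b, by omega, by simp [up]⟩)
      rcases hab with h | h
      · exact (CKt.br a b (by omega)).ck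
      · exact (CKt.br b a (by omega)).ck.symm
    · rcases h2 with h2 | h2
      · exact (CKt.k1 b a c (by omega) (by omega)).ck
      · exact (CKt.k1 c a b (by omega) (by omega)).ck.symm
    · rcases h3 with h3 | h3
      · exact (CKt.k2 b c a (by omega) (by omega)).ck
      · exact (CKt.k2 a c b (by omega) (by omega)).ck.symm
    · exact CK.refl _
  · rw [ckMove, if_neg hi]; exact CK.refl _

theorem ckEquiv_iff {ρ σ : List ℕ} (h : IsReducedWord ρ) : CKEquiv ρ σ ↔ CK (up ρ) (up σ) := by
  constructor
  · rintro ⟨ms, rfl⟩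
    induction ms generalizing ρ with
    | nil => exact CK.refl _
    | cons i ms ih =>
      have h1 := ck_move h i
      have h2 := (red_ck ⟨h, rfl⟩ h1).2.1
      rw [dn_up] at h2
      exact h1.trans (ih h2)
  · intro hc
    have := (ckEquiv_of_ck hc (pos_up h.1)).1
    rwa [dn_up, dn_up] at this

end EG

namespace EG

/-! ## Row sequences -/

def Val (s : List ℕ) : Prop :=
  ∀ p r q, s = p ++ r :: q → ∀ r' < r, count r' p ≠ count r p + 1

theorem Val.left {p q : List ℕ} (h : Val (p ++ q)) : Val p := by
  intro p' r q' e
  exact h p' r (q' ++ q) (by rw [e]; simp)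

theorem Val.snoc {p : List ℕ} {r : ℕ} (h : Val p) (hr : ∀ r' < r, count r' p ≠ count r p + 1) :
    Val (p ++ [r]) := by
  intro p' r1 q' e
  rcases List.eq_nil_or_concat q' with rfl | ⟨q2, z, rfl⟩
  · obtain ⟨rfl, h2⟩ := List.append_inj' e rfl
    cases h2
    exact hr
  · have e2 : p ++ [r] = (p' ++ r1 :: q2) ++ [z] := by rw [e]; simp
    obtain ⟨h1, _⟩ := List.append_inj' e2 rfl
    exact h p' r1 q2 h1

open Classical in
noncomputable def rowAt (ρ : List ℤ) (x : ℤ) : ℕ :=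
  if h : ∃ r : ℕ, ∀ r', aw (ρ ++ [x]) r' = aw ρ r' + if r' = (r : ℤ) + 1 then 1 else 0
  then h.choose else 0

theorem rowAt_eq {ρ : List ℤ} {x : ℤ} {r : ℕ}
    (h : ∀ r', aw (ρ ++ [x]) r' = aw ρ r' + if r' = (r : ℤ) + 1 then 1 else 0) : rowAt ρ x = r := by
  have h1 : ∃ r : ℕ, ∀ r', aw (ρ ++ [x]) r' = aw ρ r' + if r' = (r : ℤ) + 1 then 1 else 0 := ⟨r, h⟩
  rw [rowAt, dif_pos h1]
  have h2 := h1.choose_spec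
  generalize h1.choose = k at h2
  have a := h ((r : ℤ) + 1)
  have b := h2 ((r : ℤ) + 1)
  rw [if_pos rfl] at a
  by_contra hne
  rw [if_neg (by omega)] at b
  omega

theorem aw_zero {ρ : List ℤ} (hg : Good ρ) (hp : Pos ρ) {r : ℤ} (hr : r ≤ 0) : aw ρ r = 0 := by
  by_contra h
  have := hp r (aw_supp hg (by omega))
  omega

theorem rowAt_spec {ρ : List ℤ} {x : ℤ} (hg : Good (ρ ++ [x])) (hp : Pos (ρ ++ [x])) :
    (∀ r', aw (ρ ++ [x]) r' = aw ρ r' + if r' = (rowAt ρ x : ℤ) + 1 then 1 else 0) ∧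
    aw ρ ((rowAt ρ x : ℤ) + 1) = lev ρ x ∧
    ∀ r' : ℕ, r' < rowAt ρ x → aw ρ ((r' : ℤ) + 1) ≠ lev ρ x + 1 := by
  obtain ⟨r, h1, h2, h3⟩ := ruleA ρ x hg
  have hr : 1 ≤ r := by
    by_contra hc
    have := aw_zero hg hp (r := r) (by omega)
    rw [h1, if_pos rfl] at this; omega
  obtain ⟨k, rfl⟩ : ∃ k : ℕ, r = (k : ℤ) + 1 := ⟨(r - 1).toNat, by omega⟩
  have e := rowAt_eq h1
  rw [e]
  refine ⟨h1, h2, ?_⟩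
  intro r' hr'
  have := h3 ((r' : ℤ) + 1) (by omega)
  rw [h1, if_neg (by omega)] at this
  simpa using this

noncomputable def rs (ρ : List ℤ) : List ℕ :=
  (range ρ.length).map (fun i => rowAt (ρ.take i) (ρ.getD i 0))

theorem rs_snoc (ρ : List ℤ) (x : ℤ) : rs (ρ ++ [x]) = rs ρ ++ [rowAt ρ x] := by
  simp only [rs, length_append, length_cons, length_nil, zero_add, range_succ, map_append, map_cons,
    map_nil]
  congr 1
  · apply List.map_congr_left
    intro i hi
    have hi := List.mem_range.1 hi
    rw [List.take_append_of_le_length (by omega), List.getD_append _ _ _ _ hi]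
  · simp

theorem rs_len (ρ : List ℤ) : (rs ρ).length = ρ.length := by simp [rs]

theorem Pos.left {p q : List ℤ} (h : Pos (p ++ q)) : Pos p := fun x hx => h x (by simp [hx])

theorem rs_spec (ρ : List ℤ) : Good ρ → Pos ρ →
    (∀ i : ℕ, count i (rs ρ) = aw ρ ((i : ℤ) + 1)) ∧ Val (rs ρ) := by
  induction ρ using List.reverseRecOn with
  | nil =>
    intro _ _
    refine ⟨fun i => by simp [rs, aw_nil], ?_⟩
    intro p r q h
    simp [rs] at h
  | append_singleton ρ x ih =>
    intro hg hp
    obtain ⟨h1, h2⟩ := ih hg.left hp.left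
    obtain ⟨e1, e2, e3⟩ := rowAt_spec hg hp
    rw [rs_snoc]
    constructor
    · intro i
      rw [count_append, h1, e1]
      simp only [count_singleton, beq_iff_eq]
      congr 1
      split_ifs <;> first | rfl | omega
    · apply h2.snoc
      intro r' hr'
      rw [h1, h1, e2]
      exact e3 r' hr'

/-- the column of a letter -/
theorem lev_rs {ρ : List ℤ} {x : ℤ} (hg : Good (ρ ++ [x])) (hp : Pos (ρ ++ [x])) :
    lev ρ x = count (rowAt ρ x) (rs ρ) := by
  rw [(rs_spec ρ hg.left hp.left).1, (rowAt_spec hg hp).2.1]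

theorem rs_inj (σ : List ℤ) : ∀ σ', CK σ σ' → Good σ → Pos σ → rs σ = rs σ' → σ = σ' := by
  induction σ using List.reverseRecOn with
  | nil =>
    intro σ' h _ _ _
    exact (List.length_eq_zero_iff.1 h.length.symm).symm
  | append_singleton σ x ih =>
    intro σ' h hg hp he
    rcases List.eq_nil_or_concat σ' with rfl | ⟨σ', y, rfl⟩
    · have := h.length; simp at this
    rw [concat_eq_append] at *
    have hg' := hg.ck h
    have hp' := h.pos hp
    rw [rs_snoc, rs_snoc] at he
    obtain ⟨h1, h2⟩ := List.append_inj' he rfl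
    have h2 : rowAt σ x = rowAt σ' y := by simpa using h2
    obtain ⟨rfl, h3⟩ := snoc_inj _ _ _ _ h hg (by rw [lev_rs hg hp, lev_rs hg' hp', h1, h2])
    rw [ih _ h3 hg.left hp.left h1]

theorem rs_surj (s : List ℕ) : ∀ τ, Good τ → Pos τ → Val s →
    (∀ i : ℕ, count i s = aw τ ((i : ℤ) + 1)) → ∃ σ, CK τ σ ∧ rs σ = s := by
  induction s using List.reverseRecOn with
  | nil =>
    intro τ hg hp _ hc
    rcases τ with _ | ⟨x, τ⟩
    · exact ⟨[], CK.refl _, rfl⟩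
    · obtain ⟨r, _, hr⟩ := aw_min hg (x := x) (by simp)
      have h1 := hp r (aw_supp hg hr)
      have := hc (r - 1).toNat
      rw [show ((r - 1).toNat : ℤ) + 1 = r by omega] at this
      simp at this; omega
  | append_singleton s r ih =>
    intro τ hg hp hv hc
    have hr := hc r
    simp only [count_append, count_singleton_self] at hr
    obtain ⟨ρ, x, hck, hl, ha⟩ := exists_row hg hr.symm (by
      intro r' hr' h
      by_cases h0 : r' ≤ 0
      · rw [aw_zero hg hp h0] at h; omega
      · have h1 := hc (r' - 1).toNat
        rw [show ((r' - 1).toNat : ℤ) + 1 = r' by omega, h, count_append,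
          count_singleton, if_neg (by simp; omega)] at h1
        exact hv s r [] rfl _ (by omega) h1)
    have hg2 := hg.ck hck
    have hp2 := hck.pos hp
    obtain ⟨σ, h1, h2⟩ := ih ρ hg2.left hp2.left hv.left (by
      intro i
      have := hc i
      rw [ha, count_append, count_singleton] at this
      simp only [beq_iff_eq] at this
      split_ifs at this <;> omega)
    have hck' := hck.trans (h1.appr [x])
    refine ⟨σ ++ [x], hck', ?_⟩
    rw [rs_snoc, h2, rowAt_eq (r := r)]
    intro r'
    rw [← aw_ck _ _ hck' hg, ha, aw_ck _ _ h1 hg2.left]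

end EG

namespace EG

/-! ## Standard key tableaux as row sequences -/

def frow (s : List ℕ) (r : ℕ) : List ℕ :=
  ((range s.length).filter (fun i => decide (s.getD i 0 = r))).map (fun i => s.length - i)

def fill (N : ℕ) (s : List ℕ) : List (List ℕ) := (range N).map (frow s)

def rsT (n : ℕ) (T : List (List ℕ)) : List ℕ := (range n).map (fun i => rowOf T (n - i))

def Fil (n : ℕ) (T : List (List ℕ)) : Prop :=
  (∀ r ∈ T, r.Pairwise (· > ·)) ∧ T.flatten.Perm (List.range' 1 n)

theorem dec_filter (R : List ℕ) (e : ℕ) (h : R.Pairwise (· > ·)) (c : ℕ) :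
    c < (R.filter (fun z => decide (e < z))).length ↔ e < R.getD c 0 := by
  induction R generalizing c with
  | nil => simp
  | cons a R ih =>
    rw [pairwise_cons] at h
    by_cases ha : e < a
    · rw [filter_cons_of_pos (by simpa using ha)]
      rcases c with _ | c
      · simpa using ha
      · simpa using ih h.2 c
    · have h0 : (R.filter (fun z => decide (e < z))) = [] := by
        rw [filter_eq_nil_iff]
        intro b hb
        have := h.1 b hb
        simp; omega
      rw [filter_cons_of_neg (by simpa using ha), h0]
      have := ih h.2
      rw [h0] at this
      rcases c with _ | c
      · simpa using ha
      · simpa using this c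

theorem dec_findIdx (R : List ℕ) (e : ℕ) (h : R.Pairwise (· > ·)) (he : e ∈ R) :
    R.findIdx (fun z => z == e) = (R.filter (fun z => decide (e < z))).length := by
  induction R with
  | nil => simp at he
  | cons a R ih =>
    rw [pairwise_cons] at h
    rw [findIdx_cons]
    rcases List.mem_cons.1 he with rfl | he'
    · have h0 : (R.filter (fun z => decide (e < z))) = [] := by
        rw [filter_eq_nil_iff]
        intro b hb
        have := h.1 b hb
        simp; omega
      simp [h0]
    · have h1 := h.1 e he'
      rw [filter_cons_of_pos (by simpa using h1), ih h.2 he']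
      have : (a == e) = false := by simp; omega
      simp [this]

theorem dec_uniq {R S : List ℕ} (h : R.Pairwise (· > ·)) (h' : S.Pairwise (· > ·))
    (hm : ∀ x, x ∈ R ↔ x ∈ S) : R = S := by
  have n1 : R.Nodup := h.imp (fun h => by omega)
  have n2 : S.Nodup := h'.imp (fun h => by omega)
  exact List.Perm.eq_of_pairwise (fun a b _ _ h1 h2 => by omega) h h' ((perm_ext_iff_of_nodup n1 n2).2 hm)

theorem mem_frow (s : List ℕ) (r e : ℕ) :
    e ∈ frow s r ↔ 1 ≤ e ∧ e ≤ s.length ∧ s.getD (s.length - e) 0 = r := by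
  simp only [frow, mem_map, mem_filter, mem_range, decide_eq_true_eq]
  constructor
  · rintro ⟨i, ⟨h1, h2⟩, rfl⟩
    refine ⟨by omega, by omega, ?_⟩
    rwa [show s.length - (s.length - i) = i by omega]
  · rintro ⟨h1, h2, h3⟩
    exact ⟨s.length - e, ⟨by omega, h3⟩, by omega⟩

theorem frow_dec (s : List ℕ) (r : ℕ) : (frow s r).Pairwise (· > ·) := by
  rw [frow, pairwise_map]
  have h : ((range s.length).filter (fun i => decide (s.getD i 0 = r))).Pairwise (· < ·) :=
    pairwise_lt_range.filter _
  refine h.imp_of_mem ?_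
  intro a b ha hb hab
  simp only [mem_filter, mem_range] at ha hb
  omega

theorem getD_map_range (N : ℕ) (f : ℕ → List ℕ) (r : ℕ) :
    ((range N).map f).getD r [] = if r < N then f r else [] := by
  split_ifs with h
  · simp [List.getD_eq_getElem?_getD, h]
  · simp [List.getD_eq_getElem?_getD, h]

theorem Fil.getD {n : ℕ} {T : List (List ℕ)} (h : Fil n T) (r : ℕ) : (T.getD r []).Pairwise (· > ·) := by
  by_cases hr : r < T.length
  · rw [List.getD_eq_getElem _ _ hr]; exact h.1 _ (getElem_mem hr)
  · rw [List.getD_eq_default _ _ (by omega)]; exact Pairwise.nil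

theorem mem_flat {T : List (List ℕ)} {e : ℕ} : e ∈ T.flatten ↔ ∃ r < T.length, e ∈ T.getD r [] := by
  rw [mem_flatten]
  constructor
  · rintro ⟨l, hl, he⟩
    obtain ⟨i, hi, rfl⟩ := mem_iff_getElem.1 hl
    exact ⟨i, hi, by rwa [List.getD_eq_getElem _ _ hi]⟩
  · rintro ⟨r, hr, he⟩
    rw [List.getD_eq_getElem _ _ hr] at he
    exact ⟨_, getElem_mem hr, he⟩

theorem mem_getD_lt {T : List (List ℕ)} {e r : ℕ} (h : e ∈ T.getD r []) : r < T.length := by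
  by_contra hc
  rw [List.getD_eq_default _ _ (by omega)] at h; simp at h

theorem nodup_rows {T : List (List ℕ)} (h : T.flatten.Nodup) {e r r' : ℕ} (h1 : e ∈ T.getD r [])
    (h2 : e ∈ T.getD r' []) : r = r' := by
  have a := mem_getD_lt h1
  have b := mem_getD_lt h2
  rw [nodup_flatten] at h
  have key : ∀ i j, i < j → e ∈ T.getD i [] → e ∈ T.getD j [] → False := by
    intro i j hij hi hj
    have a := mem_getD_lt hi
    have b := mem_getD_lt hj
    rw [List.getD_eq_getElem _ _ a] at hi
    rw [List.getD_eq_getElem _ _ b] at hj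
    exact List.pairwise_iff_getElem.1 h.2 i j a b hij hi hj
  rcases lt_trichotomy r r' with h | h | h
  · exact (key _ _ h h1 h2).elim
  · exact h
  · exact (key _ _ h h2 h1).elim

theorem Fil.nodup {n : ℕ} {T : List (List ℕ)} (h : Fil n T) : T.flatten.Nodup :=
  h.2.nodup_iff.2 (nodup_range' (step := 1))

theorem Fil.mem {n : ℕ} {T : List (List ℕ)} (h : Fil n T) (e : ℕ) :
    e ∈ T.flatten ↔ 1 ≤ e ∧ e ≤ n := by
  rw [h.2.mem_iff, mem_range'_1]; omega

theorem rowOf_eq {T : List (List ℕ)} (h : T.flatten.Nodup) {e r : ℕ} (he : e ∈ T.getD r []) :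
    rowOf T e = r := by
  have hr := mem_getD_lt he
  have hlt : T.findIdx (fun r => r.contains e) < T.length := by
    rw [findIdx_lt_length]
    exact ⟨T.getD r [], by rw [List.getD_eq_getElem _ _ hr]; exact getElem_mem hr, by simpa using he⟩
  refine nodup_rows h ?_ he
  have := findIdx_getElem (w := hlt)
  rw [rowOf, List.getD_eq_getElem _ _ hlt]
  simpa using this

theorem Fil.rowOf {n : ℕ} {T : List (List ℕ)} (h : Fil n T) {e r : ℕ} (h1 : 1 ≤ e) (h2 : e ≤ n) :
    EG.rowOf T e = r ↔ e ∈ T.getD r [] := by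
  constructor
  · rintro rfl
    obtain ⟨r, _, hr⟩ := mem_flat.1 ((h.mem e).2 ⟨h1, h2⟩)
    rwa [rowOf_eq h.nodup hr]
  · exact rowOf_eq h.nodup

theorem rsT_getD {n i : ℕ} (T : List (List ℕ)) (hi : i < n) : (rsT n T).getD i 0 = rowOf T (n - i) := by
  simp [rsT, List.getD_eq_getElem?_getD, hi]

theorem rsT_len (n : ℕ) (T : List (List ℕ)) : (rsT n T).length = n := by simp [rsT]

theorem Fil.fill {n : ℕ} {T : List (List ℕ)} (h : Fil n T) : EG.fill T.length (rsT n T) = T := by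
  apply List.ext_getElem
  · simp [EG.fill]
  · intro r h1 h2
    simp only [EG.fill, getElem_map, getElem_range]
    apply dec_uniq (frow_dec _ _) (h.1 _ (getElem_mem h2))
    intro e
    rw [mem_frow, rsT_len, ← List.getD_eq_getElem _ [] h2]
    constructor
    · rintro ⟨h3, h4, h5⟩
      rwa [rsT_getD _ (by omega), show n - (n - e) = e by omega, h.rowOf h3 h4] at h5
    · intro he
      have h3 := (h.mem e).1 (mem_flat.2 ⟨r, h2, he⟩)
      refine ⟨h3.1, h3.2, ?_⟩
      rwa [rsT_getD _ (by omega), show n - (n - e) = e by omega, h.rowOf h3.1 h3.2]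

theorem fill_getD {N : ℕ} {s : List ℕ} (r : ℕ) (hr : r < N) : (fill N s).getD r [] = frow s r := by
  rw [fill, getD_map_range, if_pos hr]

theorem fil_fill {N : ℕ} {s : List ℕ} (hs : ∀ r ∈ s, r < N) : Fil s.length (fill N s) := by
  constructor
  · intro r hr
    simp only [fill, mem_map] at hr
    obtain ⟨i, _, rfl⟩ := hr
    exact frow_dec _ _
  · rw [perm_ext_iff_of_nodup]
    · intro e
      rw [mem_flat, mem_range'_1]
      constructor
      · rintro ⟨r, hr, he⟩
        rw [fill_getD _ (by simpa [fill] using hr), mem_frow] at he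
        omega
      · intro h
        have hl : s.length - e < s.length := by omega
        have hlt : s.getD (s.length - e) 0 < N := by
          rw [List.getD_eq_getElem _ _ hl]; exact hs _ (getElem_mem hl)
        refine ⟨s.getD (s.length - e) 0, by simpa [fill] using hlt, ?_⟩
        rw [fill_getD _ hlt, mem_frow]
        exact ⟨by omega, by omega, rfl⟩
    · rw [nodup_flatten]
      constructor
      · intro l hl
        simp only [fill, mem_map] at hl
        obtain ⟨i, _, rfl⟩ := hl
        exact (frow_dec s i).imp (fun h => by omega)
      · rw [fill, pairwise_map]
        refine (pairwise_lt_range (n := N)).imp ?_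
        intro a b hab e h1 h2
        rw [mem_frow] at h1 h2
        omega
    · exact nodup_range' (step := 1)

theorem rowOf_fill {N : ℕ} {s : List ℕ} (hs : ∀ r ∈ s, r < N) {i : ℕ} (hi : i < s.length) :
    rowOf (fill N s) (s.length - i) = s.getD i 0 := by
  have hlt : s.getD i 0 < N := by rw [List.getD_eq_getElem _ _ hi]; exact hs _ (getElem_mem hi)
  rw [(fil_fill hs).rowOf (by omega) (by omega), fill_getD _ hlt, mem_frow]
  refine ⟨by omega, by omega, ?_⟩
  rw [show s.length - (s.length - i) = i by omega]

theorem map_getD_range (s : List ℕ) : (range s.length).map (fun i => s.getD i 0) = s := by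
  apply List.ext_getElem
  · simp
  · intro i h1 h2; simp [h2]

theorem rsT_fill {N : ℕ} {s : List ℕ} (hs : ∀ r ∈ s, r < N) : rsT s.length (fill N s) = s := by
  rw [rsT]
  conv_rhs => rw [← map_getD_range s]
  apply List.map_congr_left
  intro i hi
  exact rowOf_fill hs (List.mem_range.1 hi)

theorem take_getD (s : List ℕ) (i : ℕ) (hi : i ≤ s.length) :
    s.take i = (range i).map (fun j => s.getD j 0) := by
  apply List.ext_getElem
  · simp [hi]
  · intro j h1 h2
    have : j < s.length := by simp at h1; omega
    simp [this]

theorem frow_cnt (s : List ℕ) (r i : ℕ) (hi : i ≤ s.length) :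
    ((frow s r).filter (fun z => decide (s.length - i < z))).length = count r (s.take i) := by
  rw [take_getD s i hi, frow, filter_map, length_map, filter_filter, ← countP_eq_length_filter,
    count, countP_map]
  obtain ⟨k, hk⟩ : ∃ k, s.length = i + k := ⟨s.length - i, by omega⟩
  have : ∀ k, s.length = i + k → ∀ m ≤ k, countP (fun a => ((fun z => decide (s.length - i < z)) ∘ fun i => s.length - i) a &&
      decide (s.getD a 0 = r)) (range (i + m)) = countP ((fun x => x == r) ∘ fun j => s.getD j 0) (range i) := by
    intro k hk m hm
    induction m with
    | zero =>
      apply countP_congr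
      intro a ha
      have := List.mem_range.1 ha
      simp; omega
    | succ m ih =>
      rw [← add_assoc, range_succ, countP_append, ih (by omega)]
      simp; omega
  conv_lhs => rw [hk]
  rw [← this k hk k le_rfl, hk]

theorem frow_len (s : List ℕ) (r : ℕ) : (frow s r).length = count r s := by
  have := frow_cnt s r s.length le_rfl
  rw [take_length] at this
  rw [← this, filter_eq_self.2]
  intro e he
  rw [mem_frow] at he
  simp; omega

theorem colOf_fill {N : ℕ} {s : List ℕ} (hs : ∀ r ∈ s, r < N) {i : ℕ} (hi : i < s.length) :
    colOf (fill N s) (s.length - i) = count (s.getD i 0) (s.take i) := by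
  have hlt : s.getD i 0 < N := by rw [List.getD_eq_getElem _ _ hi]; exact hs _ (getElem_mem hi)
  rw [colOf, rowOf_fill hs hi, fill_getD _ hlt, dec_findIdx _ _ (frow_dec _ _), frow_cnt _ _ _ (by omega)]
  rw [mem_frow]
  refine ⟨by omega, by omega, ?_⟩
  rw [show s.length - (s.length - i) = i by omega]

def SKc (T : List (List ℕ)) : Prop :=
  ∀ lo hi, lo < hi → hi < T.length →
      ∀ c, c < (T.getD hi []).length → c < (T.getD lo []).length →
        (T.getD hi []).getD c 0 < (T.getD lo []).getD c 0 →
        ∃ c', c < c' ∧ c' < (T.getD lo []).length ∧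
          (T.getD hi []).getD c 0 < (T.getD lo []).getD c' 0

theorem getD_lt {R : List ℕ} {c e : ℕ} (h : e < R.getD c 0) : c < R.length := by
  by_contra hc
  rw [List.getD_eq_default _ _ (by omega)] at h; omega

/-- the index of an entry in its row -/
theorem idx_frow (s : List ℕ) (r i c : ℕ) (hi : i < s.length)
    (hc : c < (frow s r).length) (he : (frow s r).getD c 0 = s.length - i) :
    c = count r (s.take i) := by
  have hd := frow_dec s r
  have h1 := dec_filter _ (s.length - i) hd
  rw [frow_cnt _ _ _ (by omega)] at h1
  have h2 := h1 c
  rw [he] at h2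
  by_contra hne
  have h3 : count r (s.take i) < c := by omega
  have h4 := h1 (count r (s.take i))
  have := List.pairwise_iff_getElem.1 hd _ _ (by omega) hc h3
  rw [List.getD_eq_getElem _ _ hc] at he
  rw [List.getD_eq_getElem _ _ (by omega)] at h4
  omega

theorem skc_iff {N : ℕ} {s : List ℕ} (hs : ∀ r ∈ s, r < N) : SKc (fill N s) ↔ Val s := by
  have hN : (fill N s).length = N := by simp [fill]
  constructor
  · intro h p r q e r' hr' hcnt
    have hi : p.length < s.length := by rw [e]; simp
    have ht : s.take p.length = p := by rw [e]; simp
    have hg : s.getD p.length 0 = r := by rw [e]; simp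
    have hrN : r < N := hs r (by rw [e]; simp)
    have hmem : s.length - p.length ∈ frow s r := by
      rw [mem_frow]; refine ⟨by omega, by omega, ?_⟩
      rwa [show s.length - (s.length - p.length) = p.length by omega]
    obtain ⟨c, hc, he⟩ := mem_iff_getElem.1 hmem
    have he' : (frow s r).getD c 0 = s.length - p.length := by rw [List.getD_eq_getElem _ _ hc, he]
    have hcc := idx_frow s r p.length c hi hc he'
    rw [ht] at hcc
    have h1 := dec_filter _ (s.length - p.length) (frow_dec s r')
    rw [frow_cnt _ _ _ (by omega), ht, hcnt] at h1
    have h2 := (h1 c).1 (by omega)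
    have := h r' r hr' (by omega) c (by rw [fill_getD _ hrN]; exact hc)
      (by rw [fill_getD _ (by omega)]; exact getD_lt h2)
      (by rw [fill_getD _ hrN, fill_getD _ (by omega), he']; exact h2)
    obtain ⟨c', a1, _, a3⟩ := this
    rw [fill_getD _ hrN, fill_getD _ (by omega), he', ← h1] at a3
    omega
  · intro h lo hi hlt hhi c hc hc' hv
    rw [hN] at hhi
    rw [fill_getD _ hhi] at *
    rw [fill_getD _ (show lo < N by omega)] at *
    have hmem : (frow s hi).getD c 0 ∈ frow s hi := by
      rw [List.getD_eq_getElem _ _ hc]; exact getElem_mem hc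
    rw [mem_frow] at hmem
    obtain ⟨i, hi1, hi2⟩ : ∃ i < s.length, (frow s hi).getD c 0 = s.length - i :=
      ⟨s.length - (frow s hi).getD c 0, by omega, by omega⟩
    have hcc := idx_frow s hi i c hi1 hc hi2
    rw [hi2, show s.length - (s.length - i) = i by omega] at hmem
    have h1 := dec_filter _ (s.length - i) (frow_dec s lo)
    rw [frow_cnt _ _ _ (by omega)] at h1
    have h2 : s = s.take i ++ hi :: s.drop (i + 1) := by
      conv_lhs => rw [← take_append_drop i s, drop_eq_getElem_cons hi1]
      rw [← List.getD_eq_getElem _ 0 hi1, hmem.2.2]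
    have h3 := h _ _ _ h2 lo hlt
    rw [hi2] at hv ⊢
    rw [← h1] at hv
    have h4 := (h1 (c + 1)).1 (by omega)
    exact ⟨c + 1, by omega, getD_lt h4, h4⟩

theorem isSKT_iff (a : List ℕ) (T : List (List ℕ)) :
    IsSKT a T ↔ T.map List.length = a ∧ Fil a.sum T ∧ SKc T := by
  have : (∀ r ∈ T, r.Chain' (· > ·)) ↔ (∀ r ∈ T, r.Pairwise (· > ·)) := by
    refine forall_congr' fun r => forall_congr' fun _ => ?_
    exact List.isChain_iff_pairwise
  rw [IsSKT, this, Fil, SKc]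
  tauto

theorem map_len_fill (N : ℕ) (s : List ℕ) :
    (fill N s).map List.length = (range N).map (fun i => count i s) := by
  simp [fill, frow_len, Function.comp_def]

/-- SKT are fillings of valid row sequences. -/
theorem skt_bij (a : List ℕ) : Set.BijOn (fill a.length)
    {s | Val s ∧ ∀ i, count i s = a.getD i 0} {T | IsSKT a T} := by
  have hlt : ∀ s : List ℕ, (∀ i, count i s = a.getD i 0) → ∀ r ∈ s, r < a.length := by
    intro s h r hr
    by_contra hc
    have := h r
    rw [List.getD_eq_default _ _ (by omega)] at this
    exact count_eq_zero.1 this hr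
  have hlen : ∀ s : List ℕ, (∀ i, count i s = a.getD i 0) → (fill a.length s).map List.length = a := by
    intro s h
    rw [map_len_fill]
    conv_rhs => rw [← map_getD_range a]
    simp [h]
  refine ⟨?_, ?_, ?_⟩
  · rintro s ⟨hv, hc⟩
    have hs := hlt s hc
    have hf := fil_fill hs
    rw [Set.mem_setOf_eq, isSKT_iff, skc_iff hs]
    refine ⟨hlen s hc, ?_, hv⟩
    have e : a.sum = s.length := by
      rw [← hlen s hc, ← length_flatten, hf.2.length_eq]; simp
    rw [e]; exact hf
  · rintro s ⟨hv, hc⟩ s' ⟨hv', hc'⟩ h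
    have e1 := rsT_fill (hlt s hc)
    have e2 := rsT_fill (hlt s' hc')
    have hl : s.length = s'.length := by
      have := (fil_fill (hlt s hc)).2.length_eq
      rw [h, (fil_fill (hlt s' hc')).2.length_eq] at this
      simpa using this.symm
    rw [← e1, ← e2, hl]
    exact congrArg _ h
  · intro T hT
    rw [Set.mem_setOf_eq, isSKT_iff] at hT
    obtain ⟨h1, h2, h3⟩ := hT
    have hTl : T.length = a.length := by rw [← h1]; simp
    have hf := h2.fill
    rw [hTl] at hf
    have hs : ∀ r ∈ rsT a.sum T, r < a.length := by
      intro r hr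
      simp only [rsT, mem_map, List.mem_range] at hr
      obtain ⟨i, hi, rfl⟩ := hr
      have := (h2.rowOf (e := a.sum - i) (by omega) (by omega)).1 rfl
      rw [← hTl]; exact mem_getD_lt this
    refine ⟨rsT a.sum T, ⟨?_, ?_⟩, hf⟩
    · rw [← skc_iff hs, hf]; exact h3
    · intro i
      by_cases hi : i < a.length
      · rw [← hf, map_len_fill] at h1
        conv_rhs => rw [← h1]
        simp [List.getD_eq_getElem?_getD, hi]
      · rw [List.getD_eq_default _ _ (by omega), count_eq_zero]
        intro hm; exact hi (hs i hm)

end EG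

namespace EG

/-! ## Run decompositions over index lists -/

theorem split_cons (brk : ℕ → ℕ → Bool) (a b : ℕ) (L : List ℕ) : ∃ r rs,
    splitWhen brk (b :: L) = (b :: r) :: rs ∧
    splitWhen brk (a :: b :: L) = if brk a b then [a] :: (b :: r) :: rs else (a :: b :: r) :: rs := by
  induction L generalizing a b with
  | nil => exact ⟨[], [], by simp [splitWhen], by simp [splitWhen]⟩
  | cons c L ih =>
    obtain ⟨r, rs, h1, h2⟩ := ih b c
    by_cases hb : brk b c
    · refine ⟨[], (c :: r) :: rs, by rw [h2, if_pos hb], ?_⟩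
      rw [splitWhen, h2, if_pos hb]
    · refine ⟨c :: r, rs, by rw [h2, if_neg hb], ?_⟩
      rw [splitWhen, h2, if_neg hb]

theorem split_map (brk : ℕ → ℕ → Bool) (f : ℕ → ℕ) (L : List ℕ) :
    splitWhen brk (L.map f) = (splitWhen (fun a b => brk (f a) (f b)) L).map (map f) := by
  induction L with
  | nil => rfl
  | cons a L ih =>
    rcases L with _ | ⟨b, L⟩
    · rfl
    · obtain ⟨r, rs, h1, h2⟩ := split_cons brk (f a) (f b) (L.map f)
      obtain ⟨r', rs', h3, h4⟩ := split_cons (fun a b => brk (f a) (f b)) a b L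
      rw [h4]
      rw [map_cons, h1, h3] at ih
      simp only [map_cons, cons.injEq, true_and] at ih
      simp only [map_cons]
      rw [h2]
      split_ifs <;> simp [ih]

theorem split_congr (brk brk' : ℕ → ℕ → Bool) (L : List ℕ)
    (h : L.IsChain (fun a b => brk a b = brk' a b)) : splitWhen brk L = splitWhen brk' L := by
  induction L with
  | nil => rfl
  | cons a L ih =>
    rcases L with _ | ⟨b, L⟩
    · rfl
    · rw [isChain_cons_cons] at h
      rw [splitWhen, splitWhen, ih h.2, h.1]

theorem split_flat (brk : ℕ → ℕ → Bool) (L : List ℕ) : (splitWhen brk L).flatten = L := by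
  induction L with
  | nil => rfl
  | cons a L ih =>
    rcases L with _ | ⟨b, L⟩
    · rfl
    · obtain ⟨r, rs, h1, h2⟩ := split_cons brk a b L
      rw [h1] at ih
      rw [h2]
      split_ifs <;> simpa using ih

theorem split_ne (brk : ℕ → ℕ → Bool) (L : List ℕ) : ∀ b ∈ splitWhen brk L, b ≠ [] := by
  induction L with
  | nil => simp [splitWhen]
  | cons a L ih =>
    rcases L with _ | ⟨b, L⟩
    · simp [splitWhen]
    · obtain ⟨r, rs, h1, h2⟩ := split_cons brk a b L
      rw [h1] at ih
      rw [h2]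
      split_ifs
      · intro x hx; rcases mem_cons.1 hx with rfl | hx
        · simp
        · exact ih x hx
      · intro x hx; rcases mem_cons.1 hx with rfl | hx
        · simp
        · exact ih x (by simp [hx])

theorem split_inner (brk : ℕ → ℕ → Bool) (R : ℕ → ℕ → Prop) (L : List ℕ) (h : L.IsChain R) :
    ∀ b ∈ splitWhen brk L, b.IsChain (fun x y => R x y ∧ ¬ brk x y) := by
  induction L with
  | nil => simp [splitWhen]
  | cons a L ih =>
    rcases L with _ | ⟨b, L⟩
    · simp [splitWhen]
    · obtain ⟨r, rs, h1, h2⟩ := split_cons brk a b L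
      rw [isChain_cons_cons] at h
      have ih := ih h.2
      rw [h1] at ih
      rw [h2]
      split_ifs with hb
      · intro x hx; rcases mem_cons.1 hx with rfl | hx
        · simp
        · exact ih x hx
      · intro x hx; rcases mem_cons.1 hx with rfl | hx
        · rw [isChain_cons_cons]
          exact ⟨⟨h.1, hb⟩, ih _ (by simp)⟩
        · exact ih x (by simp [hx])

theorem split_outer (brk : ℕ → ℕ → Bool) (R : ℕ → ℕ → Prop) (L : List ℕ) (h : L.IsChain R) :
    (splitWhen brk L).IsChain (fun b b' => ∃ x ∈ b, ∃ y ∈ b', R x y ∧ brk x y) := by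
  induction L with
  | nil => simp [splitWhen]
  | cons a L ih =>
    rcases L with _ | ⟨b, L⟩
    · simp [splitWhen]
    · obtain ⟨r, rs, h1, h2⟩ := split_cons brk a b L
      rw [isChain_cons_cons] at h
      have ih := ih h.2
      rw [h1] at ih
      rw [h2]
      split_ifs with hb
      · rw [isChain_cons_cons]
        exact ⟨⟨a, by simp, b, by simp, h.1, hb⟩, ih⟩
      · rcases rs with _ | ⟨c, rs⟩
        · simp
        · rw [isChain_cons_cons] at ih ⊢
          refine ⟨?_, ih.2⟩
          obtain ⟨x, hx, y, hy⟩ := ih.1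
          exact ⟨x, by simp at hx ⊢; tauto, y, hy⟩

/-! ## hatMins -/

def hst (L : List ℤ) : List ℤ × Option ℤ :=
  L.foldl (fun (acc : List ℤ × Option ℤ) r =>
    let v := match acc.2 with
      | none => r
      | some p => min r (p - 1)
    (acc.1 ++ [v], some v)) ([], none)

def hv (o : Option ℤ) (r : ℤ) : ℤ := match o with
  | none => r
  | some p => min r (p - 1)

theorem hst_snoc (L : List ℤ) (r : ℤ) :
    hst (L ++ [r]) = ((hst L).1 ++ [hv (hst L).2 r], some (hv (hst L).2 r)) := by
  simp only [hst, foldl_append, foldl_cons, foldl_nil]; rfl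

theorem hatMins_eq (L : List ℤ) : hatMins L = (hst L).1 := rfl

theorem hst_inv (L : List ℤ) : ((hst L).2 = none → L = []) ∧
    ∀ p, (hst L).2 = some p → ∀ x ∈ L, p ≤ x := by
  induction L using List.reverseRecOn with
  | nil => simp [hst]
  | append_singleton L r ih =>
    rw [hst_snoc]
    refine ⟨by simp, ?_⟩
    intro p hp x hx
    simp only [Option.some.injEq] at hp
    rcases h : (hst L).2 with _ | q
    · rw [h] at hp
      have := ih.1 h
      subst this
      simp at hx
      simp only [hv] at hp
      omega
    · rw [h] at hp
      simp only [hv] at hp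
      rcases mem_append.1 hx with hx | hx
      · have := ih.2 q h x hx; omega
      · simp at hx; omega

theorem hat_eq {α : Type} (B : List α) (f g : α → ℤ)
    (h : ∀ k z, (∃ b ∈ B.take k, f b ≤ z) ↔ (∃ b ∈ B.take k, g b ≤ z)) :
    hst (B.map f) = hst (B.map g) := by
  induction B using List.reverseRecOn with
  | nil => rfl
  | append_singleton B b ih =>
    have ih := ih (by
      intro k z
      have := h (min k B.length) z
      rw [List.take_append_of_le_length (by omega), List.take_eq_take_min.symm] at this
      exact this)
    rw [map_append, map_append, map_cons, map_cons, map_nil, map_nil, hst_snoc, hst_snoc, ih]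
    have key : hv (hst (B.map g)).2 (f b) = hv (hst (B.map g)).2 (g b) := by
      have hh := fun z => h (B.length + 1) z
      rw [List.take_of_length_le (by simp)] at hh
      have i1 := hst_inv (B.map f)
      have i2 := hst_inv (B.map g)
      rw [ih] at i1
      have a1 := (hh (f b)).1 ⟨b, by simp, le_rfl⟩
      have a2 := (hh (g b)).2 ⟨b, by simp, le_rfl⟩
      obtain ⟨c, hc, hc2⟩ := a1
      obtain ⟨d, hd, hd2⟩ := a2
      rcases h0 : (hst (B.map g)).2 with _ | p
      · have := i1.1 h0
        simp only [map_eq_nil_iff] at this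
        subst this
        simp at hc hd
        subst hc; subst hd
        simp only [hv]; omega
      · have j1 := i1.2 p h0
        have j2 := i2.2 p h0
        simp only [hv]
        have k1 : p ≤ g c ∨ c = b := by
          rcases mem_append.1 hc with hc | hc
          · exact Or.inl (j2 _ (mem_map_of_mem hc))
          · right; simpa using hc
        have k2 : p ≤ f d ∨ d = b := by
          rcases mem_append.1 hd with hd | hd
          · exact Or.inl (j1 _ (mem_map_of_mem hd))
          · right; simpa using hd
        rcases k1 with k1 | rfl <;> rcases k2 with k2 | rfl <;> omega
    rw [key]

/-! ## The weak descent composition of a row sequence -/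

def col (s : List ℕ) (i : ℕ) : ℕ := count (s.getD i 0) (s.take i)

def blk (s : List ℕ) : List (List ℕ) :=
  splitWhen (fun i j => decide (col s j ≤ col s i)) (range s.length)

def bmin (s : List ℕ) (b : List ℕ) : ℤ := ((((b.map (fun i => s.getD i 0 + 1)).min?).getD 0 : ℕ) : ℤ)

def desS (s : List ℕ) : Option (List ℕ) :=
  desFromBlocks ((blk s).map (bmin s)) ((blk s).map List.length)

theorem blk_flat (s : List ℕ) : (blk s).flatten = range s.length := split_flat _ _
theorem blk_lt {s b : List ℕ} (hb : b ∈ blk s) {i : ℕ} (hi : i ∈ b) : i < s.length := by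
  rw [← List.mem_range, ← blk_flat, mem_flatten]; exact ⟨b, hb, hi⟩
theorem blk_ne {s b : List ℕ} (hb : b ∈ blk s) : b ≠ [] := split_ne _ _ b hb

theorem bmin_le {s b : List ℕ} (hb : b ≠ []) (z : ℤ) :
    bmin s b ≤ z ↔ ∃ i ∈ b, (s.getD i 0 : ℤ) + 1 ≤ z := by
  rw [bmin]
  rcases hm : (b.map (fun i => s.getD i 0 + 1)).min? with _ | m
  · simp [hb] at hm
  · rw [min?_eq_some_iff] at hm
    simp only [Option.getD_some]
    constructor
    · intro h
      obtain ⟨i, hi, e⟩ := mem_map.1 hm.1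
      exact ⟨i, hi, by omega⟩
    · rintro ⟨i, hi, e⟩
      have := hm.2 _ (mem_map_of_mem (f := fun i => s.getD i 0 + 1) hi)
      omega

theorem chain_range (n : ℕ) (R : ℕ → ℕ → Prop) (h : ∀ i, i + 1 < n → R i (i + 1)) :
    (range n).IsChain R := by
  rw [isChain_iff_getElem]
  intro i hi
  simp at hi
  simpa using h i hi

theorem desSKT_fill {N : ℕ} {s : List ℕ} (hs : ∀ r ∈ s, r < N) :
    desSKT (fill N s) = (desS s).map (fun d => d ++ List.replicate (N - d.length) 0) := by
  have hl : (fill N s).flatten.length = s.length := by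
    rw [(fil_fill hs).2.length_eq]; simp
  have hr : (List.range' 1 s.length).reverse = (range s.length).map (fun i => s.length - i) := by
    apply List.ext_getElem
    · simp
    · intro i h1 h2; simp at h1 h2 ⊢; omega
  have hk : sktRuns (fill N s) = (blk s).map (map (fun i => s.length - i)) := by
    rw [sktRuns, hl, hr, split_map]
    congr 1
    apply split_congr
    apply chain_range
    intro i hi
    rw [show s.length - (i + 1) + 1 = s.length - i by omega, colOf_fill hs (by omega),
      colOf_fill hs (by omega)]
    rfl
  rw [desSKT, hk, desS]
  have hN : (fill N s).length = N := by simp [fill]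
  rw [hN]
  congr 2
  · rw [map_map]
    apply List.map_congr_left
    intro b hb
    simp only [Function.comp, minRow, bmin, map_map]
    congr 3
    apply List.map_congr_left
    intro i hi
    simp only [Function.comp]
    rw [rowOf_fill hs (blk_lt hb hi)]
  · simp [Function.comp_def]

theorem rs_take (ρ : List ℤ) (p : ℕ) (hp : p ≤ ρ.length) : (rs ρ).take p = rs (ρ.take p) := by
  conv_lhs => rw [← take_append_drop p ρ]
  generalize ρ.drop p = q
  induction q using List.reverseRecOn with
  | nil => simp [List.take_of_length_le, rs_len, hp]
  | append_singleton q x ih =>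
    rw [← append_assoc, rs_snoc, List.take_append_of_le_length (by rw [rs_len]; simp; omega), ih]

theorem rs_getD (ρ : List ℤ) {i : ℕ} (hi : i < ρ.length) :
    (rs ρ).getD i 0 = rowAt (ρ.take i) (ρ.getD i 0) := by
  simp [rs, List.getD_eq_getElem?_getD, hi]

theorem take_snoc (ρ : List ℤ) {i : ℕ} (hi : i < ρ.length) :
    ρ.take (i + 1) = ρ.take i ++ [ρ.getD i 0] := by
  rw [List.getD_eq_getElem _ _ hi, take_append_getElem]

theorem good_take {ρ : List ℤ} (h : Good ρ) (i : ℕ) : Good (ρ.take i) :=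
  Good.left (q := ρ.drop i) (by rwa [take_append_drop])
theorem pos_take {ρ : List ℤ} (h : Pos ρ) (i : ℕ) : Pos (ρ.take i) :=
  fun x hx => h x (mem_of_mem_take hx)

theorem col_rs {ρ : List ℤ} (hg : Good ρ) (hp : Pos ρ) {i : ℕ} (hi : i < ρ.length) :
    col (rs ρ) i = lev (ρ.take i) (ρ.getD i 0) := by
  have h := good_take hg (i + 1)
  have h' := pos_take hp (i + 1)
  rw [take_snoc _ hi] at h h'
  rw [lev_rs h h', col, rs_take _ _ (by omega), rs_getD _ hi]

theorem brk_rs {ρ : List ℤ} (hg : Good ρ) (hp : Pos ρ) {i : ℕ} (hi : i + 1 < ρ.length) :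
    col (rs ρ) (i + 1) ≤ col (rs ρ) i ↔ ρ.getD (i + 1) 0 ≤ ρ.getD i 0 := by
  have h := good_take hg (i + 2)
  rw [take_snoc _ hi, take_snoc _ (by omega : i < ρ.length)] at h
  have hne := good_ne h
  rw [col_rs hg hp hi, col_rs hg hp (by omega), take_snoc _ (by omega : i < ρ.length)]
  rcases lt_or_gt_of_ne hne with h | h
  · have := lev_lt (ρ.take i) _ _ h; omega
  · have := lev_ge (ρ.take i) _ _ h; omega

theorem min_rs {ρ : List ℤ} (hg : Good ρ) (hp : Pos ρ) {p : ℕ} (hpl : p ≤ ρ.length) (z : ℤ) :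
    (∃ i < p, ρ.getD i 0 ≤ z) ↔ (∃ i < p, ((rs ρ).getD i 0 : ℤ) + 1 ≤ z) := by
  have hg' := good_take hg p
  have hp' := pos_take hp p
  have hc := (rs_spec _ hg' hp').1
  rw [← rs_take _ _ hpl] at hc
  constructor
  · rintro ⟨i, hi, h⟩
    have hm : ρ.getD i 0 ∈ ρ.take p := by
      rw [List.getD_eq_getElem _ _ (by omega)]
      exact mem_take_iff_getElem.2 ⟨i, by omega, rfl⟩
    obtain ⟨r, h1, h2⟩ := aw_min hg' hm
    have h3 := hp' r (aw_supp hg' h2)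
    have h4 := hc (r - 1).toNat
    rw [show ((r - 1).toNat : ℤ) + 1 = r by omega] at h4
    rw [← h4, count_pos_iff, mem_take_iff_getElem] at h2
    obtain ⟨j, hj, e⟩ := h2
    refine ⟨j, by omega, ?_⟩
    rw [List.getD_eq_getElem _ _ (by omega), e]; omega
  · rintro ⟨i, hi, h⟩
    have hl := rs_len ρ
    have hm : (rs ρ).getD i 0 ∈ (rs ρ).take p := by
      rw [List.getD_eq_getElem _ _ (by omega)]
      exact mem_take_iff_getElem.2 ⟨i, by omega, rfl⟩
    rw [← count_pos_iff, hc] at hm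
    obtain ⟨j, hj, e⟩ := mem_take_iff_getElem.1 (aw_supp hg' hm)
    refine ⟨j, by omega, ?_⟩
    rw [List.getD_eq_getElem _ _ (by omega), e]; exact h

theorem up_getD (σ : List ℕ) (i : ℕ) : (up σ).getD i 0 = ((σ.getD i 0 : ℕ) : ℤ) := by
  simp only [up, List.getD_eq_getElem?_getD, getElem?_map]
  rcases σ[i]? with _ | x <;> rfl

theorem take_blk (s : List ℕ) (k : ℕ) : ∃ p ≤ s.length, ∀ i, i ∈ ((blk s).take k).flatten ↔ i < p := by
  have h := blk_flat s
  rw [← take_append_drop k (blk s), flatten_append] at h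
  have hl := congrArg List.length h
  simp only [length_append, length_range] at hl
  refine ⟨_, (by omega : ((blk s).take k).flatten.length ≤ s.length), ?_⟩
  intro i
  have := congrArg (List.take ((blk s).take k).flatten.length) h
  rw [take_left, take_range, min_eq_left (by omega)] at this
  rw [this]; simp

theorem desWord_eq {σ : List ℕ} (hg : Good (up σ)) (hp : Pos (up σ)) :
    desWord σ = desS (rs (up σ)) := by
  set s := rs (up σ) with hs
  have hlen : s.length = σ.length := by rw [hs, rs_len]; simp [up]
  have hul : (up σ).length = σ.length := by simp [up]
  have hbrk : ∀ i, i + 1 < σ.length → (col s (i + 1) ≤ col s i ↔ σ.getD (i + 1) 0 ≤ σ.getD i 0) := by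
    intro i hi
    rw [brk_rs hg hp (by omega), up_getD, up_getD]; omega
  have hruns : runs σ = (blk s).map (map (fun i => σ.getD i 0)) := by
    rw [runs]
    conv_lhs => rw [← map_getD_range σ]
    rw [split_map, blk, hlen]
    congr 1
    apply split_congr
    apply chain_range
    intro i hi
    simp only [hbrk i hi]
  have hinc : ∀ b ∈ blk s, b.IsChain (fun x y => σ.getD x 0 < σ.getD y 0) := by
    intro b hb
    refine (split_inner _ (fun x y => y = x + 1 ∧ x + 1 < σ.length) _
      (chain_range _ _ (fun i hi => ⟨rfl, by omega⟩)) b hb).imp ?_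
    rintro x y ⟨⟨rfl, h1⟩, h2⟩
    simp only [decide_eq_true_eq, hbrk x h1] at h2
    omega
  rw [desWord, hruns, desS]
  rw [map_map, map_map]
  have e2 : (blk s).map (List.length ∘ map (fun i => σ.getD i 0)) = (blk s).map List.length := by
    simp [Function.comp_def]
  rw [e2]
  unfold desFromBlocks
  rw [hatMins_eq, hatMins_eq, hat_eq (blk s) _ (bmin s)]
  intro k z
  obtain ⟨p, hps, hpm⟩ := take_blk s k
  have hsub : ∀ b ∈ (blk s).take k, b ∈ blk s := fun b hb => mem_of_mem_take hb
  have hflat : ∀ i, (∃ b ∈ (blk s).take k, i ∈ b) ↔ i < p := by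
    intro i; rw [← hpm, mem_flatten]
  have hmin := min_rs hg hp (p := p) (by omega) z
  trans (∃ i < p, (up σ).getD i 0 ≤ z)
  · constructor
    · rintro ⟨b, hb, h⟩
      obtain ⟨x, b', rfl⟩ := List.exists_cons_of_ne_nil (blk_ne (hsub b hb))
      refine ⟨x, (hflat x).1 ⟨_, hb, by simp⟩, ?_⟩
      rw [up_getD]; simpa using h
    · rintro ⟨i, hi, h⟩
      obtain ⟨b, hb, hib⟩ := (hflat i).2 hi
      refine ⟨b, hb, ?_⟩
      have hc := hinc b (hsub b hb)
      obtain ⟨x, b', rfl⟩ := List.exists_cons_of_ne_nil (blk_ne (hsub b hb))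
      rw [up_getD] at h
      simp only [Function.comp, map_cons, headD_cons]
      rcases mem_cons.1 hib with rfl | hib
      · exact h
      · have : (x :: b').Pairwise (fun x y => σ.getD x 0 < σ.getD y 0) := by
          haveI : IsTrans ℕ (fun x y => σ.getD x 0 < σ.getD y 0) := ⟨fun a b c h1 h2 => lt_trans h1 h2⟩
          exact isChain_iff_pairwise.1 hc
        have := (pairwise_cons.1 this).1 i hib
        omega
  · rw [hmin]
    constructor
    · rintro ⟨i, hi, h⟩
      obtain ⟨b, hb, hib⟩ := (hflat i).2 hi
      exact ⟨b, hb, (bmin_le (blk_ne (hsub b hb)) z).2 ⟨i, hib, h⟩⟩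
    · rintro ⟨b, hb, h⟩
      obtain ⟨i, hib, h⟩ := (bmin_le (blk_ne (hsub b hb)) z).1 h
      exact ⟨i, (hflat i).1 ⟨b, hb, hib⟩, h⟩

end EG

namespace EG

/-! ## Dominance and the superstandard sequence -/

def wv (Z : List (ℤ × ℕ)) (p : ℕ) : ℕ :=
  match Z.find? (fun q => decide (q.1 = (p : ℤ) + 1)) with
    | some q => q.2
    | none => 0

theorem wv_cons (q : ℤ × ℕ) (Z : List (ℤ × ℕ)) (p : ℕ) :
    wv (q :: Z) p = if q.1 = (p : ℤ) + 1 then q.2 else wv Z p := by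
  unfold wv
  by_cases h : q.1 = (p : ℤ) + 1 <;> simp [h]

theorem wv_zero (Z : List (ℤ × ℕ)) (p : ℕ) (h : ∀ q ∈ Z, q.1 < (p : ℤ) + 1) : wv Z p = 0 := by
  induction Z with
  | nil => rfl
  | cons q Z ih =>
    rw [wv_cons, if_neg (by have := h q (by simp); omega), ih (fun q hq => h q (by simp [hq]))]

theorem wv_sum (Z : List (ℤ × ℕ)) (hp : Z.Pairwise (fun a b => a.1 > b.1)) (h1 : ∀ q ∈ Z, 1 ≤ q.1)
    (m : ℕ) : ((range m).map (wv Z)).sum = (Z.map (fun q => if q.1 ≤ (m : ℤ) then q.2 else 0)).sum := by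
  induction m with
  | zero =>
    simp only [range_zero, map_nil, sum_nil]
    symm
    apply List.sum_eq_zero
    intro x hx
    obtain ⟨q, hq, rfl⟩ := mem_map.1 hx
    rw [if_neg (by have := h1 q hq; push_cast; omega)]
  | succ m ih =>
    rw [range_succ, map_append, sum_append, ih]
    clear ih
    simp only [map_cons, map_nil, sum_cons, sum_nil, add_zero]
    induction Z with
    | nil => rfl
    | cons q Z ih =>
      rw [pairwise_cons] at hp
      have ih := ih hp.2 (fun q hq => h1 q (by simp [hq]))
      rw [wv_cons, map_cons, map_cons, sum_cons, sum_cons, ← ih]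
      by_cases h : q.1 = (m : ℤ) + 1
      · rw [if_pos h, if_neg (by omega), if_pos (by push_cast; omega),
          wv_zero Z m (fun z hz => by have := hp.1 z hz; omega)]
        omega
      · rw [if_neg h]
        push_cast
        by_cases h2 : q.1 ≤ m
        · rw [if_pos h2, if_pos (by omega)]; omega
        · rw [if_neg h2, if_neg (by omega)]; omega

theorem hst_len (L : List ℤ) : (hst L).1.length = L.length := by
  induction L using List.reverseRecOn with
  | nil => rfl
  | append_singleton L r ih => rw [hst_snoc]; simp [ih]

theorem hst_dec (L : List ℤ) : (hst L).1.Pairwise (· > ·) ∧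
    ((hst L).2 = none → L = []) ∧ ∀ p, (hst L).2 = some p → ∀ x ∈ (hst L).1, p ≤ x := by
  induction L using List.reverseRecOn with
  | nil => simp [hst]
  | append_singleton L r ih =>
    obtain ⟨h1, h2, h3⟩ := ih
    rw [hst_snoc]
    rcases h : (hst L).2 with _ | p
    · have := h2 h
      subst this
      simp [hst, hv]
    · have h4 := h3 p h
      simp only [hv]
      refine ⟨?_, by simp, ?_⟩
      · rw [pairwise_append]
        refine ⟨h1, by simp, ?_⟩
        intro a ha b hb
        have := h4 a ha
        simp at hb; omega
      · intro q hq x hx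
        simp only [Option.some.injEq] at hq
        rcases mem_append.1 hx with hx | hx
        · have := h4 x hx; omega
        · simp at hx; omega

theorem hst_le {α : Type} (B : List α) (f : α → ℤ) :
    ∀ q ∈ (hst (B.map f)).1.zip B, q.1 ≤ f q.2 := by
  induction B using List.reverseRecOn with
  | nil => simp
  | append_singleton B b ih =>
    intro q hq
    rw [map_append, map_cons, map_nil, hst_snoc, zip_append (by rw [hst_len]; simp)] at hq
    rcases mem_append.1 hq with hq | hq
    · exact ih q hq
    · simp at hq
      subst hq
      simp only
      unfold hv
      split
      · exact le_rfl
      · omega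

theorem hst_id (L : List ℤ) (h : L.Pairwise (· > ·)) : (hst L).1 = L := by
  suffices hst L = (L, L.getLast?) by rw [this]
  induction L using List.reverseRecOn with
  | nil => rfl
  | append_singleton L r ih =>
    rw [pairwise_append] at h
    rw [hst_snoc, ih h.1]
    have : hv L.getLast? r = r := by
      rcases h0 : L.getLast? with _ | p
      · rfl
      · have := h.2.2 p (mem_of_getLast? h0) r (by simp)
        simp only [hv]; omega
    simp [this]

def Zs (s : List ℕ) : List (ℤ × List ℕ) := (hst ((blk s).map (bmin s))).1.zip (blk s)

theorem Zs_snd (s : List ℕ) : (Zs s).map Prod.snd = blk s := by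
  rw [Zs, map_snd_zip]; rw [hst_len]; simp
theorem Zs_fst (s : List ℕ) : (Zs s).map Prod.fst = (hst ((blk s).map (bmin s))).1 := by
  rw [Zs, map_fst_zip]; rw [hst_len]; simp
theorem Zs_pw (s : List ℕ) : (Zs s).Pairwise (fun a b => a.1 > b.1) := by
  have := (hst_dec ((blk s).map (bmin s))).1
  rwa [← Zs_fst, pairwise_map] at this
theorem Zs_mem {s : List ℕ} {q : ℤ × List ℕ} (hq : q ∈ Zs s) : q.2 ∈ blk s ∧ q.1 ≤ bmin s q.2 :=
  ⟨by rw [← Zs_snd]; exact mem_map_of_mem hq, hst_le _ _ q hq⟩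
theorem Zs_le {s : List ℕ} {q : ℤ × List ℕ} (hq : q ∈ Zs s) {i : ℕ} (hi : i ∈ q.2) :
    q.1 ≤ (s.getD i 0 : ℤ) + 1 := by
  have h := Zs_mem hq
  have := (bmin_le (s := s) (blk_ne h.1) _).2 ⟨i, hi, le_rfl⟩
  omega

theorem last_le {L : List ℤ} (h : L.Pairwise (· > ·)) (x : ℤ) (hx : x ∈ L) : L.getLastD 0 ≤ x := by
  rcases List.eq_nil_or_concat L with rfl | ⟨L, y, rfl⟩
  · simp at hx
  · rw [concat_eq_append] at *
    rw [pairwise_append] at h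
    simp only [getLastD_concat]
    rcases mem_append.1 hx with hx | hx
    · have := h.2.2 x hx y (by simp); omega
    · simp at hx; omega

theorem head_ge {L : List ℤ} (h : L.Pairwise (· > ·)) (x : ℤ) (hx : x ∈ L) : x ≤ L.headD 0 := by
  rcases L with _ | ⟨y, L⟩
  · simp at hx
  · rw [pairwise_cons] at h
    rcases mem_cons.1 hx with rfl | hx
    · simp
    · have := h.1 x hx; simp; omega

theorem desS_some {s d : List ℕ} (h : desS s = some d) : (∀ q ∈ Zs s, 1 ≤ q.1) ∧
    ∀ k, (d.take k).sum = ((Zs s).map (fun q => if q.1 ≤ (k : ℤ) then q.2.length else 0)).sum := by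
  unfold desS desFromBlocks at h
  rw [hatMins_eq] at h
  simp only at h
  have hdec := (hst_dec ((blk s).map (bmin s))).1
  rw [← Zs_fst] at h hdec
  split_ifs at h with h1 h2
  · cases h
    simp only [map_eq_nil_iff] at h1
    simp [h1]
  · cases h
    have hpos : ∀ q ∈ Zs s, 1 ≤ q.1 := by
      intro q hq
      have := last_le hdec q.1 (mem_map_of_mem hq)
      omega
    refine ⟨hpos, fun k => ?_⟩
    have e : ((Zs s).map Prod.fst).zip ((blk s).map List.length) =
        (Zs s).map (fun q => (q.1, q.2.length)) := by
      rw [← Zs_snd, map_map, zip_map']; rfl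
    have e2 : buildWeakComp ((Zs s).map Prod.fst) ((blk s).map List.length) =
      (range (((Zs s).map Prod.fst).headD 0).toNat).map (wv ((Zs s).map (fun q => (q.1, q.2.length)))) := by
      rw [← e, buildWeakComp]
      have e3 : ∀ l : List ℕ, (do let a ← l; pure (a : ℤ)) = List.map (fun a : ℕ => (a : ℤ)) l := by
        intro l
        induction l with
        | nil => rfl
        | cons a l ih => rw [map_cons, ← ih]; rfl
      rw [e3, map_map]
      apply List.map_congr_left
      intro p _
      unfold wv
      rfl
    rw [e2, ← map_take, take_range, wv_sum]
    · rw [map_map]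
      congr 1
      apply List.map_congr_left
      intro q hq
      have := head_ge hdec q.1 (mem_map_of_mem hq)
      simp only [Function.comp]
      push_cast
      congr 1
      simp only [eq_iff_iff]
      omega
    · rw [pairwise_map]; exact Zs_pw s
    · intro q hq
      obtain ⟨z, hz, rfl⟩ := mem_map.1 hq
      exact hpos z hz

theorem cnt_blk (s : List ℕ) (k : ℕ) : countP (fun r => decide (r < k)) s =
    ((Zs s).map (fun q => countP (fun i => decide (s.getD i 0 < k)) q.2)).sum := by
  conv_lhs => rw [← map_getD_range s, countP_map, ← blk_flat, countP_flatten, ← Zs_snd, map_map]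
  rfl

theorem sum_le_eq {α : Type} (L : List α) (f g : α → ℕ) (h : ∀ x ∈ L, f x ≤ g x) :
    (L.map f).sum ≤ (L.map g).sum ∧ ((L.map f).sum = (L.map g).sum → ∀ x ∈ L, f x = g x) := by
  induction L with
  | nil => simp
  | cons a L ih =>
    obtain ⟨h1, h2⟩ := ih (fun x hx => h x (by simp [hx]))
    have h3 := h a (by simp)
    simp only [map_cons, sum_cons]
    refine ⟨by omega, fun e x hx => ?_⟩
    rcases mem_cons.1 hx with rfl | hx
    · omega
    · exact h2 (by omega) x hx

theorem term_le {s : List ℕ} {q : ℤ × List ℕ} (hq : q ∈ Zs s) (k : ℕ) :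
    countP (fun i => decide (s.getD i 0 < k)) q.2 ≤ if q.1 ≤ (k : ℤ) then q.2.length else 0 := by
  split_ifs with h
  · exact countP_le_length
  · rw [Nat.le_zero, countP_eq_zero]
    intro i hi
    have := Zs_le hq hi
    simp only [decide_eq_true_eq]; omega

theorem dom_s {s d : List ℕ} (h : desS s = some d) (k : ℕ) :
    countP (fun r => decide (r < k)) s ≤ (d.take k).sum := by
  rw [(desS_some h).2, cnt_blk]
  exact (sum_le_eq _ _ _ (fun q hq => term_le hq k)).1

theorem sorted_of_eq {s d : List ℕ} (h : desS s = some d)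
    (he : ∀ k, countP (fun r => decide (r < k)) s = (d.take k).sum) : s.Pairwise (· ≥ ·) := by
  obtain ⟨hpos, hsum⟩ := desS_some h
  have key : ∀ q ∈ Zs s, ∀ i ∈ q.2, (s.getD i 0 : ℤ) + 1 = q.1 := by
    intro q hq i hi
    have h1 := Zs_le hq hi
    have h2 := he q.1.toNat
    rw [hsum, cnt_blk] at h2
    have h3 := (sum_le_eq _ _ _ (fun q' hq' => term_le hq' _)).2 h2 q hq
    have := hpos q hq
    rw [if_pos (by omega), countP_eq_length] at h3
    have := h3 i hi
    simp only [decide_eq_true_eq] at this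
    omega
  rw [← map_getD_range s, ← blk_flat, ← Zs_snd, pairwise_map, pairwise_flatten]
  constructor
  · intro l hl
    obtain ⟨q, hq, rfl⟩ := mem_map.1 hl
    apply pairwise_of_forall_mem_list
    intro a ha b hb
    have := key q hq a ha
    have := key q hq b hb
    omega
  · rw [pairwise_map]
    refine (Zs_pw s).imp_of_mem ?_
    intro q q' hq hq' hlt x hx y hy
    have := key q hq x hx
    have := key q' hq' y hy
    omega

theorem sorted_val {s : List ℕ} (h : s.Pairwise (· ≥ ·)) : Val s := by
  rintro p r q rfl r' hr' hc
  have : r' ∈ p := count_pos_iff.1 (by omega)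
  have := (pairwise_append.1 h).2.2 r' this r (by simp)
  omega

theorem sorted_des {s : List ℕ} (h : s.Pairwise (· ≥ ·)) :
    ∃ d, desS s = some d ∧ ∀ k, countP (fun r => decide (r < k)) s = (d.take k).sum := by
  have hge : ∀ i, i + 1 < s.length → s.getD (i + 1) 0 ≤ s.getD i 0 := by
    intro i hi
    rw [List.getD_eq_getElem _ _ hi, List.getD_eq_getElem _ _ (by omega)]
    exact List.pairwise_iff_getElem.1 h i (i + 1) (by omega) hi (by omega)
  have htk : ∀ i, i < s.length → s.take (i + 1) = s.take i ++ [s.getD i 0] := by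
    intro i hi
    rw [List.getD_eq_getElem _ _ hi, take_append_getElem]
  have hbrk : ∀ i, i + 1 < s.length → (col s (i + 1) ≤ col s i ↔ s.getD (i + 1) 0 ≠ s.getD i 0) := by
    intro i hi
    have h1 := hge i hi
    unfold col
    rw [htk i (by omega), count_append]
    constructor
    · intro h2 h3
      rw [h3, count_singleton_self] at h2; omega
    · intro h2
      have : count (s.getD (i + 1) 0) (s.take i) = 0 := by
        rw [count_eq_zero]
        intro hm
        obtain ⟨j, hj, e⟩ := mem_take_iff_getElem.1 hm
        have := List.pairwise_iff_getElem.1 h j i (by omega) (by omega) (by omega)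
        rw [e, ← List.getD_eq_getElem _ 0 (by omega : i < s.length)] at this
        omega
      rw [this, count_singleton, if_neg (by simpa using Ne.symm h2)]
      omega
  have hch : (range s.length).IsChain (fun x y => y = x + 1 ∧ x + 1 < s.length) :=
    chain_range _ _ (fun i hi => ⟨rfl, hi⟩)
  have hconst : ∀ b ∈ blk s, ∀ i ∈ b, ∀ j ∈ b, s.getD i 0 = s.getD j 0 := by
    intro b hb
    have h1 : b.IsChain (fun x y => s.getD x 0 = s.getD y 0) := by
      refine (split_inner _ _ _ hch b hb).imp ?_
      rintro x y ⟨⟨rfl, h1⟩, h2⟩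
      simp only [decide_eq_true_eq, hbrk x h1, not_not] at h2
      exact h2.symm
    have h2 : b.Pairwise (fun x y => s.getD x 0 = s.getD y 0) := by
      have : IsTrans ℕ (fun x y => s.getD x 0 = s.getD y 0) := ⟨fun a b c h1 h2 => h1.trans h2⟩
      exact isChain_iff_pairwise.1 h1
    intro i hi j hj
    obtain ⟨a, ha, rfl⟩ := List.getElem_of_mem hi
    obtain ⟨c, hc, rfl⟩ := List.getElem_of_mem hj
    rcases Nat.lt_trichotomy a c with h3 | rfl | h3
    · exact List.pairwise_iff_getElem.1 h2 a c ha hc h3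
    · rfl
    · exact (List.pairwise_iff_getElem.1 h2 c a hc ha h3).symm
  have hmin : ∀ b ∈ blk s, ∀ i ∈ b, bmin s b = (s.getD i 0 : ℤ) + 1 := by
    intro b hb i hi
    apply le_antisymm
    · rw [bmin_le (blk_ne hb)]; exact ⟨i, hi, le_rfl⟩
    · obtain ⟨j, hj, h2⟩ := (bmin_le (s := s) (blk_ne hb) _).1 le_rfl
      rw [hconst b hb i hi j hj]; exact h2
  have hpw : ((blk s).map (bmin s)).Pairwise (· > ·) := by
    rw [← isChain_iff_pairwise, isChain_map]
    refine (split_outer _ _ _ hch).imp_of_mem_imp ?_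
    rintro b b' hb hb' ⟨x, hx, y, hy, ⟨rfl, h1⟩, h2⟩
    simp only [decide_eq_true_eq, hbrk x h1] at h2
    have h3 := hge x h1
    rw [hmin b hb x hx, hmin b' hb' _ hy]
    omega
  have hid := hst_id _ hpw
  obtain ⟨d, hd⟩ : ∃ d, desS s = some d := by
    unfold desS desFromBlocks
    rw [hatMins_eq, hid]
    simp only
    split_ifs with h1 h2
    · exact ⟨_, rfl⟩
    · exfalso
      rcases List.eq_nil_or_concat (blk s) with h3 | ⟨B, b, h3⟩
      · rw [h3] at h1; simp at h1
      · have hb : b ∈ blk s := by rw [h3]; simp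
        obtain ⟨i, hi⟩ := List.exists_mem_of_ne_nil b (blk_ne hb)
        have h4 := hmin b hb i hi
        rw [h3, concat_eq_append, map_append, map_cons, map_nil, getLastD_concat] at h2
        omega
    · exact ⟨_, rfl⟩
  refine ⟨d, hd, fun k => ?_⟩
  rw [(desS_some hd).2, cnt_blk]
  congr 1
  apply List.map_congr_left
  intro q hq
  have hb := (Zs_mem hq).1
  have hq1 : q.1 = bmin s q.2 := by
    have e : Zs s = (blk s).map (fun b => (bmin s b, b)) := by
      rw [Zs, hid, ← zip_map', List.map_id']
    rw [e] at hq
    obtain ⟨z, hz, rfl⟩ := mem_map.1 hq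
    rfl
  split_ifs with h1
  · rw [countP_eq_length]
    intro i hi
    have := hmin _ hb i hi
    simp only [decide_eq_true_eq]; omega
  · rw [countP_eq_zero]
    intro i hi
    have := hmin _ hb i hi
    simp only [decide_eq_true_eq]; omega

theorem cnt_succ (s : List ℕ) (k : ℕ) : countP (fun r => decide (r < k + 1)) s =
    countP (fun r => decide (r < k)) s + count k s := by
  induction s with
  | nil => rfl
  | cons a s ih =>
    rw [countP_cons, countP_cons, count_cons, ih]
    by_cases h1 : a = k
    · simp [h1]; omega
    · have : (a == k) = false := by simpa using h1
      simp only [this, decide_eq_true_eq]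
      split_ifs <;> first | omega | simp_all

theorem take_sum_succ (d : List ℕ) (k : ℕ) : (d.take (k + 1)).sum = (d.take k).sum + d.getD k 0 := by
  by_cases h : k < d.length
  · rw [List.getD_eq_getElem _ _ h, ← take_append_getElem h, sum_append, sum_singleton]
  · rw [List.take_of_length_le (by omega), List.take_of_length_le (by omega),
      List.getD_eq_default _ _ (by omega), add_zero]

theorem count_of_eq {s d : List ℕ} (he : ∀ k, countP (fun r => decide (r < k)) s = (d.take k).sum)
    (i : ℕ) : count i s = d.getD i 0 := by
  have a := he i
  have b := he (i + 1)
  rw [cnt_succ, take_sum_succ] at b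
  omega

theorem sorted_uniq {s t : List ℕ} (h : s.Pairwise (· ≥ ·)) (h' : t.Pairwise (· ≥ ·))
    (hc : ∀ i, count i s = count i t) : s = t :=
  List.Perm.eq_of_pairwise (fun a b _ _ h1 h2 => by omega) h h' (perm_iff_count.2 hc)

end EG

namespace EG

/-! ## Trailing zeros in slide polynomials -/

theorem filt_sum (l : List ℕ) : (l.filter (fun x => decide (x ≠ 0))).sum = l.sum := by
  induction l with
  | nil => rfl
  | cons a l ih =>
    rw [filter_cons]
    split_ifs with h
    · rw [sum_cons, sum_cons, ih]
    · simp only [decide_eq_true_eq, not_not] at h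
      rw [sum_cons, ih, h, zero_add]

theorem refines_sum {β α : List ℕ} (h : Refines β α) : β.sum = α.sum := by
  obtain ⟨B, rfl, h⟩ := h
  induction h with
  | nil => rfl
  | cons h1 _ ih => rw [flatten_cons, sum_append, sum_cons, ih, h1]

theorem range_map_sum (b : ℕ → ℕ) (n : ℕ) : ((range n).map b).sum = ∑ i ∈ Finset.range n, b i := by
  induction n with
  | zero => rfl
  | succ n ih => rw [range_succ, map_append, sum_append, ih, Finset.sum_range_succ]; simp

theorem beyond {b : ℕ →₀ ℕ} {k : ℕ} (h : (flatOf b).sum ≤ ∑ i ∈ Finset.range k, b i) (i : ℕ)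
    (hi : k ≤ i) : b i = 0 := by
  by_contra hb
  rw [flatOf, filt_sum, range_map_sum] at h
  have h1 : i ≤ b.support.sup id := Finset.le_sup (f := id) (Finsupp.mem_support_iff.2 hb)
  have h2 : ∑ j ∈ Finset.range k, b j + b i ≤ ∑ j ∈ Finset.range (b.support.sup id + 1), b j := by
    rw [add_comm, ← Finset.sum_insert (by simp; omega)]
    apply Finset.sum_le_sum_of_subset
    intro x hx
    simp at hx ⊢
    omega
  omega

theorem take_pad (e : List ℕ) (m k : ℕ) : ((e ++ replicate m 0).take k).sum = (e.take k).sum := by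
  rw [take_append, sum_append]; simp

theorem FSlide_pad (e : List ℕ) (m : ℕ) : FSlide (e ++ replicate m 0) = FSlide e := by
  funext b
  unfold FSlide
  have hf : (e ++ replicate m 0).filter (fun x => decide (x ≠ 0)) = e.filter (fun x => decide (x ≠ 0)) := by
    simp
  classical
  refine if_congr ?_ rfl rfl
  rw [hf]
  simp only [take_pad]
  constructor
  · rintro ⟨_, h2, h3⟩
    refine ⟨fun i hi => beyond (k := e.length) ?_ i hi, h2, h3⟩
    rw [refines_sum h3, filt_sum]
    have := h2 e.length
    rwa [take_length] at this
  · rintro ⟨h1, h2, h3⟩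
    exact ⟨fun i hi => h1 i (by simp at hi; omega), h2, h3⟩

theorem FSlideO_fill {N : ℕ} {s : List ℕ} (hs : ∀ r ∈ s, r < N) :
    FSlideO (desSKT (fill N s)) = FSlideO (desS s) := by
  rw [desSKT_fill hs]
  rcases desS s with _ | d
  · rfl
  · exact FSlide_pad _ _

end EG

namespace EG

/-! ## Yamanouchi words and Coxeter-Knuth classes -/

theorem ck_red {τ σ : List ℕ} (h : IsReducedWord τ) (hc : CK (up τ) (up σ)) : IsReducedWord σ := by
  have := (red_ck ⟨h, rfl⟩ hc).2.1
  rwa [dn_up] at this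

theorem cls_count {τ σ : List ℕ} (h : IsReducedWord τ) (hc : CK (up τ) (up σ)) (i : ℕ) :
    count i (rs (up σ)) = count i (rs (up τ)) := by
  have h' := ck_red h hc
  rw [(rs_spec _ (red_good h) (pos_up h.1)).1, (rs_spec _ (red_good h') (pos_up h'.1)).1,
    aw_ck _ _ hc (red_good h)]

theorem cls_desWord {σ : List ℕ} (h : IsReducedWord σ) : desWord σ = desS (rs (up σ)) :=
  desWord_eq (red_good h) (pos_up h.1)

theorem cls_surj {τ s : List ℕ} {w : Equiv.Perm ℕ} (h : ReducedWordFor τ w) (hv : Val s)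
    (hc : ∀ i, count i s = count i (rs (up τ))) :
    ∃ σ, CK (up τ) (up σ) ∧ ReducedWordFor σ w ∧ rs (up σ) = s := by
  have hg := red_good h.1
  have hp := pos_up h.1.1
  obtain ⟨σ, h1, h2⟩ := rs_surj s (up τ) hg hp hv
    (fun i => by rw [hc, (rs_spec _ hg hp).1])
  obtain ⟨h3, h4⟩ := red_ck h h1
  exact ⟨dn σ, by rwa [h3], h4, by rwa [h3]⟩

theorem sorted_yam {σ : List ℕ} (h : IsReducedWord σ) (hs : (rs (up σ)).Pairwise (· ≥ ·)) :
    IsYam σ := by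
  obtain ⟨d, h1, h2⟩ := sorted_des hs
  refine ⟨h, d, by rw [cls_desWord h, h1], ?_⟩
  intro τ e hc he k
  rw [ckEquiv_iff h] at hc
  rw [cls_desWord (ck_red h hc)] at he
  rw [← h2, (perm_iff_count.2 (fun i => (cls_count h hc i).symm)).countP_eq]
  exact dom_s he k

theorem yam_exists {τ : List ℕ} {w : Equiv.Perm ℕ} (h : ReducedWordFor τ w) :
    ∃ σ, CK (up τ) (up σ) ∧ ReducedWordFor σ w ∧ (rs (up σ)).Pairwise (· ≥ ·) := by
  set s := (rs (up τ)).insertionSort (· ≥ ·) with hs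
  have h1 : s.Pairwise (· ≥ ·) := pairwise_insertionSort _ _
  obtain ⟨σ, h2, h3, h4⟩ := cls_surj h (sorted_val h1)
    (fun i => (perm_insertionSort (· ≥ ·) (rs (up τ))).count_eq i)
  exact ⟨σ, h2, h3, by rwa [h4]⟩

theorem yam_char {ρ : List ℕ} (h : IsYam ρ) : ∃ d, desWord ρ = some d ∧
    (rs (up ρ)).Pairwise (· ≥ ·) ∧ ∀ i, count i (rs (up ρ)) = d.getD i 0 := by
  obtain ⟨hr, d, hd, hm⟩ := h
  obtain ⟨σ, h1, h2, h3⟩ := yam_exists ⟨hr, rfl⟩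
  obtain ⟨e, h4, h5⟩ := sorted_des h3
  have hde := hm σ e ((ckEquiv_iff hr).2 h1) (by rw [cls_desWord h2.1, h4])
  have hp := perm_iff_count.2 (fun i => (cls_count hr h1 i))
  have hd' := hd
  rw [cls_desWord hr] at hd'
  have he : ∀ k, countP (fun r => decide (r < k)) (rs (up ρ)) = (d.take k).sum := by
    intro k
    apply le_antisymm (dom_s hd' k)
    rw [← hp.countP_eq, h5]
    exact hde k
  exact ⟨d, hd, sorted_of_eq hd' he, count_of_eq he⟩

theorem yam_uniq {ρ σ : List ℕ} (h : IsYam ρ) (h' : IsYam σ) (hc : CK (up ρ) (up σ)) : ρ = σ := by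
  obtain ⟨_, _, h1, _⟩ := yam_char h
  obtain ⟨_, _, h2, _⟩ := yam_char h'
  exact up_inj (rs_inj _ _ hc (red_good h.1) (pos_up h.1.1)
    (sorted_uniq h1 h2 (fun i => (cls_count h.1 hc i).symm)))

theorem class_sum {ρ : List ℕ} {w : Equiv.Perm ℕ} (h : IsYam ρ) (hw : toPerm ρ = w) :
    ∑ᶠ σ ∈ {σ | ReducedWordFor σ w ∧ CK (up ρ) (up σ)}, FSlideO (desWord σ) =
      KeyPolyO (desWord ρ) := by
  obtain ⟨d, hd, _, hcnt⟩ := yam_char h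
  rw [hd]
  change _ = KeyPoly d
  rw [KeyPoly]
  have hb : Set.BijOn (fun σ => rs (up σ)) {σ | ReducedWordFor σ w ∧ CK (up ρ) (up σ)}
      {s | Val s ∧ ∀ i, count i s = d.getD i 0} := by
    refine ⟨?_, ?_, ?_⟩
    · rintro σ ⟨h1, h2⟩
      exact ⟨(rs_spec _ (red_good h1.1) (pos_up h1.1.1)).2, fun i => by
        rw [← hcnt, cls_count h.1 h2]⟩
    · rintro σ ⟨h1, h2⟩ σ' ⟨h1', h2'⟩ e
      exact up_inj (rs_inj _ _ (h2.symm.trans h2') (red_good h1.1) (pos_up h1.1.1) e)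
    · rintro s ⟨h1, h2⟩
      obtain ⟨σ, h3, h4, h5⟩ := cls_surj ⟨h.1, hw⟩ h1 (fun i => by rw [h2, hcnt])
      exact ⟨σ, ⟨h4, h3⟩, h5⟩
  refine finsum_mem_eq_of_bijOn _ ((skt_bij d).comp hb) ?_
  rintro σ ⟨h1, h2⟩
  have h3 := (hb.1 ⟨h1, h2⟩).2
  simp only [Function.comp]
  rw [FSlideO_fill, cls_desWord h1.1]
  intro r hr
  by_contra hc
  have := h3 r
  rw [List.getD_eq_default _ _ (by omega)] at this
  exact (count_eq_zero.1 this) hr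

end EG

namespace EG

/-! ## Finiteness of the set of reduced words -/

theorem toPerm_cons (a : ℕ) (ρ : List ℕ) (j : ℕ) :
    toPerm (a :: ρ) j = Equiv.swap a (a + 1) (toPerm ρ j) := by simp [toPerm]

def skp (p j : ℕ) : ℕ := if j < p then j else j + 1

def del (q : ℕ) : List ℕ → List ℕ
  | [] => []
  | a :: ρ => if a = toPerm ρ q ∨ a + 1 = toPerm ρ q then del q ρ
    else if a < toPerm ρ q then a :: del q ρ else (a - 1) :: del q ρ

theorem zero_fix (ρ : List ℕ) (h : ∀ i ∈ ρ, 1 ≤ i) : toPerm ρ 0 = 0 := by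
  induction ρ with
  | nil => simp [toPerm]
  | cons a ρ ih =>
    have := h a (by simp)
    rw [toPerm_cons, ih (fun i hi => h i (by simp [hi])), Equiv.swap_apply_of_ne_of_ne] <;> omega

theorem pos_im {ρ : List ℕ} (h : ∀ i ∈ ρ, 1 ≤ i) {q : ℕ} (hq : 1 ≤ q) : 1 ≤ toPerm ρ q := by
  by_contra hc
  have h1 : toPerm ρ q = toPerm ρ 0 := by rw [zero_fix ρ h]; omega
  have := (toPerm ρ).injective h1
  omega

theorem del_inv (q : ℕ) (ρ : List ℕ) (h : ∀ i ∈ ρ, 1 ≤ i) (hq : 1 ≤ q) (j : ℕ) :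
    toPerm ρ (skp q j) = skp (toPerm ρ q) (toPerm (del q ρ) j) := by
  induction ρ with
  | nil => simp [toPerm, del]
  | cons a ρ ih =>
    have ha := h a (by simp)
    have h' : ∀ i ∈ ρ, 1 ≤ i := fun i hi => h i (by simp [hi])
    have hp := pos_im h' hq
    rw [toPerm_cons, toPerm_cons, ih h', del]
    generalize toPerm ρ q = p at *
    split_ifs with h1 h2
    · generalize toPerm (del q ρ) j = k
      simp only [Equiv.swap_apply_def, skp]
      split_ifs <;> omega
    · rw [toPerm_cons]
      generalize toPerm (del q ρ) j = k
      simp only [Equiv.swap_apply_def, skp]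
      split_ifs <;> omega
    · rw [toPerm_cons]
      generalize toPerm (del q ρ) j = k
      simp only [Equiv.swap_apply_def, skp]
      split_ifs <;> omega

theorem del_pos (q : ℕ) (ρ : List ℕ) (h : ∀ i ∈ ρ, 1 ≤ i) (hq : 1 ≤ q) : ∀ i ∈ del q ρ, 1 ≤ i := by
  induction ρ with
  | nil => simp [del]
  | cons a ρ ih =>
    have ha := h a (by simp)
    have h' : ∀ i ∈ ρ, 1 ≤ i := fun i hi => h i (by simp [hi])
    have hp := pos_im h' hq
    rw [del]
    intro i hi
    split_ifs at hi with h1 h2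
    · exact ih h' i hi
    · rcases mem_cons.1 hi with rfl | hi
      · exact ha
      · exact ih h' i hi
    · rcases mem_cons.1 hi with rfl | hi
      · omega
      · exact ih h' i hi

theorem del_len (q : ℕ) (ρ : List ℕ) : (del q ρ).length ≤ ρ.length ∧
    (ρ.length ≤ (del q ρ).length → toPerm ρ q = q ∧ ∀ i ∈ ρ, i + 1 ≠ q) := by
  induction ρ with
  | nil => simp [del, toPerm]
  | cons a ρ ih =>
    obtain ⟨ih1, ih2⟩ := ih
    rw [del, toPerm_cons]
    split_ifs with h1 h2
    · simp only [length_cons]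
      exact ⟨by omega, fun h => by omega⟩
    all_goals
      simp only [length_cons]
      refine ⟨by omega, fun h => ?_⟩
      obtain ⟨h3, h4⟩ := ih2 (by omega)
      rw [h3] at *
      refine ⟨Equiv.swap_apply_of_ne_of_ne (by omega) (by omega), ?_⟩
      intro i hi
      rcases mem_cons.1 hi with rfl | hi
      · omega
      · exact h4 i hi

theorem letters_lt {ρ : List ℕ} (h : IsReducedWord ρ) {m : ℕ} (hm : ∀ j, m ≤ j → toPerm ρ j = j) :
    ∀ i ∈ ρ, i < m := by
  intro i hi
  by_contra hc
  have hfix := hm (i + 1) (by omega)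
  have hinv := del_inv (i + 1) ρ h.1 (by omega)
  rw [hfix] at hinv
  have heq : toPerm (del (i + 1) ρ) = toPerm ρ := by
    ext j
    have h1 := hinv j
    by_cases hj : j < i + 1
    · have h2 : toPerm ρ j < i + 1 := by
        by_contra h3
        have h4 := hm (toPerm ρ j) (by omega)
        have := (toPerm ρ).injective h4
        omega
      simp only [skp, if_pos hj] at h1
      split_ifs at h1 <;> omega
    · rw [hm j (by omega)]
      simp only [skp, if_neg hj] at h1
      rw [hm (j + 1) (by omega)] at h1
      split_ifs at h1 <;> omega
  have := h.2 _ (del_pos (i + 1) ρ h.1 (by omega)) heq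
  exact ((del_len (i + 1) ρ).2 this).2 i hi rfl

theorem ev_fix (ρ : List ℕ) : ∃ m, ∀ j, m ≤ j → toPerm ρ j = j := by
  induction ρ with
  | nil => exact ⟨0, by simp [toPerm]⟩
  | cons a ρ ih =>
    obtain ⟨m, hm⟩ := ih
    refine ⟨m + a + 2, fun j hj => ?_⟩
    rw [toPerm_cons, hm j (by omega), Equiv.swap_apply_of_ne_of_ne] <;> omega

theorem red_finite (w : Equiv.Perm ℕ) : {ρ : List ℕ | ReducedWordFor ρ w}.Finite := by
  rcases Set.eq_empty_or_nonempty {ρ : List ℕ | ReducedWordFor ρ w} with h | ⟨ρ₀, h0⟩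
  · rw [h]; exact Set.finite_empty
  obtain ⟨m, hm⟩ := ev_fix ρ₀
  refine ((List.finite_length_le (Fin m) ρ₀.length).image (List.map Fin.val)).subset ?_
  rintro ρ ⟨h1, h2⟩
  have hlt := letters_lt h1 (m := m) (by rw [h2, ← h0.2]; exact hm)
  refine ⟨ρ.pmap (fun i hi => ⟨i, hi⟩) hlt, ?_, ?_⟩
  · simp only [Set.mem_setOf_eq, length_pmap]
    exact h1.2 _ h0.1.1 (by rw [h2, h0.2])
  · rw [map_pmap]; simp

theorem expansion (w : Equiv.Perm ℕ) :
    Schubert w =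
      ∑ᶠ ρ ∈ {ρ : List ℕ | ReducedWordFor ρ w ∧ IsYam ρ}, KeyPolyO (desWord ρ) := by
  have hfin := red_finite w
  have hcov : {ρ : List ℕ | ReducedWordFor ρ w} = ⋃ y ∈ {ρ : List ℕ | ReducedWordFor ρ w ∧ IsYam ρ},
      {σ | ReducedWordFor σ w ∧ CK (up y) (up σ)} := by
    ext τ
    simp only [Set.mem_setOf_eq, Set.mem_iUnion, exists_prop]
    constructor
    · intro h
      obtain ⟨σ, h1, h2, h3⟩ := yam_exists h
      exact ⟨σ, ⟨h2, sorted_yam h2.1 h3⟩, h, h1.symm⟩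
    · rintro ⟨_, _, h, _⟩
      exact h
  rw [Schubert, hcov, finsum_mem_biUnion]
  · apply finsum_mem_congr rfl
    rintro y ⟨h1, h2⟩
    exact class_sum h2 h1.2
  · rintro y ⟨_, h2⟩ z ⟨_, h2'⟩ hne
    refine Set.disjoint_left.2 ?_
    rintro τ ⟨_, h3⟩ ⟨_, h4⟩
    exact hne (yam_uniq h2 h2' (h3.trans h4.symm))
  · exact hfin.subset (fun _ h => h.1)
  · exact fun _ _ => hfin.subset (fun _ h => h.1)

end EG

namespace EG

/-- For any permutation `w`, the Schubert polynomial satisfies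
`𝔖_w = Σ_{ρ ∈ YR(w)} κ_{des(ρ)}`, where `YR(w)` is the set of Yamanouchi reduced
words for `w`. -/
theorem schubert_demazure_expansion (w : Equiv.Perm ℕ) :
    Schubert w =
      ∑ᶠ ρ ∈ {ρ : List ℕ | ReducedWordFor ρ w ∧ IsYam ρ}, KeyPolyO (desWord ρ) := by
  exact expansion w

end EG
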